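/- arXiv:2511.02974 — 2 statements merged into one kernel-verified Lean document; each statement's English description precedes it below -/
import Mathlib

section
/- Let K be a convex body in ℝ^n (n ≥ 2) with 0 in its interior such that either the barycenter of K is at the origin or the barycenter of the polar body K° is at the origin. Then there exists an absolute constant C > 0 such that for every 1 ≤ k ≤ n−1 and every k-dimensional linear subspace H of ℝ^n, vrad(P_H(K)) · vrad(K° ∩ H) ≤ (n/k)·C·(log n)^3. -/
open MeasureTheory Metric Set
open scoped ENNReal RealInnerProductSpace Pointwise

noncomputable section

/-- The polar body of `K`. -/
def polarBody {n : ℕ} (K : Set (EuclideanSpace ℝ (Fin n))) : Set (EuclideanSpace ℝ (Fin n)) :=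
  {x | ∀ y ∈ K, ⟪x, y⟫ ≤ 1}

/-- The orthogonal projection of a set onto a subspace, viewed inside the ambient space. -/
def projSet {n : ℕ} (H : Submodule ℝ (EuclideanSpace ℝ (Fin n)))
    (A : Set (EuclideanSpace ℝ (Fin n))) : Set (EuclideanSpace ℝ (Fin n)) :=
  (fun x => (Submodule.orthogonalProjectionOnto H x : EuclideanSpace ℝ (Fin n))) '' A

/-- The volume radius of a subset of a `k`-dimensional subspace `H`: the `k`-th root of the
ratio of its `k`-dimensional (Hausdorff) volume to that of the unit ball of `H`. -/
def vrad {n : ℕ} (k : ℕ) (H : Submodule ℝ (EuclideanSpace ℝ (Fin n)))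
    (A : Set (EuclideanSpace ℝ (Fin n))) : ℝ≥0∞ :=
  (μH[(k : ℝ)] A / μH[(k : ℝ)] (closedBall (0 : EuclideanSpace ℝ (Fin n)) 1 ∩ (H : Set _)))
    ^ ((k : ℝ)⁻¹)



lemma bm_compact {A B U : Set ℝ} (hA : IsCompact A) (hB : IsCompact B) (hA0 : A.Nonempty)
    (hB0 : B.Nonempty) (h : ∀ a ∈ A, ∀ b ∈ B, a + b ∈ U) :
    volume A + volume B ≤ volume U := by
  obtain ⟨a, ha, ham⟩ := hA.exists_isGreatest hA0
  obtain ⟨b, hb, hbm⟩ := hB.exists_isLeast hB0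
  have h1 : volume ((fun x => b + x) '' A) = volume A := by
    simp
  have h2 : volume ((fun x => a + x) '' B) = volume B := by
    simp
  have hm : MeasurableSet ((fun x => a + x) '' B) :=
    (hB.image (by fun_prop)).measurableSet
  have hd : AEDisjoint volume ((fun x => b + x) '' A) ((fun x => a + x) '' B) := by
    refine measure_mono_null (t := {a + b}) ?_ (by simp)
    rintro x ⟨⟨p, hp, rfl⟩, ⟨q, hq, hqe⟩⟩
    have := ham hp
    have := hbm hq
    simp only [mem_singleton_iff] at *
    linarith
  rw [← h1, ← h2, ← measure_union₀ hm.nullMeasurableSet hd]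
  apply measure_mono
  rintro x (⟨p, hp, rfl⟩ | ⟨q, hq, rfl⟩)
  · simpa [add_comm] using h p hp b hb
  · exact h a ha q hq

lemma bm_meas {S T U : Set ℝ} (hS : MeasurableSet S) (hT : MeasurableSet T) (hS0 : S.Nonempty)
    (hT0 : T.Nonempty) (h : ∀ a ∈ S, ∀ b ∈ T, a + b ∈ U) :
    volume S + volume T ≤ volume U := by
  obtain ⟨s0, hs0⟩ := hS0
  obtain ⟨t0, ht0⟩ := hT0
  have key : ∀ A B : Set ℝ, IsCompact A → IsCompact B → A ⊆ S → B ⊆ T →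
      volume A + volume B ≤ volume U := by
    intro A B hA hB hAS hBT
    have := bm_compact (A := insert s0 A) (B := insert t0 B) (U := U) (hA.insert _) (hB.insert _)
      (insert_nonempty _ _) (insert_nonempty _ _)
      (fun a ha b hb => h a (insert_subset hs0 hAS ha) b (insert_subset ht0 hBT hb))
    refine le_trans (add_le_add ?_ ?_) this
    · exact measure_mono (subset_insert _ _)
    · exact measure_mono (subset_insert _ _)
  have k2 : ∀ B : Set ℝ, IsCompact B → B ⊆ T → volume S + volume B ≤ volume U := by
    intro B hB hBT
    have hBU : volume B ≤ volume U := by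
      simpa using key ∅ B isCompact_empty hB (empty_subset _) hBT
    have : volume S ≤ volume U - volume B := by
      rw [hS.measure_eq_iSup_isCompact]
      refine iSup_le fun A => iSup_le fun hAS => iSup_le fun hA => ?_
      exact ENNReal.le_sub_of_add_le_right hB.measure_lt_top.ne (key A B hA hB hAS hBT)
    calc _ ≤ volume U - volume B + volume B := by gcongr
      _ = _ := tsub_add_cancel_of_le hBU
  have hSU : volume S ≤ volume U := by simpa using k2 ∅ isCompact_empty (empty_subset _)
  by_cases hSt : volume S = ⊤
  · rw [hSt, top_le_iff] at hSU
    rw [hSU]; exact le_top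
  have : volume T ≤ volume U - volume S := by
    rw [hT.measure_eq_iSup_isCompact]
    refine iSup_le fun A => iSup_le fun hAS => iSup_le fun hA => ?_
    exact ENNReal.le_sub_of_add_le_left hSt (k2 A hA hAS)
  calc _ ≤ volume S + (volume U - volume S) := by gcongr
      _ = _ := add_tsub_cancel_of_le hSU

lemma bm_lin {S T U : Set ℝ} (hS : MeasurableSet S) (hT : MeasurableSet T) (hS0 : S.Nonempty)
    (hT0 : T.Nonempty) {l : ℝ} (hl0 : 0 < l) (hl1 : l < 1)
    (h : ∀ a ∈ S, ∀ b ∈ T, (1 - l) * a + l * b ∈ U) :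
    ENNReal.ofReal (1 - l) * volume S + ENNReal.ofReal l * volume T ≤ volume U := by
  have hl2 : 0 < 1 - l := by linarith
  have := bm_meas (S := (1 - l) • S) (T := l • T) (U := U) (hS.const_smul_of_ne_zero hl2.ne')
    (hT.const_smul_of_ne_zero hl0.ne') (hS0.smul_set) (hT0.smul_set) ?_
  · rw [Measure.addHaar_smul, Measure.addHaar_smul] at this
    simpa [abs_of_pos hl0, abs_of_pos hl2] using this
  · rintro _ ⟨a, ha, rfl⟩ _ ⟨b, hb, rfl⟩
    exact h a ha b hb

lemma pl_norm {f g h : ℝ → ℝ} (hf : Measurable f) (hg : Measurable g) (hh : Measurable h)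
    (hf0 : ∀ x, 0 ≤ f x) (hg0 : ∀ x, 0 ≤ g x) (hh0 : ∀ x, 0 ≤ h x)
    (hf1 : ∀ x, f x ≤ 1) (hg1 : ∀ x, g x ≤ 1)
    (hfs : ∀ t, 0 < t → t < 1 → ∃ x, t < f x) (hgs : ∀ t, 0 < t → t < 1 → ∃ x, t < g x)
    {l : ℝ} (hl0 : 0 < l) (hl1 : l < 1)
    (H : ∀ x y t, 0 < t → t < 1 → t < f x → t < g y → t < h ((1 - l) * x + l * y)) :
    ENNReal.ofReal (1 - l) * (∫⁻ x, ENNReal.ofReal (f x)) +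
      ENNReal.ofReal l * (∫⁻ x, ENNReal.ofReal (g x)) ≤ ∫⁻ x, ENNReal.ofReal (h x) := by
  rw [lintegral_eq_lintegral_meas_lt _ (Filter.Eventually.of_forall hf0) hf.aemeasurable,
    lintegral_eq_lintegral_meas_lt _ (Filter.Eventually.of_forall hg0) hg.aemeasurable,
    lintegral_eq_lintegral_meas_lt _ (Filter.Eventually.of_forall hh0) hh.aemeasurable]
  have anti : ∀ u : ℝ → ℝ, Measurable (fun t : ℝ => volume {a | t < u a}) := by
    intro u
    apply Antitone.measurable
    intro s t hst
    exact measure_mono (fun a ha => lt_of_le_of_lt hst ha)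
  rw [← lintegral_const_mul _ (anti f), ← lintegral_const_mul _ (anti g),
    ← lintegral_add_left ((anti f).const_mul _)]
  refine setLIntegral_mono' measurableSet_Ioi (fun t ht => ?_)
  by_cases ht1 : t < 1
  · apply bm_lin (measurableSet_lt measurable_const hf) (measurableSet_lt measurable_const hg)
      (hfs t ht ht1) (hgs t ht ht1) hl0 hl1
    intro a ha b hb
    exact H a b t ht ht1 ha hb
  · have e1 : {a | t < f a} = ∅ := by
      ext a; simp; linarith [hf1 a, not_lt.1 ht1]
    have e2 : {a | t < g a} = ∅ := by
      ext a; simp; linarith [hg1 a, not_lt.1 ht1]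
    rw [e1, e2]; simp

lemma ennreal_amgm {a b : ℝ≥0∞} {l : ℝ} (hl0 : 0 < l) (hl1 : l < 1) :
    a ^ (1 - l) * b ^ l ≤ ENNReal.ofReal (1 - l) * a + ENNReal.ofReal l * b := by
  have hl2 : 0 < 1 - l := by linarith
  by_cases ha : a = ⊤
  · subst ha
    rw [ENNReal.mul_top (by simpa using hl1)]; simp
  by_cases hb : b = ⊤
  · subst hb
    rw [ENNReal.mul_top (by simpa using hl0)]; simp
  lift a to NNReal using ha
  lift b to NNReal using hb
  have := Real.geom_mean_le_arith_mean2_weighted hl2.le hl0.le a.2 b.2 (by ring)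
  have h2 := ENNReal.ofReal_le_ofReal this
  rw [ENNReal.ofReal_mul (Real.rpow_nonneg a.2 _), ENNReal.ofReal_add (mul_nonneg hl2.le a.2) (mul_nonneg hl0.le b.2),
    ENNReal.ofReal_mul hl2.le, ENNReal.ofReal_mul hl0.le,
    ← ENNReal.ofReal_rpow_of_nonneg a.2 hl2.le, ← ENNReal.ofReal_rpow_of_nonneg b.2 hl0.le] at h2
  simpa using h2

/-- bounded version -/
lemma pl_bdd {f g h : ℝ → ℝ≥0∞} (hf : Measurable f) (hg : Measurable g) (hh : Measurable h)
    {M : ℝ≥0∞} (hM : M ≠ ⊤) (hfM : ∀ x, f x ≤ M) (hgM : ∀ x, g x ≤ M)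
    {l : ℝ} (hl0 : 0 < l) (hl1 : l < 1)
    (H : ∀ x y, f x ^ (1 - l) * g y ^ l ≤ h ((1 - l) * x + l * y)) :
    (∫⁻ x, f x) ^ (1 - l) * (∫⁻ x, g x) ^ l ≤ ∫⁻ x, h x := by
  have hl2 : 0 < 1 - l := by linarith
  set a := ⨆ x, f x with ha
  set b := ⨆ x, g x with hb
  have hat : a ≠ ⊤ := ne_top_of_le_ne_top hM (iSup_le hfM)
  have hbt : b ≠ ⊤ := ne_top_of_le_ne_top hM (iSup_le hgM)
  have hfa : ∀ x, f x ≤ a := fun x => le_iSup f x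
  have hgb : ∀ x, g x ≤ b := fun x => le_iSup g x
  by_cases ha0 : a = 0
  · have : ∀ x, f x = 0 := fun x => le_antisymm (ha0 ▸ hfa x) bot_le
    simp [this, hl2]
  by_cases hb0 : b = 0
  · have : ∀ x, g x = 0 := fun x => le_antisymm (hb0 ▸ hgb x) bot_le
    simp [this, hl0]
  set c := a ^ (1 - l) * b ^ l with hc
  have hc0 : c ≠ 0 := by
    apply mul_ne_zero
    · simp [ha0, hat]
    · simp [hb0, hbt]
  have hct : c ≠ ⊤ := by
    apply ENNReal.mul_ne_top
    · exact ENNReal.rpow_ne_top_of_nonneg hl2.le hat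
    · exact ENNReal.rpow_ne_top_of_nonneg hl0.le hbt
  have hfa1 : ∀ x, f x / a ≤ 1 := fun x => ENNReal.div_le_of_le_mul (by simpa using hfa x)
  have hgb1 : ∀ x, g x / b ≤ 1 := fun x => ENNReal.div_le_of_le_mul (by simpa using hgb x)
  have sup : ∀ (u : ℝ → ℝ≥0∞) (d : ℝ≥0∞), d = ⨆ x, u x → d ≠ 0 → d ≠ ⊤ → (∀ x, u x / d ≤ 1) →
      ∀ t : ℝ, 0 < t → t < 1 → ∃ x, t < (u x / d).toReal := by
    intro u d hd hd0 hdt hu t ht0 ht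
    have h1 : ENNReal.ofReal t * d < ⨆ x, u x := by
      rw [← hd]
      calc ENNReal.ofReal t * d < 1 * d := by
            rw [ENNReal.mul_lt_mul_iff_left hd0 hdt]; simpa using ht
        _ = d := one_mul d
    obtain ⟨x, hx⟩ := lt_iSup_iff.1 h1
    refine ⟨x, ?_⟩
    have : ENNReal.ofReal t < u x / d := by
      rwa [ENNReal.lt_div_iff_mul_lt (Or.inl hd0) (Or.inl hdt)]
    exact (ENNReal.ofReal_lt_iff_lt_toReal ht0.le (ne_top_of_le_ne_top ENNReal.one_ne_top (hu x))).1 this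
  have tof : ∀ y : ℝ≥0∞, y ≤ 1 → y ≠ ⊤ := fun y hy => ne_top_of_le_ne_top ENNReal.one_ne_top hy
  have hdiv : ∀ u v : ℝ≥0∞, (u / a) ^ (1 - l) * (v / b) ^ l = (u ^ (1 - l) * v ^ l) / c := by
    intro u v
    rw [ENNReal.div_rpow_of_nonneg _ _ hl2.le, ENNReal.div_rpow_of_nonneg _ _ hl0.le, hc,
      div_eq_mul_inv, div_eq_mul_inv, div_eq_mul_inv, ENNReal.mul_inv]
    · ring
    · left; simp [ha0, hat]
    · left; exact ENNReal.rpow_ne_top_of_nonneg hl2.le hat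
  have main := pl_norm (f := fun x => (f x / a).toReal) (g := fun x => (g x / b).toReal)
    (h := fun x => (min (h x / c) 1).toReal) (by fun_prop) (by fun_prop) (by fun_prop)
    (fun x => ENNReal.toReal_nonneg) (fun x => ENNReal.toReal_nonneg)
    (fun x => ENNReal.toReal_nonneg)
    (fun x => ENNReal.toReal_le_of_le_ofReal zero_le_one (by simpa using hfa1 x))
    (fun x => ENNReal.toReal_le_of_le_ofReal zero_le_one (by simpa using hgb1 x))
    (sup f a ha ha0 hat hfa1) (sup g b hb hb0 hbt hgb1) hl0 hl1 (by
      intro x y t ht0 ht1 hx hy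
      rw [← ENNReal.ofReal_lt_iff_lt_toReal ht0.le (tof _ (hfa1 x))] at hx
      rw [← ENNReal.ofReal_lt_iff_lt_toReal ht0.le (tof _ (hgb1 y))] at hy
      rw [← ENNReal.ofReal_lt_iff_lt_toReal ht0.le (tof _ (min_le_right _ _)), lt_min_iff]
      refine ⟨?_, by simpa using ht1⟩
      calc ENNReal.ofReal t = ENNReal.ofReal t ^ (1 - l) * ENNReal.ofReal t ^ l := by
            rw [← ENNReal.rpow_add _ _ (by simpa using ht0) (by simp)]; simp
        _ < (f x / a) ^ (1 - l) * (g y / b) ^ l := by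
            apply ENNReal.mul_lt_mul
            · exact ENNReal.rpow_lt_rpow hx hl2
            · exact ENNReal.rpow_lt_rpow hy hl0
        _ = (f x ^ (1 - l) * g y ^ l) / c := hdiv _ _
        _ ≤ _ := by gcongr; exact H x y)
  simp only [ENNReal.ofReal_toReal (tof _ (hfa1 _)), ENNReal.ofReal_toReal (tof _ (hgb1 _)),
    ENNReal.ofReal_toReal (tof _ (min_le_right _ _))] at main
  have m2 : (∫⁻ x, f x / a) ^ (1 - l) * (∫⁻ x, g x / b) ^ l ≤ ∫⁻ x, h x / c :=
    (ennreal_amgm hl0 hl1).trans (main.trans (lintegral_mono fun x => min_le_left _ _))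
  simp only [div_eq_mul_inv] at m2
  rw [lintegral_mul_const _ hf, lintegral_mul_const _ hg, lintegral_mul_const _ hh] at m2
  simp only [← div_eq_mul_inv] at m2
  rw [hdiv] at m2
  rw [ENNReal.div_le_iff hc0 hct, ENNReal.div_mul_cancel hc0 hct] at m2
  exact m2

/-- Prekopa-Leindler property. -/
def PLP (X : Type*) [AddCommGroup X] [Module ℝ X] [MeasurableSpace X] (μ : Measure X) : Prop :=
  ∀ l : ℝ, 0 < l → l < 1 → ∀ f g h : X → ℝ≥0∞, Measurable f → Measurable g → Measurable h →
    (∀ x y, f x ^ (1 - l) * g y ^ l ≤ h ((1 - l) • x + l • y)) →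
    (∫⁻ x, f x ∂μ) ^ (1 - l) * (∫⁻ x, g x ∂μ) ^ l ≤ ∫⁻ x, h x ∂μ

lemma lintegral_trunc {X : Type*} [MeasurableSpace X] {μ : Measure X} {f : X → ℝ≥0∞}
    (hf : Measurable f) : ∫⁻ x, f x ∂μ = ⨆ n : ℕ, ∫⁻ x, min (f x) n ∂μ := by
  rw [← lintegral_iSup]
  · congr 1; ext x
    rw [← inf_iSup_eq, ENNReal.iSup_natCast]; simp
  · intro n; fun_prop
  · intro m n hmn x
    exact min_le_min_left _ (by exact_mod_cast hmn)

lemma plp_real : PLP ℝ volume := by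
  intro l hl0 hl1 f g h hf hg hh H
  have hl2 : 0 < 1 - l := by linarith
  have key : ∀ n : ℕ, (∫⁻ x, min (f x) n) ^ (1 - l) * (∫⁻ x, min (g x) n) ^ l ≤ ∫⁻ x, h x := by
    intro n
    refine pl_bdd (M := n) (by fun_prop) (by fun_prop) hh (by simp) (fun x => min_le_right _ _)
      (fun x => min_le_right _ _) hl0 hl1 (fun x y => le_trans ?_ (H x y))
    gcongr <;> exact min_le_left _ _
  have mono : ∀ u : ℝ → ℝ≥0∞, Monotone (fun n : ℕ => ∫⁻ x, min (u x) n) := by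
    intro u m n hmn
    exact lintegral_mono fun x => min_le_min_left _ (by exact_mod_cast hmn)
  have tend : ∀ u : ℝ → ℝ≥0∞, Measurable u →
      Filter.Tendsto (fun n : ℕ => ∫⁻ x, min (u x) n) Filter.atTop (nhds (∫⁻ x, u x)) := by
    intro u hu
    rw [lintegral_trunc hu]
    exact tendsto_atTop_iSup (mono u)
  by_cases hf0 : ∫⁻ x, f x = 0
  · simp [hf0, hl2]
  by_cases hg0 : ∫⁻ x, g x = 0
  · simp [hg0, hl0]
  have tf := (ENNReal.continuous_rpow_const (y := 1 - l)).tendsto _ |>.comp (tend f hf)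
  have tg := (ENNReal.continuous_rpow_const (y := l)).tendsto _ |>.comp (tend g hg)
  refine le_of_tendsto (ENNReal.Tendsto.mul tf ?_ tg ?_) (Filter.Eventually.of_forall key)
  · left; simpa [hl2.not_gt] using fun h => absurd h hf0
  · left; simpa [hl0.not_gt] using fun h => absurd h hg0

lemma plp_prod {X : Type*} [AddCommGroup X] [Module ℝ X] [MeasurableSpace X] {μ : Measure X}
    [SFinite μ] (hX : PLP X μ) : PLP (ℝ × X) (volume.prod μ) := by
  intro l hl0 hl1 f g h hf hg hh H
  rw [lintegral_prod _ hf.aemeasurable, lintegral_prod _ hg.aemeasurable,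
    lintegral_prod _ hh.aemeasurable]
  refine plp_real l hl0 hl1 _ _ _ hf.lintegral_prod_right' hg.lintegral_prod_right'
    hh.lintegral_prod_right' (fun s t => ?_)
  refine hX l hl0 hl1 _ _ _ (by fun_prop) (by fun_prop) (by fun_prop) (fun x y => ?_)
  exact H (s, x) (t, y)

/-- the splitting as a measurable equivalence -/
def splitE (n : ℕ) : (Fin (n + 1) → ℝ) ≃ᵐ ℝ × (Fin n → ℝ) :=
  MeasurableEquiv.piFinSuccAbove (fun _ => ℝ) 0

lemma splitE_mp (n : ℕ) : MeasurePreserving (splitE n) volume (volume.prod volume) :=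
  volume_preserving_piFinSuccAbove (fun _ => ℝ) 0

lemma splitE_symm (n : ℕ) (p : ℝ × (Fin n → ℝ)) : (splitE n).symm p = Fin.cons p.1 p.2 := by
  ext i; refine Fin.cases ?_ (fun i => ?_) i <;> simp [splitE]

lemma splitE_apply (n : ℕ) (x : Fin (n + 1) → ℝ) : splitE n x = (x 0, fun i => x i.succ) := by
  rfl

lemma plp_pi (n : ℕ) : PLP (Fin n → ℝ) volume := by
  induction n with
  | zero =>
    intro l hl0 hl1 f g h hf hg hh H
    have : (volume : Measure (Fin 0 → ℝ)) = Measure.dirac 0 := by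
      rw [volume_pi, Measure.pi_of_empty _ 0]
    simp only [this, lintegral_dirac]
    simpa using H 0 0
  | succ n ih =>
    intro l hl0 hl1 f g h hf hg hh H
    have e := (splitE_mp n).symm
    rw [← e.lintegral_comp hf, ← e.lintegral_comp hg, ← e.lintegral_comp hh]
    refine plp_prod ih l hl0 hl1 _ _ _ (by fun_prop) (by fun_prop) (by fun_prop) (fun x y => ?_)
    refine (H _ _).trans (le_of_eq ?_)
    congr 1
    simp only [splitE_symm]
    ext i; refine Fin.cases ?_ (fun i => ?_) i <;> simp



lemma lintegral_exp_sub (u : ℝ → ℝ≥0∞) :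
    ∫⁻ s in Ioi (0:ℝ), u s = ∫⁻ x : ℝ, ENNReal.ofReal (Real.exp x) * u (Real.exp x) := by
  have := lintegral_image_eq_lintegral_abs_deriv_mul (s := univ) (f := Real.exp) (f' := Real.exp)
    MeasurableSet.univ (fun x _ => (Real.hasDerivAt_exp x).hasDerivWithinAt)
    (Real.exp_injective.injOn) u
  rw [image_univ, Real.range_exp] at this
  simpa using this

lemma lintegral_gauss : ∫⁻ s in Ioi (0:ℝ), ENNReal.ofReal (Real.exp (-(1/2) * s ^ 2)) =
    ENNReal.ofReal (Real.sqrt (Real.pi / 2)) := by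
  rw [← ofReal_integral_eq_lintegral_ofReal]
  · rw [integral_gaussian_Ioi]
    congr 1
    rw [div_eq_iff two_ne_zero, Real.sqrt_eq_iff_mul_self_eq (by positivity) (by positivity)]
    have := Real.mul_self_sqrt (show 0 ≤ Real.pi / 2 by positivity)
    nlinarith
  · exact (integrable_exp_neg_mul_sq (by norm_num)).integrableOn
  · exact Filter.Eventually.of_forall fun x => (Real.exp_pos _).le

lemma ennreal_sq_half (q : ℝ) (hq : 0 ≤ q) :
    (ENNReal.ofReal (q ^ 2)) ^ (1/2 : ℝ) = ENNReal.ofReal q := by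
  rw [ENNReal.ofReal_rpow_of_nonneg (by positivity) (by norm_num), ← Real.sqrt_eq_rpow,
    Real.sqrt_sq hq]

lemma mult1 {u w : ℝ → ℝ≥0∞} (hu : Measurable u) (hw : Measurable w) (A : ℝ≥0∞)
    (H : ∀ s t : ℝ, 0 < s → 0 < t → u s * w t ≤ A * ENNReal.ofReal (Real.exp (-(s * t)))) :
    (∫⁻ s in Ioi (0:ℝ), u s) * (∫⁻ s in Ioi (0:ℝ), w s) ≤ A * ENNReal.ofReal (Real.pi / 2) := by
  have := plp_real (1/2) (by norm_num) (by norm_num)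
    (fun x => ENNReal.ofReal (Real.exp x) * u (Real.exp x))
    (fun x => ENNReal.ofReal (Real.exp x) * w (Real.exp x))
    (fun x => A ^ (1/2 : ℝ) * (ENNReal.ofReal (Real.exp x) *
      ENNReal.ofReal (Real.exp (-(1/2) * (Real.exp x) ^ 2))))
    (by fun_prop) (by fun_prop) (by fun_prop) (by
      intro x y
      have e1 : (1 - 1/2 : ℝ) = 1/2 := by norm_num
      rw [e1, ← ENNReal.mul_rpow_of_nonneg _ _ (by norm_num)]
      have h1 := H _ _ (Real.exp_pos x) (Real.exp_pos y)
      set r : ℝ := (1/2 : ℝ) • x + (1/2 : ℝ) • y with hr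
      have e2 : Real.exp x * Real.exp y = Real.exp r ^ 2 := by
        rw [← Real.exp_add, ← Real.exp_nat_mul, hr]; congr 1; simp; ring
      calc _ = (ENNReal.ofReal (Real.exp x * Real.exp y) *
                (u (Real.exp x) * w (Real.exp y))) ^ (1/2 : ℝ) := by
              rw [ENNReal.ofReal_mul (Real.exp_pos _).le]; ring_nf
        _ ≤ (ENNReal.ofReal (Real.exp x * Real.exp y) *
                (A * ENNReal.ofReal (Real.exp (-(Real.exp x * Real.exp y))))) ^ (1/2 : ℝ) := by
              gcongr
        _ = (A * ENNReal.ofReal ((Real.exp r * Real.exp (-(1/2) * (Real.exp r) ^ 2)) ^ 2)) ^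
              (1/2 : ℝ) := by
              rw [e2, mul_left_comm, ← ENNReal.ofReal_mul (by positivity)]
              congr 3
              rw [mul_pow, ← Real.exp_nat_mul (-(1/2) * (Real.exp r) ^ 2)]
              congr 2; push_cast; ring
        _ = _ := by
              rw [ENNReal.mul_rpow_of_nonneg _ _ (by norm_num), ennreal_sq_half _ (by positivity),
                ENNReal.ofReal_mul (Real.exp_pos _).le])
  rw [lintegral_const_mul _ (by fun_prop), ← lintegral_exp_sub, ← lintegral_exp_sub,
    ← lintegral_exp_sub (fun s => ENNReal.ofReal (Real.exp (-(1/2) * s ^ 2))), lintegral_gauss] at this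
  have e1 : (1 - 1/2 : ℝ) = 1/2 := by norm_num
  rw [e1, ← ENNReal.mul_rpow_of_nonneg _ _ (by norm_num)] at this
  have h2 := ENNReal.rpow_le_rpow this (show (0:ℝ) ≤ 2 by norm_num)
  rw [← ENNReal.rpow_mul, ENNReal.mul_rpow_of_nonneg (A ^ (1/2 : ℝ)) _ (by norm_num), ← ENNReal.rpow_mul,
    ENNReal.ofReal_rpow_of_nonneg (by positivity) (by norm_num)] at h2
  have e3 : Real.sqrt (Real.pi / 2) ^ (2:ℝ) = Real.pi / 2 := by
    rw [Real.rpow_two, Real.sq_sqrt (by positivity)]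
  rw [e3] at h2
  norm_num at h2
  exact h2

/-- bounded, measurable, compactly supported -/
def Nice {X : Type*} [MeasurableSpace X] [TopologicalSpace X] (f : X → ℝ≥0∞) : Prop :=
  Measurable f ∧ (∃ M : ℝ≥0∞, M ≠ ⊤ ∧ ∀ x, f x ≤ M) ∧ ∃ K, IsCompact K ∧ ∀ x, f x ≠ 0 → x ∈ K

lemma Nice.lt_top {X : Type*} [MeasurableSpace X] [TopologicalSpace X]
    {μ : Measure X} [IsFiniteMeasureOnCompacts μ] {f : X → ℝ≥0∞} (hf : Nice f) :
    ∫⁻ x, f x ∂μ < ⊤ := by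
  obtain ⟨_, ⟨M, hM, hfM⟩, K, hK, hfK⟩ := hf
  calc ∫⁻ x, f x ∂μ ≤ ∫⁻ x in K, f x ∂μ := by
        rw [setLIntegral_eq_of_support_subset]
        exact hfK
    _ ≤ ∫⁻ x in K, M ∂μ := lintegral_mono hfM
    _ < ⊤ := by simpa using ENNReal.mul_lt_top hM.lt_top hK.measure_lt_top

lemma Nice.comp {X Y : Type*} [MeasurableSpace X] [TopologicalSpace X] [MeasurableSpace Y]
    [TopologicalSpace Y] {f : X → ℝ≥0∞} (hf : Nice f) {φ : Y → X} (hφ : Measurable φ) {ψ : X → Y}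
    (hψ : Continuous ψ) (h : ∀ y, ψ (φ y) = y) : Nice (fun y => f (φ y)) := by
  obtain ⟨h1, ⟨M, hM, hfM⟩, K, hK, hfK⟩ := hf
  refine ⟨h1.comp hφ, ⟨M, hM, fun _ => hfM _⟩, ψ '' K, hK.image hψ, fun y hy => ?_⟩
  exact ⟨_, hfK _ hy, h y⟩

lemma Nice.mul_cont {X : Type*} [MeasurableSpace X] [TopologicalSpace X] [BorelSpace X]
    {f : X → ℝ≥0∞} (hf : Nice f) {φ : X → ℝ} (hφ : Continuous φ) :
    Nice (fun y => f y * ENNReal.ofReal (φ y)) := by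
  obtain ⟨h1, ⟨M, hM, hfM⟩, K, hK, hfK⟩ := hf
  obtain ⟨C, hC⟩ := hK.exists_bound_of_continuousOn hφ.continuousOn
  refine ⟨h1.mul (hφ.measurable.ennreal_ofReal), ⟨M * ENNReal.ofReal C,
    ENNReal.mul_ne_top hM ENNReal.ofReal_ne_top, fun x => ?_⟩, K, hK, fun y hy => ?_⟩
  · by_cases hx : f x = 0
    · simp [hx]
    · exact mul_le_mul' (hfM x)
        (ENNReal.ofReal_le_ofReal ((le_abs_self _).trans (hC x (hfK x hx))))
  · exact hfK y (fun h => hy (by simp [h]))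

lemma jensen_exp {Y : Type*} [MeasurableSpace Y] {τ : Measure Y} [IsFiniteMeasure τ] {ψ : Y → ℝ}
    (hψ : Integrable ψ τ) (h0 : ∫ y, ψ y ∂τ = 0) :
    τ univ ≤ ∫⁻ y, ENNReal.ofReal (Real.exp (ψ y)) ∂τ := by
  have hi : Integrable (fun y => 1 + ψ y) τ := (integrable_const 1).add hψ
  have h1 : ∫ y, (1 + ψ y) ∂τ = τ.real univ := by
    rw [integral_add (integrable_const 1) hψ, h0]; simp
  calc τ univ = ENNReal.ofReal (∫ y, (1 + ψ y) ∂τ) := by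
        rw [h1, Measure.real, ENNReal.ofReal_toReal (measure_ne_top _ _)]
    _ ≤ ∫⁻ y, ENNReal.ofReal (1 + ψ y) ∂τ := by
        rw [integral_eq_lintegral_pos_part_sub_lintegral_neg_part hi]
        refine ENNReal.ofReal_le_of_le_toReal ?_
        have := @ENNReal.toReal_nonneg (∫⁻ y, ENNReal.ofReal (-(1 + ψ y)) ∂τ)
        linarith
    _ ≤ _ := lintegral_mono fun y => ENNReal.ofReal_le_ofReal (by linarith [Real.add_one_le_exp (ψ y)])

open scoped Matrix in
/-- Santalo property, existence of a centre -/
def SanP (n : ℕ) : Prop := ∀ f : (Fin n → ℝ) → ℝ≥0∞, Nice f → ∃ z, ∀ g : (Fin n → ℝ) → ℝ≥0∞,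
  Nice g → (∀ x y, f (z + x) * g y ≤ ENNReal.ofReal (Real.exp (-(x ⬝ᵥ y)))) →
  (∫⁻ x, f x) * (∫⁻ y, g y) ≤ ENNReal.ofReal (2 * Real.pi) ^ n

open scoped Matrix in
/-- Santalo property, centred version -/
def SanC (n : ℕ) : Prop := ∀ f g : (Fin n → ℝ) → ℝ≥0∞, Nice f → Nice g →
  (∀ z, ∫⁻ x, f x ≤ ∫⁻ x, f x * ENNReal.ofReal (Real.exp (x ⬝ᵥ z))) →
  (∀ x y, f x * g y ≤ ENNReal.ofReal (Real.exp (-(x ⬝ᵥ y)))) →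
  (∫⁻ x, f x) * (∫⁻ y, g y) ≤ ENNReal.ofReal (2 * Real.pi) ^ n

open scoped Matrix in
lemma SanP.toC {n : ℕ} (h : SanP n) : SanC n := by
  intro f g hf hg hc H
  obtain ⟨z, hz⟩ := h g hg
  have := hz (fun x => f x * ENNReal.ofReal (Real.exp (x ⬝ᵥ z)))
    (hf.mul_cont (by fun_prop)) (by
      intro y x
      have := H x (z + y)
      calc _ = f x * g (z + y) * ENNReal.ofReal (Real.exp (x ⬝ᵥ z)) := by ring
        _ ≤ ENNReal.ofReal (Real.exp (-(x ⬝ᵥ (z + y)))) * ENNReal.ofReal (Real.exp (x ⬝ᵥ z)) := by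
            gcongr
        _ = _ := by
            rw [← ENNReal.ofReal_mul (Real.exp_pos _).le, ← Real.exp_add, dotProduct_add,
              dotProduct_comm y x]
            congr 2; ring)
  rw [mul_comm]
  exact le_trans (mul_le_mul_right (hc z) _) this

open scoped Matrix in
lemma half {n : ℕ} (hC : SanC n) {f g : ℝ × (Fin n → ℝ) → ℝ≥0∞} (hf : Nice f) (hg : Nice g)
    (H : ∀ p q : ℝ × (Fin n → ℝ), f p * g q ≤
      ENNReal.ofReal (Real.exp (-(p.1 * q.1 + p.2 ⬝ᵥ q.2))))
    (hc : ∀ z, ∫⁻ p in {p | 0 < p.1}, f p ≤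
      ∫⁻ p in {p | 0 < p.1}, f p * ENNReal.ofReal (Real.exp (p.2 ⬝ᵥ z))) :
    (∫⁻ p in {p | 0 < p.1}, f p) * (∫⁻ p in {p | 0 < p.1}, g p) ≤
      ENNReal.ofReal (Real.pi / 2) * ENNReal.ofReal (2 * Real.pi) ^ n := by
  have hset : {p : ℝ × (Fin n → ℝ) | 0 < p.1} = Ioi (0:ℝ) ×ˢ univ := by ext; simp
  have hint : ∀ k : ℝ × (Fin n → ℝ) → ℝ≥0∞, Measurable k → ∫⁻ p in {p | 0 < p.1}, k p =
      ∫⁻ x, ∫⁻ s in Ioi (0:ℝ), k (s, x) := by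
    intro k hk
    rw [hset, Measure.volume_eq_prod, ← Measure.prod_restrict, lintegral_prod_symm _ hk.aemeasurable,
      Measure.restrict_univ]
  have nice : ∀ k : ℝ × (Fin n → ℝ) → ℝ≥0∞, Nice k → Nice (fun x => ∫⁻ s in Ioi (0:ℝ), k (s, x)) := by
    rintro k ⟨h1, ⟨M, hM, hkM⟩, K, hK, hkK⟩
    refine ⟨h1.lintegral_prod_left', ⟨M * volume (Prod.fst '' K), ENNReal.mul_ne_top hM
      (hK.image continuous_fst).measure_lt_top.ne, fun x => ?_⟩, Prod.snd '' K,
      hK.image continuous_snd, fun x hx => ?_⟩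
    · calc _ ≤ ∫⁻ s, k (s, x) := setLIntegral_le_lintegral _ _
        _ = ∫⁻ s in Prod.fst '' K, k (s, x) := by
            rw [setLIntegral_eq_of_support_subset]
            exact fun s hs => ⟨_, hkK _ hs, rfl⟩
        _ ≤ ∫⁻ s in Prod.fst '' K, M := lintegral_mono fun s => hkM _
        _ = _ := by simp
    · by_contra hcon
      apply hx
      have : ∀ s, k (s, x) = 0 := by
        intro s
        by_contra h
        exact hcon ⟨_, hkK _ h, rfl⟩
      simp [this]
  have hp : ENNReal.ofReal (Real.pi / 2) ≠ 0 := by simp [Real.pi_pos]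
  have hpt : ENNReal.ofReal (Real.pi / 2) ≠ ⊤ := ENNReal.ofReal_ne_top
  have nG := nice g hg
  have main := hC (fun x => ∫⁻ s in Ioi (0:ℝ), f (s, x))
    (fun x => (∫⁻ s in Ioi (0:ℝ), g (s, x)) * ENNReal.ofReal ((Real.pi / 2)⁻¹)) (nice f hf)
    (nG.mul_cont continuous_const) (by
      intro z
      have := hc z
      rw [hint _ hf.1, hint (fun p => f p * ENNReal.ofReal (Real.exp (p.2 ⬝ᵥ z)))
        (hf.1.mul (by fun_prop))] at this
      refine this.trans (le_of_eq ?_)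
      congr 1; ext x
      dsimp only
      rw [lintegral_mul_const]
      exact hf.1.comp (by fun_prop)) (by
      intro x y
      have h1 := mult1 (u := fun s => f (s, x)) (w := fun s => g (s, y))
        (hf.1.comp (by fun_prop)) (hg.1.comp (by fun_prop))
        (ENNReal.ofReal (Real.exp (-(x ⬝ᵥ y)))) (by
          intro s t _ _
          refine (H _ _).trans (le_of_eq ?_)
          rw [← ENNReal.ofReal_mul (Real.exp_pos _).le, ← Real.exp_add]
          congr 2; ring)
      rw [ENNReal.ofReal_inv_of_pos (by positivity), ← mul_assoc, ← div_eq_mul_inv]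
      exact ENNReal.div_le_of_le_mul h1)
  rw [lintegral_mul_const _ nG.1, ← hint _ hf.1, ← hint _ hg.1,
    ENNReal.ofReal_inv_of_pos (by positivity), ← mul_assoc, ← div_eq_mul_inv,
    ENNReal.div_le_iff hp hpt] at main
  rwa [mul_comm (ENNReal.ofReal (Real.pi / 2))]



lemma exists_median (ρ : Measure ℝ) [IsFiniteMeasure ρ] [NullSingletonClass ρ] {K : Set ℝ} (hK : IsCompact K)
    (hρ : ρ Kᶜ = 0) : ∃ c, ρ (Ioi c) = ρ univ / 2 ∧ ρ (Iio c) = ρ univ / 2 := by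
  have hcont : Continuous (fun c => ρ.real (Iic c)) := by
    rw [continuous_iff_continuousAt]
    intro c
    have e : (fun c => ρ.real (Iic c)) = fun c => ∫ x, (Iic c).indicator (fun _ => (1:ℝ)) x ∂ρ := by
      ext c; rw [integral_indicator measurableSet_Iic]; simp
    rw [e]
    refine continuousAt_of_dominated (bound := fun _ => 1) ?_ ?_ (integrable_const 1) ?_
    · refine Filter.Eventually.of_forall fun d => ?_
      exact (measurable_const.indicator measurableSet_Iic).aestronglyMeasurable
    · refine Filter.Eventually.of_forall fun d => Filter.Eventually.of_forall fun x => ?_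
      by_cases h : x ≤ d <;> simp [indicator, h]
    · have : ∀ᵐ x ∂ρ, x ≠ c := by
        rw [ae_iff]; simp
      filter_upwards [this] with x hx
      rcases lt_or_gt_of_ne hx with h | h
      · have : (fun _ : ℝ => (1:ℝ)) =ᶠ[nhds c] fun d => (Iic d).indicator (fun _ => (1:ℝ)) x := by
          filter_upwards [lt_mem_nhds h] with d hd
          simp [indicator, hd.le]
        exact continuousAt_const.congr this
      · have : (fun _ : ℝ => (0:ℝ)) =ᶠ[nhds c] fun d => (Iic d).indicator (fun _ => (1:ℝ)) x := by
          filter_upwards [gt_mem_nhds h] with d hd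
          simp [indicator, hd]
        exact continuousAt_const.congr this
  obtain ⟨a, ha⟩ := hK.bddBelow
  obtain ⟨b, hb⟩ := hK.bddAbove
  have h1 : ρ.real (Iic (a - 1)) = 0 := by
    rw [measureReal_eq_zero_iff]
    refine measure_mono_null (t := Kᶜ) (fun x hx => ?_) hρ
    intro hxK
    have := ha hxK
    simp at hx; linarith
  have h2 : ρ.real (Iic b) = ρ.real univ := by
    have h0 : ρ (Iic b)ᶜ = 0 := by
      refine measure_mono_null (t := Kᶜ) (fun x hx => ?_) hρ
      intro hxK
      exact hx (hb hxK)
    have h3 := measure_add_measure_compl (μ := ρ) (measurableSet_Iic (a := b))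
    rw [h0, add_zero] at h3
    rw [Measure.real, Measure.real, h3]
  obtain ⟨c, hc⟩ := mem_range_of_exists_le_of_exists_ge (c := ρ.real univ / 2) hcont
    ⟨a - 1, by rw [h1]; positivity⟩ ⟨b, by rw [h2]; linarith [@measureReal_nonneg _ _ ρ univ]⟩
  have hc1 : ρ (Iic c) = ρ univ / 2 := by
    have := congrArg ENNReal.ofReal hc
    simp only [Measure.real] at this
    rw [ENNReal.ofReal_toReal (measure_ne_top _ _), ENNReal.ofReal_div_of_pos two_pos,
      ENNReal.ofReal_toReal (measure_ne_top _ _)] at this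
    simpa using this
  refine ⟨c, ?_, ?_⟩
  · rw [← compl_Iic, measure_compl measurableSet_Iic (measure_ne_top _ _), hc1,
      ENNReal.sub_half (measure_ne_top _ _)]
  · rw [measure_congr Iio_ae_eq_Iic, hc1]

lemma integrable_of_compact {Y F : Type*} [MeasurableSpace Y] [TopologicalSpace Y]
    [BorelSpace Y] [NormedAddCommGroup F] [SecondCountableTopology F] {τ : Measure Y} [IsFiniteMeasure τ] {K : Set Y}
    (hK : IsCompact K) (hτ : τ Kᶜ = 0) {φ : Y → F} (hφ : Continuous φ) : Integrable φ τ := by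
  obtain ⟨C, hC⟩ := hK.exists_bound_of_continuousOn hφ.continuousOn
  borelize F
  refine Integrable.of_bound hφ.measurable.aestronglyMeasurable C ?_
  have : ∀ᵐ y ∂τ, y ∈ K := by rw [ae_iff]; exact hτ
  filter_upwards [this] with y hy using hC y hy

lemma integral_pos_of_half {Y : Type*} [MeasurableSpace Y] {τ : Measure Y} {φ : Y → ℝ}
    {S : Set Y} (hS : MeasurableSet S) (hφ : Integrable φ (τ.restrict S)) (hpos : ∀ y ∈ S, 0 < φ y)
    (hτ : τ S ≠ 0) :
    0 < ∫ y in S, φ y ∂τ := by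
  rw [setIntegral_pos_iff_support_of_nonneg_ae]
  · refine lt_of_lt_of_le (pos_iff_ne_zero.2 hτ) (measure_mono fun y hy => ⟨(hpos y hy).ne', hy⟩)
  · filter_upwards [ae_restrict_mem hS] with y hy using (hpos y hy).le
  · exact hφ

open scoped Matrix in
lemma step_prod {n : ℕ} (hC : SanC n) (f : ℝ × (Fin n → ℝ) → ℝ≥0∞) (hf : Nice f) :
    ∃ z : ℝ × (Fin n → ℝ), ∀ g : ℝ × (Fin n → ℝ) → ℝ≥0∞, Nice g →
    (∀ p q : ℝ × (Fin n → ℝ), f (z + p) * g q ≤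
      ENNReal.ofReal (Real.exp (-(p.1 * q.1 + p.2 ⬝ᵥ q.2)))) →
    (∫⁻ x, f x) * (∫⁻ y, g y) ≤ ENNReal.ofReal (2 * Real.pi) ^ (n + 1) := by
  by_cases hT0 : ∫⁻ x, f x = 0
  · exact ⟨0, fun g _ _ => by simp [hT0]⟩
  set ρ : Measure (ℝ × (Fin n → ℝ)) := volume.withDensity f with hρ
  have hρu : ρ univ = ∫⁻ x, f x := by simp [hρ]
  have hfin : IsFiniteMeasure ρ := ⟨by rw [hρu]; exact hf.lt_top⟩
  obtain ⟨K, hK, hfK⟩ := hf.2.2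
  have hρK : ρ Kᶜ = 0 := by
    rw [hρ, withDensity_apply _ hK.measurableSet.compl]
    rw [setLIntegral_eq_zero_iff hK.measurableSet.compl hf.1]
    refine Filter.Eventually.of_forall fun x hx => ?_
    by_contra h; exact hx (hfK x h)
  have hvert : ∀ c : ℝ, volume {p : ℝ × (Fin n → ℝ) | p.1 = c} = 0 := by
    intro c
    have : {p : ℝ × (Fin n → ℝ) | p.1 = c} = {c} ×ˢ univ := by ext; simp
    rw [this, Measure.volume_eq_prod, Measure.prod_prod]; simp
  have hac : ρ ≪ volume := withDensity_absolutelyContinuous _ _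
  have hna : NullSingletonClass (ρ.map Prod.fst) := ⟨fun c => by
    rw [Measure.map_apply measurable_fst (measurableSet_singleton c)]
    exact hac (hvert c)⟩
  obtain ⟨c, hc1, hc2⟩ := exists_median (ρ.map Prod.fst) (hK.image continuous_fst) (by
    rw [Measure.map_apply measurable_fst (hK.image continuous_fst).measurableSet.compl]
    exact measure_mono_null (fun x hx hxK => hx ⟨x, hxK, rfl⟩) hρK)
  rw [Measure.map_apply measurable_fst measurableSet_Ioi, Measure.map_apply measurable_fst MeasurableSet.univ,
    preimage_univ] at hc1
  rw [Measure.map_apply measurable_fst measurableSet_Iio, Measure.map_apply measurable_fst MeasurableSet.univ,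
    preimage_univ] at hc2
  set T := ρ univ with hT
  have hTt : T ≠ ⊤ := measure_ne_top _ _
  have hTne : T ≠ 0 := by rw [hρu]; exact hT0
  set Sp : Set (ℝ × (Fin n → ℝ)) := Prod.fst ⁻¹' Ioi c with hSp
  set Sm : Set (ℝ × (Fin n → ℝ)) := Prod.fst ⁻¹' Iio c with hSm
  have mSp : MeasurableSet Sp := measurable_fst measurableSet_Ioi
  have mSm : MeasurableSet Sm := measurable_fst measurableSet_Iio
  have hKr : ∀ S, (ρ.restrict S) Kᶜ = 0 := fun S => Measure.absolutelyContinuous_of_le Measure.restrict_le_self hρK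
  have intg : ∀ (S : Set (ℝ × (Fin n → ℝ))) (φ : ℝ × (Fin n → ℝ) → (Fin n → ℝ)), Continuous φ →
      Integrable φ (ρ.restrict S) := fun S φ h => integrable_of_compact hK (hKr S) h
  have intg1 : ∀ (S : Set (ℝ × (Fin n → ℝ))) (φ : ℝ × (Fin n → ℝ) → ℝ), Continuous φ →
      Integrable φ (ρ.restrict S) := fun S φ h => integrable_of_compact hK (hKr S) h
  set m : ℝ := (T / 2).toReal with hm
  have hT2 : T / 2 ≠ 0 := by simp [hTne]
  have hm0 : 0 < m := ENNReal.toReal_pos hT2 (ENNReal.div_ne_top hTt (by simp))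
  set σp := ∫ p in Sp, (p.1 - c) ∂ρ with hσp
  set σm := ∫ p in Sm, (c - p.1) ∂ρ with hσm
  have hσp0 : 0 < σp := integral_pos_of_half mSp (intg1 _ _ (by fun_prop))
    (fun y hy => sub_pos.2 hy) (by rw [hc1]; exact hT2)
  have hσm0 : 0 < σm := integral_pos_of_half mSm (intg1 _ _ (by fun_prop))
    (fun y hy => sub_pos.2 hy) (by rw [hc2]; exact hT2)
  set Xp := ∫ p in Sp, p.2 ∂ρ with hXp
  set Xm := ∫ p in Sm, p.2 ∂ρ with hXm
  set v : Fin n → ℝ := (σp + σm)⁻¹ • (Xp - Xm) with hv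
  set z' : Fin n → ℝ := m⁻¹ • (Xp - σp • v) with hz'
  have barint : ∀ S, MeasurableSet S → ρ S = T / 2 → ∫ p in S, (p.2 - z' - (p.1 - c) • v) ∂ρ =
      (∫ p in S, p.2 ∂ρ) - m • z' - (∫ p in S, (p.1 - c) ∂ρ) • v := by
    intro S hS hρS
    rw [integral_sub (intg S _ (by fun_prop)) (intg S _ (by fun_prop)),
      integral_sub (intg S _ (by fun_prop)) (intg S _ (by fun_prop)), integral_smul_const (fun p : ℝ × (Fin n → ℝ) => p.1 - c) v]
    have hreal : (ρ.restrict S).real univ = m := by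
      rw [Measure.real, Measure.restrict_apply_univ, hρS]
    rw [integral_const, hreal]
  have hmz : m • z' = Xp - σp • v := by rw [hz', smul_inv_smul₀ hm0.ne']
  have hsv : (σp + σm) • v = Xp - Xm := by rw [hv, smul_inv_smul₀ (by positivity)]
  have barp : ∫ p in Sp, (p.2 - z' - (p.1 - c) • v) ∂ρ = 0 := by
    rw [barint Sp mSp hc1, hmz]; simp [hXp, hσp]
  have barm : ∫ p in Sm, (p.2 - z' - (p.1 - c) • v) ∂ρ = 0 := by
    rw [barint Sm mSm hc2, hmz]
    have : ∫ p in Sm, (p.1 - c) ∂ρ = - σm := by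
      rw [hσm, ← integral_neg]; congr 1; ext p; ring
    rw [this, ← hXm]
    have : Xm = Xp - (σp + σm) • v := by rw [hsv]; simp
    rw [this, add_smul, neg_smul]; abel
  have cent : ∀ S, MeasurableSet S → ρ S = T / 2 → ∫ p in S, (p.2 - z' - (p.1 - c) • v) ∂ρ = 0 →
      ∀ z : Fin n → ℝ, ρ S ≤ ∫⁻ p in S, ENNReal.ofReal (Real.exp ((p.2 - z' - (p.1 - c) • v) ⬝ᵥ z)) ∂ρ := by
    intro S hS hρS hbar z
    have := jensen_exp (τ := ρ.restrict S) (ψ := fun p => (p.2 - z' - (p.1 - c) • v) ⬝ᵥ z)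
      (intg1 S _ (by fun_prop)) (by
        let ℓ : (Fin n → ℝ) →L[ℝ] ℝ := LinearMap.toContinuousLinearMap
          { toFun := fun x => x ⬝ᵥ z
            map_add' := fun x y => add_dotProduct x y z
            map_smul' := fun a x => by simp }
        have h := ℓ.integral_comp_comm (intg S (fun p => p.2 - z' - (p.1 - c) • v) (by fun_prop))
        rw [hbar, map_zero] at h
        exact h)
    simpa using this
  -- measure preserving maps
  set Φ : ℝ × (Fin n → ℝ) → ℝ × (Fin n → ℝ) := fun q => (c + q.1, z' + q.2 + q.1 • v) with hΦ
  set Ψ : ℝ × (Fin n → ℝ) → ℝ × (Fin n → ℝ) := fun q => (q.1 - v ⬝ᵥ q.2, q.2) with hΨ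
  have mpΦ : MeasurePreserving Φ volume volume := by
    refine (measurePreserving_add_left volume c).skew_product (g := fun s x => z' + x + s • v)
      (by fun_prop) (Filter.Eventually.of_forall fun s => ?_)
    have e : (fun x : Fin n → ℝ => z' + x + s • v) = fun x => (z' + s • v) + x := by
      ext x i; simp; ring
    rw [e]
    exact (measurePreserving_add_left volume (z' + s • v)).map_eq
  have mpΨ : MeasurePreserving Ψ volume volume := by
    have h1 := (MeasurePreserving.id (volume : Measure (Fin n → ℝ))).skew_product
      (μc := (volume : Measure ℝ)) (μd := (volume : Measure ℝ)) (g := fun y t => t - v ⬝ᵥ y)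
      (by fun_prop) (Filter.Eventually.of_forall fun y => by
        simpa [sub_eq_add_neg] using (measurePreserving_add_right volume (-(v ⬝ᵥ y))).map_eq)
    exact (Measure.measurePreserving_swap.comp h1).comp Measure.measurePreserving_swap
  have mpN : MeasurePreserving (fun q : ℝ × (Fin n → ℝ) => (-q.1, q.2)) volume volume :=
    (Measure.measurePreserving_neg (volume : Measure ℝ)).prod (MeasurePreserving.id volume)
  refine ⟨(c, z'), fun g hg H => ?_⟩
  have mpE : ∀ ε : ℝ, ε = 1 ∨ ε = -1 →
      MeasurePreserving (fun q : ℝ × (Fin n → ℝ) => (ε * q.1, q.2)) volume volume := by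
    rintro ε (rfl | rfl)
    · simp only [one_mul]
      exact MeasurePreserving.id _
    · simpa using mpN
  have gen : ∀ (ε : ℝ) (S : Set (ℝ × (Fin n → ℝ))), ε = 1 ∨ ε = -1 → MeasurableSet S → ρ S = T / 2 →
      ∫ p in S, (p.2 - z' - (p.1 - c) • v) ∂ρ = 0 →
      (fun q : ℝ × (Fin n → ℝ) => Φ (ε * q.1, q.2)) ⁻¹' S = {q | 0 < q.1} →
      T / 2 * (∫⁻ q in {q : ℝ × (Fin n → ℝ) | 0 < q.1}, g (Ψ (ε * q.1, q.2))) ≤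
        ENNReal.ofReal (Real.pi / 2) * ENNReal.ofReal (2 * Real.pi) ^ n := by
    intro ε S hε mS hρS hbar hpre
    have hε2 : ε * ε = 1 := by rcases hε with rfl | rfl <;> norm_num
    have mp1 := mpΦ.comp (mpE ε hε)
    have cv : ∀ k : ℝ × (Fin n → ℝ) → ℝ≥0∞, Measurable k →
        ∫⁻ q in {q : ℝ × (Fin n → ℝ) | 0 < q.1}, f (Φ (ε * q.1, q.2)) * k (Φ (ε * q.1, q.2)) =
        ∫⁻ p in S, k p ∂ρ := by
      intro k hk
      have h := mp1.setLIntegral_comp_preimage mS (hf.1.mul hk)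
      rw [hρ, setLIntegral_withDensity_eq_setLIntegral_mul _ hf.1 hk mS, ← h, ← hpre]
      rfl
    have cv1 : ∫⁻ q in {q : ℝ × (Fin n → ℝ) | 0 < q.1}, f (Φ (ε * q.1, q.2)) = T / 2 := by
      have := cv (fun _ => 1) measurable_const
      simp only [mul_one] at this
      rw [this]; simp [hρS]
    rw [← cv1]
    refine half (f := fun q => f (Φ (ε * q.1, q.2))) (g := fun q => g (Ψ (ε * q.1, q.2))) hC ?_ ?_ ?_ ?_
    · refine hf.comp (φ := fun q => Φ (ε * q.1, q.2))
        (ψ := fun p => (ε * (p.1 - c), p.2 - z' - (p.1 - c) • v)) (by fun_prop) (by fun_prop) ?_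
      intro q
      simp only [hΦ]
      ext i
      · simp [← mul_assoc, hε2]
      · simp
        ring
    · refine hg.comp (φ := fun q => Ψ (ε * q.1, q.2))
        (ψ := fun p => (ε * (p.1 + v ⬝ᵥ p.2), p.2)) (by fun_prop) (by fun_prop) ?_
      intro q
      simp [hΨ, ← mul_assoc, hε2]
    · intro p q
      have := H (ε * p.1, p.2 + (ε * p.1) • v) (Ψ (ε * q.1, q.2))
      have e1 : ((c, z') + (ε * p.1, p.2 + (ε * p.1) • v) : ℝ × (Fin n → ℝ)) = Φ (ε * p.1, p.2) := by
        simp [hΦ, add_assoc]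
      rw [e1] at this
      refine this.trans (le_of_eq ?_)
      congr 3
      simp only [hΨ, add_dotProduct, smul_dotProduct, smul_eq_mul]
      linear_combination (p.1 * q.1) * hε2
    · intro z
      rw [cv1, ← hρS]
      refine (cent S mS hρS hbar z).trans (le_of_eq ?_)
      rw [← cv _ (by fun_prop)]
      congr 1; ext q; congr 4
      simp [hΦ]
      abel
  have g1 := gen 1 Sp (Or.inl rfl) mSp hc1 barp (by ext q; simp [hΦ, hSp])
  have g2 := gen (-1) Sm (Or.inr rfl) mSm hc2 barm (by ext q; simp [hΦ, hSm])
  have hgt : ∫⁻ y, g y = (∫⁻ q in {q : ℝ × (Fin n → ℝ) | 0 < q.1}, g (Ψ (1 * q.1, q.2))) +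
      ∫⁻ q in {q : ℝ × (Fin n → ℝ) | 0 < q.1}, g (Ψ (-1 * q.1, q.2)) := by
    have mA : MeasurableSet {q : ℝ × (Fin n → ℝ) | 0 < q.1} := measurableSet_lt measurable_const measurable_fst
    have mB : MeasurableSet {q : ℝ × (Fin n → ℝ) | q.1 < 0} := measurableSet_lt measurable_fst measurable_const
    have mgΨ : Measurable (fun q => g (Ψ q)) := hg.1.comp mpΨ.measurable
    have h := mpN.setLIntegral_comp_preimage mB mgΨ
    have e : (fun q : ℝ × (Fin n → ℝ) => (-q.1, q.2)) ⁻¹' {q | q.1 < 0} = {q | 0 < q.1} := by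
      ext q; simp
    rw [e] at h
    simp only [one_mul, neg_one_mul]
    rw [h, ← mpΨ.lintegral_comp hg.1, ← lintegral_add_compl _ mA]
    congr 1
    refine setLIntegral_congr ?_
    have : ∀ᵐ q : ℝ × (Fin n → ℝ), q.1 ≠ 0 := by
      rw [ae_iff]; simpa using hvert 0
    filter_upwards [this] with q hq
    apply propext
    change ¬ (0 < q.1) ↔ q.1 < 0
    rw [not_lt]
    exact ⟨fun h => lt_of_le_of_ne h hq, le_of_lt⟩
  have hsum := add_le_add g1 g2
  rw [← mul_add, ← hgt] at hsum
  rw [← hρu]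
  calc T * ∫⁻ y, g y = 2 * (T / 2 * ∫⁻ y, g y) := by
        rw [← mul_assoc, ENNReal.mul_div_cancel (by simp) (by simp)]
    _ ≤ 2 * (ENNReal.ofReal (Real.pi / 2) * ENNReal.ofReal (2 * Real.pi) ^ n +
          ENNReal.ofReal (Real.pi / 2) * ENNReal.ofReal (2 * Real.pi) ^ n) := by gcongr
    _ = _ := by
        rw [pow_succ, ← two_mul, ← mul_assoc, ← mul_assoc, mul_comm (ENNReal.ofReal (2 * Real.pi) ^ n)]
        congr 1
        have : (2:ℝ≥0∞) = ENNReal.ofReal 2 := by simp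
        rw [this, ← ENNReal.ofReal_mul (by norm_num), ← ENNReal.ofReal_mul (by norm_num)]
        congr 1; ring

open scoped Matrix in
lemma sanP (n : ℕ) : SanP n := by
  induction n with
  | zero =>
    intro f hf
    refine ⟨0, fun g hg H => ?_⟩
    have : (volume : Measure (Fin 0 → ℝ)) = Measure.dirac 0 := by
      rw [volume_pi, Measure.pi_of_empty _ 0]
    simp only [this, lintegral_dirac]
    simpa using H 0 0
  | succ n ih =>
    intro f hf
    have e := (splitE_mp n).symm
    have c1 : Continuous (fun x : Fin (n + 1) → ℝ => splitE n x) := by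
      simp only [splitE_apply]; fun_prop
    have nice : ∀ k : (Fin (n + 1) → ℝ) → ℝ≥0∞, Nice k → Nice (fun p => k ((splitE n).symm p)) :=
      fun k hk => hk.comp (splitE n).symm.measurable c1 (by simp)
    obtain ⟨z, hz⟩ := step_prod ih.toC _ (nice f hf)
    refine ⟨(splitE n).symm z, fun g hg H => ?_⟩
    have := hz _ (nice g hg) (by
      intro p q
      have := H ((splitE n).symm p) ((splitE n).symm q)
      simp only [splitE_symm] at this ⊢
      have e1 : (Fin.cons (z + p).1 (z + p).2 : Fin (n + 1) → ℝ) = Fin.cons z.1 z.2 + Fin.cons p.1 p.2 := by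
        ext i; refine Fin.cases ?_ (fun i => ?_) i <;> simp
      rw [e1]
      refine this.trans (le_of_eq ?_)
      congr 3
      simp [dotProduct, Fin.sum_univ_succ])
    rwa [Measure.volume_eq_prod, e.lintegral_comp hf.1, e.lintegral_comp hg.1] at this



lemma rs1 {A B : Type*} [NormedAddCommGroup A] [NormedSpace ℝ A] [MeasurableSpace A] [BorelSpace A]
    [FiniteDimensional ℝ A] [NormedAddCommGroup B] [NormedSpace ℝ B] [MeasurableSpace B] [BorelSpace B]
    [FiniteDimensional ℝ B] (α : Measure A) [α.IsAddHaarMeasure] (β : Measure B) [β.IsAddHaarMeasure]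
    {N : Set (A × B)} (hc : IsCompact N) (hv : Convex ℝ N) (x0 : A) {s : ℝ} (h0 : 0 < s) (h1 : s < 1) :
    α (Prod.fst '' N) * β {b | (x0, b) ∈ N} *
      ENNReal.ofReal (s ^ Module.finrank ℝ A * (1 - s) ^ Module.finrank ℝ B) ≤ (α.prod β) N := by
  haveI : ProperSpace A := FiniteDimensional.proper ℝ A
  haveI : ProperSpace B := FiniteDimensional.proper ℝ B
  have mN : MeasurableSet N := hc.measurableSet
  rw [Measure.prod_apply mN]
  set L := Prod.fst '' N
  set I := AffineMap.homothety x0 s '' L with hI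
  have hIm : α I = ENNReal.ofReal (s ^ Module.finrank ℝ A) * α L := by
    rw [hI, Measure.addHaar_image_homothety, abs_of_pos (by positivity)]
  have hlow : ∀ x ∈ I, ENNReal.ofReal ((1 - s) ^ Module.finrank ℝ B) * β {b | (x0, b) ∈ N} ≤
      β (Prod.mk x ⁻¹' N) := by
    rintro _ ⟨x, ⟨⟨x', b⟩, hp, rfl⟩, rfl⟩
    have := Measure.addHaar_image_homothety β b (1 - s) {b | (x0, b) ∈ N}
    rw [abs_of_pos (by have : 0 < 1 - s := by linarith
                       positivity)] at this
    rw [← this]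
    refine measure_mono ?_
    rintro _ ⟨b', hb', rfl⟩
    have := hv hp hb' h0.le (by linarith : 0 ≤ 1 - s) (by ring)
    have e : s • (x', b) + (1 - s) • (x0, b') =
        ((AffineMap.homothety x0 s) (x', b).1, (AffineMap.homothety b (1 - s)) b') := by
      simp only [AffineMap.homothety_apply, vsub_eq_sub, vadd_eq_add, Prod.smul_mk, Prod.mk_add_mk]
      ext <;> simp only [smul_sub, sub_smul, one_smul] <;> abel
    rw [e] at this
    exact this
  calc _ = ENNReal.ofReal ((1 - s) ^ Module.finrank ℝ B) * β {b | (x0, b) ∈ N} * α I := by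
        rw [hIm, ENNReal.ofReal_mul (by positivity)]; ring
    _ = ∫⁻ x in I, ENNReal.ofReal ((1 - s) ^ Module.finrank ℝ B) * β {b | (x0, b) ∈ N} ∂α := by
        rw [setLIntegral_const]
    _ ≤ ∫⁻ x in I, β (Prod.mk x ⁻¹' N) ∂α := by
        refine setLIntegral_mono (measurable_measure_prodMk_left mN) hlow
    _ ≤ _ := setLIntegral_le_lintegral _ _

lemma rs2 {A B : Type*} [NormedAddCommGroup A] [NormedSpace ℝ A] [MeasurableSpace A] [BorelSpace A]
    [FiniteDimensional ℝ A] [NormedAddCommGroup B] [NormedSpace ℝ B] [MeasurableSpace B] [BorelSpace B]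
    [FiniteDimensional ℝ B] (α : Measure A) [α.IsAddHaarMeasure] (β : Measure B) [β.IsAddHaarMeasure]
    {N : Set (A × B)} (hc : IsCompact N) (hv : Convex ℝ N) (w0 : B) {s : ℝ} (h0 : 0 < s) (h1 : s < 1) :
    β (Prod.snd '' N) * α {a | (a, w0) ∈ N} *
      ENNReal.ofReal ((1 - s) ^ Module.finrank ℝ B * s ^ Module.finrank ℝ A) ≤ (α.prod β) N := by
  haveI : ProperSpace A := FiniteDimensional.proper ℝ A
  haveI : ProperSpace B := FiniteDimensional.proper ℝ B
  have hc' : IsCompact (Prod.swap '' N) := hc.image continuous_swap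
  have hv' : Convex ℝ (Prod.swap '' N) :=
    hv.is_linear_image ⟨fun _ _ => rfl, fun _ _ => rfl⟩
  have := rs1 β α hc' hv' w0 (s := 1 - s) (by linarith) (by linarith)
  have e1 : Prod.fst '' (Prod.swap '' N) = Prod.snd '' N := by
    rw [← image_comp]; rfl
  have e2 : {b | (w0, b) ∈ Prod.swap '' N} = {a | (a, w0) ∈ N} := by
    ext a; simp
  have e3 : (β.prod α) (Prod.swap '' N) = (α.prod β) N := by
    rw [← Measure.prod_swap, Measure.map_apply measurable_swap hc'.measurableSet,
      preimage_image_eq _ Prod.swap_injective]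
  rw [e1, e2, e3, sub_sub_cancel] at this
  exact this

open scoped Matrix in
lemma case1 {k : ℕ} {W : Type*} [NormedAddCommGroup W] [NormedSpace ℝ W] [MeasurableSpace W] [BorelSpace W]
    [FiniteDimensional ℝ W] (ν : Measure W) [ν.IsAddHaarMeasure] {K : Set ((Fin k → ℝ) × W)}
    (hc : IsCompact K) (hv : Convex ℝ K) (hpos : (volume.prod ν) K ≠ 0)
    (hbar : ∀ z : Fin k → ℝ, ∫ p in K, p.1 ⬝ᵥ z ∂(volume.prod ν) = 0)
    {M : Set (Fin k → ℝ)} (hM : IsCompact M) (hLM : ∀ x ∈ Prod.fst '' K, ∀ y ∈ M, x ⬝ᵥ y ≤ k)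
    {s : ℝ} (h0 : 0 < s) (h1 : s < 1) :
    volume (Prod.fst '' K) * volume M *
      ENNReal.ofReal (s ^ k * (1 - s) ^ Module.finrank ℝ W) ≤
      ENNReal.ofReal ((2 * Real.pi) ^ k * Real.exp k) := by
  haveI : ProperSpace W := FiniteDimensional.proper ℝ W
  have mK : MeasurableSet K := hc.measurableSet
  set g : (Fin k → ℝ) → ℝ≥0∞ := fun x => ν (Prod.mk x ⁻¹' K) with hg
  have mg : Measurable g := measurable_measure_prodMk_left mK
  set S := ⨆ x, g x with hS
  have hSt : S ≠ ⊤ := by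
    have : S ≤ ν (Prod.snd '' K) := iSup_le fun x => measure_mono fun w hw => ⟨_, hw, rfl⟩
    exact ne_top_of_le_ne_top (hc.image continuous_snd).measure_lt_top.ne this
  have hP : (volume.prod ν) K = ∫⁻ x, g x := Measure.prod_apply mK
  have hS0 : S ≠ 0 := by
    intro h
    apply hpos
    rw [hP]
    have : ∀ x, g x = 0 := fun x => le_antisymm (h ▸ le_iSup g x) bot_le
    simp [this]
  have hRS : volume (Prod.fst '' K) * S *
      ENNReal.ofReal (s ^ k * (1 - s) ^ Module.finrank ℝ W) ≤ (volume.prod ν) K := by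
    rw [hS, ENNReal.mul_iSup, ENNReal.iSup_mul]
    refine iSup_le fun x => ?_
    have := rs1 (volume : Measure (Fin k → ℝ)) ν hc hv x h0 h1
    rw [Module.finrank_fin_fun] at this
    exact this
  have niceg : Nice g := by
    refine ⟨mg, ⟨S, hSt, fun x => le_iSup g x⟩, Prod.fst '' K, hc.image continuous_fst, fun x hx => ?_⟩
    obtain ⟨w, hw⟩ := nonempty_of_measure_ne_zero hx
    exact ⟨_, hw, rfl⟩
  set D : ℝ≥0∞ := ENNReal.ofReal (Real.exp (-k)) * S⁻¹ with hD
  have hDt : D ≠ ⊤ := ENNReal.mul_ne_top ENNReal.ofReal_ne_top (ENNReal.inv_ne_top.2 hS0)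
  have niceh : Nice (M.indicator fun _ => D) := by
    refine ⟨measurable_const.indicator hM.measurableSet, ⟨D, hDt, fun x => indicator_le_self' (by simp) x⟩,
      M, hM, fun x hx => mem_of_indicator_ne_zero hx⟩
  have hsan := (sanP k).toC g _ niceg niceh (by
    intro z
    haveI : IsFiniteMeasure ((volume.prod ν).restrict K) := ⟨by
      rw [Measure.restrict_apply_univ]; exact hc.measure_lt_top⟩
    have hi : Integrable (fun p : (Fin k → ℝ) × W => p.1 ⬝ᵥ z) ((volume.prod ν).restrict K) := by
      refine integrable_of_compact hc ?_ (by fun_prop)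
      rw [Measure.restrict_apply mK.compl]; simp
    have := jensen_exp hi (hbar z)
    rw [Measure.restrict_apply_univ, hP] at this
    refine this.trans (le_of_eq ?_)
    rw [← lintegral_indicator mK, lintegral_prod _ (by
      refine (Measurable.indicator ?_ mK).aemeasurable
      fun_prop)]
    congr 1; ext x
    have e : ∀ w, K.indicator (fun p : (Fin k → ℝ) × W => ENNReal.ofReal (Real.exp (p.1 ⬝ᵥ z))) (x, w) =
        (Prod.mk x ⁻¹' K).indicator (fun _ => ENNReal.ofReal (Real.exp (x ⬝ᵥ z))) w := fun w => rfl
    simp only [e]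
    rw [lintegral_indicator (measurable_prodMk_left mK), setLIntegral_const, mul_comm]) (by
    intro x y
    by_cases hx : g x = 0
    · simp [hx]
    by_cases hy : y ∈ M
    · rw [indicator_of_mem hy, hD]
      obtain ⟨w, hw⟩ := nonempty_of_measure_ne_zero hx
      have hxy := hLM x ⟨_, hw, rfl⟩ y hy
      calc _ = (g x * S⁻¹) * ENNReal.ofReal (Real.exp (-k)) := by ring
        _ ≤ 1 * ENNReal.ofReal (Real.exp (-(x ⬝ᵥ y))) := by
            gcongr
            calc g x * S⁻¹ ≤ S * S⁻¹ := by gcongr; exact le_iSup g x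
              _ ≤ 1 := ENNReal.mul_inv_le_one S
        _ = _ := one_mul _
    · simp [hy])
  rw [← hP, lintegral_indicator hM.measurableSet, setLIntegral_const] at hsan
  have hE : ENNReal.ofReal (Real.exp k) * ENNReal.ofReal (Real.exp (-k)) = 1 := by
    rw [← ENNReal.ofReal_mul (Real.exp_pos _).le, ← Real.exp_add]; simp
  calc _ = ENNReal.ofReal (Real.exp k) * ((volume (Prod.fst '' K) * S *
      ENNReal.ofReal (s ^ k * (1 - s) ^ Module.finrank ℝ W)) * (D * volume M)) := by
        have : ∀ a b c e f : ℝ≥0∞, e * f = 1 → a * b * c = e * (a * S * c * (f * S⁻¹ * b)) := by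
          intro a b c e f h
          calc a * b * c = a * b * c * (e * f) * (S * S⁻¹) := by
                rw [h, ENNReal.mul_inv_cancel hS0 hSt]; simp
            _ = _ := by ring
        exact this _ _ _ _ _ hE
    _ ≤ ENNReal.ofReal (Real.exp k) * ((volume.prod ν) K * (D * volume M)) := by gcongr
    _ ≤ ENNReal.ofReal (Real.exp k) * ENNReal.ofReal (2 * Real.pi) ^ k := by gcongr
    _ = _ := by
        rw [ENNReal.ofReal_mul (p := (2 * Real.pi) ^ k) (by positivity), ENNReal.ofReal_pow (by positivity), mul_comm]



/-- a log-concave, lower semicontinuous function has a supporting exponential at the origin -/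
lemma support_exp {W : Type*} [NormedAddCommGroup W] [NormedSpace ℝ W] (ψ : W → ℝ≥0∞)
    (hlc : ∀ l : ℝ, 0 < l → l < 1 → ∀ w1 w2, ψ w1 ^ (1 - l) * ψ w2 ^ l ≤ ψ ((1 - l) • w1 + l • w2))
    (hlsc : ∀ a, IsOpen {w | a < ψ w}) (h0 : ψ 0 ≠ 0) (ht : ψ 0 ≠ ⊤) :
    ∃ ξ : W →L[ℝ] ℝ, ∀ w, ψ w ≤ ψ 0 * ENNReal.ofReal (Real.exp (ξ w)) := by
  set T : Set (W × ℝ) := {p | ENNReal.ofReal (Real.exp p.2) < ψ p.1} with hT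
  have hTo : IsOpen T := by
    have : T = ⋃ a : ℝ≥0∞, {w | a < ψ w} ×ˢ {r : ℝ | ENNReal.ofReal (Real.exp r) < a} := by
      ext ⟨w, r⟩
      simp only [hT, mem_setOf_eq, mem_iUnion, mem_prod]
      constructor
      · intro h
        obtain ⟨a, ha, hb⟩ := exists_between h
        exact ⟨a, hb, ha⟩
      · rintro ⟨a, hb, ha⟩
        exact ha.trans hb
    rw [this]
    refine isOpen_iUnion fun a => (hlsc a).prod ?_
    exact isOpen_lt (ENNReal.continuous_ofReal.comp Real.continuous_exp) continuous_const
  have hTc : Convex ℝ T := by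
    rw [convex_iff_forall_pos]
    rintro ⟨w1, r1⟩ h1 ⟨w2, r2⟩ h2 a b ha hb hab
    have ea : a = 1 - b := by linarith
    subst ea
    have hb1 : b < 1 := by linarith
    refine lt_of_lt_of_le ?_ (hlc b hb hb1 w1 w2)
    simp only [Prod.smul_mk, Prod.mk_add_mk, smul_eq_mul]
    have e : ENNReal.ofReal (Real.exp ((1 - b) * r1 + b * r2)) =
        ENNReal.ofReal (Real.exp r1) ^ (1 - b) * ENNReal.ofReal (Real.exp r2) ^ b := by
      rw [ENNReal.ofReal_rpow_of_pos (Real.exp_pos _), ENNReal.ofReal_rpow_of_pos (Real.exp_pos _),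
        ← ENNReal.ofReal_mul (by positivity), ← Real.exp_mul, ← Real.exp_mul, ← Real.exp_add]
      congr 2; ring
    rw [e]
    exact ENNReal.mul_lt_mul (ENNReal.rpow_lt_rpow h1 ha) (ENNReal.rpow_lt_rpow h2 hb)
  set r0 := Real.log (ψ 0).toReal with hr0
  have hp0 : 0 < (ψ 0).toReal := ENNReal.toReal_pos h0 ht
  have he0 : ENNReal.ofReal (Real.exp r0) = ψ 0 := by
    rw [hr0, Real.exp_log hp0, ENNReal.ofReal_toReal ht]
  have hn : ((0 : W), r0) ∉ T := by simp [hT, he0]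
  obtain ⟨f, hf⟩ := geometric_hahn_banach_open_point hTc hTo hn
  have hfs : ∀ w r, f (w, r) = f (w, 0) + r * f (0, 1) := by
    intro w r
    have : ((w, r) : W × ℝ) = (w, 0) + r • (0, 1) := by simp
    rw [this, map_add, map_smul, smul_eq_mul]
  have hβ : 0 < f (0, 1) := by
    have := hf (0, r0 - 1) (by
      change ENNReal.ofReal (Real.exp (r0 - 1)) < ψ 0
      rw [← he0]
      exact (ENNReal.ofReal_lt_ofReal_iff (Real.exp_pos _)).2 (Real.exp_lt_exp.2 (by linarith)))
    rw [hfs 0 (r0 - 1), hfs 0 r0] at this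
    linarith
  refine ⟨-(f (0, 1))⁻¹ • (f.comp (ContinuousLinearMap.inl ℝ W ℝ)), fun w => ?_⟩
  rw [← he0, ← ENNReal.ofReal_mul (Real.exp_pos _).le, ← Real.exp_add]
  by_contra hcon
  push Not at hcon
  have := hf (w, _) hcon
  rw [hfs w, hfs 0 r0] at this
  have e0 : f ((0 : W), (0 : ℝ)) = 0 := f.map_zero
  simp [e0] at this
  have hinv : f (0, 1) * (f (0, 1))⁻¹ = 1 := mul_inv_cancel₀ (ne_of_gt hβ)
  have h3 : f (w, 0) * (f (0, 1) * (f (0, 1))⁻¹) = f (w, 0) := by rw [hinv, mul_one]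
  revert this
  rw [imp_false, not_lt]
  linarith

open scoped Matrix in
lemma case2 {k : ℕ} {W : Type*} [NormedAddCommGroup W] [NormedSpace ℝ W] [MeasurableSpace W] [BorelSpace W]
    [FiniteDimensional ℝ W] (ν : Measure W) [ν.IsAddHaarMeasure] {N : Set ((Fin k → ℝ) × W)}
    (hc : IsCompact N) (hv : Convex ℝ N) (hint : (0 : (Fin k → ℝ) × W) ∈ interior N)
    (hbar : ∀ ℓ : ((Fin k → ℝ) × W) →L[ℝ] ℝ, ∫ p in N, ℓ p ∂(volume.prod ν) = 0)
    {L : Set (Fin k → ℝ)} (hL : IsCompact L) (hLM : ∀ x ∈ L, ∀ y, (y, (0 : W)) ∈ N → x ⬝ᵥ y ≤ k)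
    {s : ℝ} (h0 : 0 < s) (h1 : s < 1) :
    volume L * volume {y : Fin k → ℝ | (y, (0 : W)) ∈ N} *
      ENNReal.ofReal (s ^ k * (1 - s) ^ Module.finrank ℝ W) ≤
      ENNReal.ofReal ((2 * Real.pi) ^ k * Real.exp k) := by
  haveI : ProperSpace W := FiniteDimensional.proper ℝ W
  set μ : Measure ((Fin k → ℝ) × W) := volume.prod ν with hμ
  set N' := interior N with hN'
  have oN : IsOpen N' := isOpen_interior
  have mN : MeasurableSet N' := oN.measurableSet
  have hNN : N' ⊆ N := interior_subset
  have vN : Convex ℝ N' := hv.interior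
  have hae : N' =ᵐ[μ] N := by
    refine (ae_eq_set).2 ⟨by rw [diff_eq_empty.2 hNN]; simp, ?_⟩
    refine measure_mono_null (t := frontier N) ?_ (hv.addHaar_frontier μ)
    rw [frontier, hc.isClosed.closure_eq]
  obtain ⟨z, hz⟩ := sanP k (L.indicator fun _ => 1) ⟨measurable_const.indicator hL.measurableSet,
    ⟨1, by simp, fun x => indicator_le_self' (by simp) x⟩, L, hL, fun x hx => mem_of_indicator_ne_zero hx⟩
  set F : W → (Fin k → ℝ) → ℝ≥0∞ := fun w =>
    {y | (y, w) ∈ N'}.indicator (fun y => ENNReal.ofReal (Real.exp (y ⬝ᵥ z))) with hF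
  have oS : ∀ w, IsOpen {y : Fin k → ℝ | (y, w) ∈ N'} := fun w =>
    oN.preimage (f := fun y => (y, w)) (by fun_prop)
  have mF : ∀ w, Measurable (F w) := fun w =>
    Measurable.indicator (by fun_prop) (oS w).measurableSet
  have niceF : ∀ w, Nice (F w) := by
    intro w
    have : F w = fun y => ({y | (y, w) ∈ N'}.indicator (fun _ => (1 : ℝ≥0∞)) y) *
        ENNReal.ofReal (Real.exp (y ⬝ᵥ z)) := by
      ext y
      by_cases hy : (y, w) ∈ N' <;> simp [hF, indicator, hy]
    rw [this]
    refine Nice.mul_cont ⟨measurable_const.indicator (oS w).measurableSet,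
      ⟨1, by simp, fun x => indicator_le_self' (by simp) x⟩, Prod.fst '' N, hc.image continuous_fst,
      fun x hx => ⟨(x, w), hNN ?_, rfl⟩⟩ (by fun_prop)
    exact mem_of_indicator_ne_zero (s := {y | (y, w) ∈ N'}) hx
  set ψ : W → ℝ≥0∞ := fun w => ∫⁻ y, F w y with hψ
  have hlc : ∀ l : ℝ, 0 < l → l < 1 → ∀ w1 w2, ψ w1 ^ (1 - l) * ψ w2 ^ l ≤
      ψ ((1 - l) • w1 + l • w2) := by
    intro l hl0 hl1 w1 w2
    refine plp_pi k l hl0 hl1 _ _ _ (mF w1) (mF w2) (mF _) ?_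
    intro x y
    have hl2 : 0 < 1 - l := by linarith
    by_cases hx : (x, w1) ∈ N'
    · by_cases hy : (y, w2) ∈ N'
      · have hxy : ((1 - l) • x + l • y, (1 - l) • w1 + l • w2) ∈ N' :=
          vN hx hy hl2.le hl0.le (by ring)
        simp only [hF, indicator, mem_setOf_eq, hx, hy, hxy, if_true]
        rw [ENNReal.ofReal_rpow_of_pos (Real.exp_pos _), ENNReal.ofReal_rpow_of_pos (Real.exp_pos _),
          ← ENNReal.ofReal_mul (by positivity), ← Real.exp_mul, ← Real.exp_mul, ← Real.exp_add]
        refine le_of_eq ?_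
        congr 2
        simp only [add_dotProduct, smul_dotProduct, smul_eq_mul]; ring
      · have : F w2 y = 0 := by simp [hF, indicator, hy]
        rw [this, ENNReal.zero_rpow_of_pos hl0]; simp
    · have : F w1 x = 0 := by simp [hF, indicator, hx]
      rw [this, ENNReal.zero_rpow_of_pos hl2]; simp
  have hlsc : ∀ a, IsOpen {w | a < ψ w} := by
    intro a
    rw [← isClosed_compl_iff]
    refine IsSeqClosed.isClosed ?_
    intro u w hu hw
    have hu' : ∀ j, ψ (u j) ≤ a := fun j => not_lt.1 (hu j)
    change ¬ (a < ψ w)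
    rw [not_lt]
    calc ψ w ≤ ∫⁻ y, Filter.liminf (fun j => F (u j) y) Filter.atTop := by
          refine lintegral_mono fun y => ?_
          by_cases hy : (y, w) ∈ N'
          · refine Filter.le_liminf_of_le (by isBoundedDefault) ?_
            have hcv : Filter.Tendsto (fun j => (y, u j)) Filter.atTop (nhds (y, w)) :=
              tendsto_const_nhds.prodMk_nhds hw
            filter_upwards [hcv (oN.mem_nhds hy)] with j hj
            have hj' : (y, u j) ∈ N' := hj
            simp [hF, indicator, hy, hj']
          · have : F w y = 0 := by simp [hF, indicator, hy]
            rw [this]; exact bot_le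
      _ ≤ Filter.liminf (fun j => ψ (u j)) Filter.atTop := lintegral_liminf_le fun j => mF _
      _ ≤ Filter.liminf (fun _ : ℕ => a) Filter.atTop :=
          Filter.liminf_le_liminf (Filter.Eventually.of_forall hu')
      _ = a := Filter.liminf_const a
  have hψ0t : ψ 0 ≠ ⊤ := (niceF 0).lt_top.ne
  have hψ0 : ψ 0 ≠ 0 := by
    intro h
    rw [hψ] at h
    rw [lintegral_eq_zero_iff (mF 0)] at h
    have h2 : volume {y : Fin k → ℝ | (y, (0:W)) ∈ N'} = 0 := by
      refine measure_mono_null ?_ (ae_iff.1 h)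
      intro y hy
      have hy' : (y, (0:W)) ∈ N' := hy
      simp [hF, indicator, hy', Real.exp_pos]
    exact (oS 0).measure_ne_zero volume ⟨0, hint⟩ h2
  obtain ⟨ξ, hξ⟩ := support_exp ψ hlc hlsc hψ0 hψ0t
  -- Santalo
  have hsan := hz (fun y => F 0 y * ENNReal.ofReal (Real.exp (-k)))
    ((niceF 0).mul_cont (φ := fun _ => Real.exp (-k)) (by fun_prop)) (by
      intro x y
      by_cases hx : z + x ∈ L
      · by_cases hy : (y, (0:W)) ∈ N'
        · have := hLM _ hx y (hNN hy)
          simp only [hF, indicator, mem_setOf_eq, hx, hy, if_true, one_mul]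
          rw [← ENNReal.ofReal_mul (Real.exp_pos _).le, ← Real.exp_add]
          refine ENNReal.ofReal_le_ofReal (Real.exp_le_exp.2 ?_)
          rw [add_dotProduct, dotProduct_comm z y] at this
          linarith
        · simp [hF, indicator, hy]
      · simp [indicator, hx])
  rw [lintegral_mul_const _ (mF 0), lintegral_indicator hL.measurableSet, setLIntegral_one] at hsan
  -- Jensen
  have hP : μ N ≤ ψ 0 * ν (Prod.snd '' N) := by
    haveI : IsFiniteMeasure (μ.restrict N') := ⟨by
      rw [Measure.restrict_apply_univ]; exact (measure_mono hNN).trans_lt hc.measure_lt_top⟩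
    let ℓ : ((Fin k → ℝ) × W) →L[ℝ] ℝ := LinearMap.toContinuousLinearMap
          { toFun := fun p => p.1 ⬝ᵥ z - ξ p.2
            map_add' := fun x y => by simp [add_dotProduct]; ring
            map_smul' := fun a x => by simp; ring }
    have hi : Integrable (fun p => ℓ p) (μ.restrict N') := by
      refine integrable_of_compact hc ?_ (by fun_prop)
      rw [Measure.restrict_apply hc.measurableSet.compl]
      refine measure_mono_null (t := ∅) ?_ (by simp)
      rintro p ⟨h1, h2⟩
      exact h1 (hNN h2)
    have hj := jensen_exp hi (by rw [Measure.restrict_congr_set hae]; exact hbar ℓ)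
    rw [Measure.restrict_apply_univ, measure_congr hae] at hj
    refine hj.trans ?_
    rw [← lintegral_indicator mN, lintegral_prod_symm _ (by
      refine (Measurable.indicator ?_ mN).aemeasurable
      fun_prop)]
    calc _ = ∫⁻ w, ψ w * ENNReal.ofReal (Real.exp (-ξ w)) ∂ν := by
          congr 1; ext w
          rw [hψ, ← lintegral_mul_const _ (mF w)]
          congr 1; ext y
          by_cases hy : (y, w) ∈ N'
          · simp only [hF, indicator, mem_setOf_eq, hy, if_true]
            rw [← ENNReal.ofReal_mul (Real.exp_pos _).le, ← Real.exp_add]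
            rfl
          · simp [hF, indicator, hy]
      _ ≤ ∫⁻ w, (Prod.snd '' N).indicator (fun _ => ψ 0) w ∂ν := by
          refine lintegral_mono fun w => ?_
          by_cases hw : w ∈ Prod.snd '' N
          · rw [indicator_of_mem hw]
            calc _ ≤ (ψ 0 * ENNReal.ofReal (Real.exp (ξ w))) * ENNReal.ofReal (Real.exp (-ξ w)) := by
                  gcongr; exact hξ w
              _ = ψ 0 := by
                  rw [mul_assoc, ← ENNReal.ofReal_mul (Real.exp_pos _).le, ← Real.exp_add]; simp
          · have : ψ w = 0 := by
              have : F w = fun _ => 0 := by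
                ext y
                have hy : (y, w) ∉ N' := fun h => hw ⟨_, hNN h, rfl⟩
                simp [hF, indicator, hy]
              rw [hψ]; simp [this]
            rw [this]; simp
      _ = _ := by
          rw [lintegral_indicator (hc.image continuous_snd).measurableSet, setLIntegral_const]
  have hRS := rs2 (volume : Measure (Fin k → ℝ)) ν hc hv 0 h0 h1
  rw [Module.finrank_fin_fun] at hRS
  set V := ν (Prod.snd '' N) with hV
  have hVt : V ≠ ⊤ := (hc.image continuous_snd).measure_lt_top.ne
  have hV0 : V ≠ 0 := by
    have hsub : Prod.snd '' N' ⊆ Prod.snd '' N := image_mono hNN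
    have ho : IsOpen (Prod.snd '' N') := isOpenMap_snd _ oN
    intro h
    exact ho.measure_ne_zero ν ⟨0, 0, hint, rfl⟩ (measure_mono_null hsub h)
  set Q := volume {y : Fin k → ℝ | (y, (0 : W)) ∈ N}
  have key : Q * ENNReal.ofReal (s ^ k * (1 - s) ^ Module.finrank ℝ W) ≤ ψ 0 := by
    rw [← ENNReal.mul_le_mul_iff_left hV0 hVt]
    refine le_trans (le_of_eq ?_) (hRS.trans hP)
    rw [mul_comm (s ^ k)]; ring
  have hE : ENNReal.ofReal (Real.exp k) * ENNReal.ofReal (Real.exp (-k)) = 1 := by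
    rw [← ENNReal.ofReal_mul (Real.exp_pos _).le, ← Real.exp_add]; simp
  calc _ = volume L * (Q * ENNReal.ofReal (s ^ k * (1 - s) ^ Module.finrank ℝ W)) := by ring
    _ ≤ volume L * ψ 0 := by gcongr
    _ = ENNReal.ofReal (Real.exp k) * (volume L * (ψ 0 * ENNReal.ofReal (Real.exp (-k)))) := by
        calc volume L * ψ 0 = volume L * ψ 0 * (ENNReal.ofReal (Real.exp k) * ENNReal.ofReal (Real.exp (-k))) := by
              rw [hE, mul_one]
          _ = _ := by ring
    _ ≤ ENNReal.ofReal (Real.exp k) * ENNReal.ofReal (2 * Real.pi) ^ k := by gcongr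
    _ = _ := by
        rw [ENNReal.ofReal_mul (p := (2 * Real.pi) ^ k) (by positivity), ENNReal.ofReal_pow (by positivity), mul_comm]



lemma final_num {n k m : ℕ} (hk : 1 ≤ k) (hm : 1 ≤ m) (hn : n = k + m) {Lv Mv B c : ℝ≥0∞}
    (hc0 : c ≠ 0) (hct : c ≠ ⊤) (hB : ENNReal.ofReal ((2 / Real.sqrt k) ^ k) ≤ B)
    (h : Lv * (ENNReal.ofReal ((k:ℝ) ^ k) * Mv) * ENNReal.ofReal (((k:ℝ) / n) ^ k * (1 - (k:ℝ) / n) ^ m) ≤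
      ENNReal.ofReal ((2 * Real.pi) ^ k * Real.exp k)) :
    (c * Lv / (c * B)) ^ ((k:ℝ)⁻¹) * (c * Mv / (c * B)) ^ ((k:ℝ)⁻¹) ≤
      ENNReal.ofReal ((n:ℝ) / k * (Real.pi * Real.exp 1 ^ 2 / 2)) := by
  have hk0 : (0:ℝ) < k := by exact_mod_cast hk
  have hm0 : (0:ℝ) < m := by exact_mod_cast hm
  have hnr : (n:ℝ) = k + m := by exact_mod_cast hn
  have hn0 : (0:ℝ) < n := by rw [hnr]; positivity
  have hs : 1 - (k:ℝ) / n = m / n := by rw [hnr]; field_simp; ring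
  have hexp : Real.exp (-k) ≤ ((m:ℝ) / n) ^ m := by
    have h1 : (n:ℝ) / m ≤ Real.exp (k / m) := by
      have := Real.add_one_le_exp ((k:ℝ) / m)
      refine le_trans (le_of_eq ?_) this
      rw [hnr]; field_simp
    have h2 : ((n:ℝ) / m) ^ m ≤ Real.exp k := by
      calc ((n:ℝ) / m) ^ m ≤ Real.exp (k / m) ^ m := by gcongr
        _ = Real.exp k := by rw [← Real.exp_nat_mul]; congr 1; field_simp
    rw [Real.exp_neg, ← inv_div, inv_pow]
    exact inv_anti₀ (by positivity) h2
  have hBpos : B ≠ 0 := by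
    intro h0
    rw [h0] at hB
    have : 0 < ENNReal.ofReal ((2 / Real.sqrt k) ^ k) := ENNReal.ofReal_pos.2 (by positivity)
    exact absurd hB (not_le.2 this)
  rw [ENNReal.mul_div_mul_left _ _ hc0 hct, ENNReal.mul_div_mul_left _ _ hc0 hct,
    ← ENNReal.mul_rpow_of_nonneg _ _ (by positivity)]
  rw [ENNReal.rpow_inv_le_iff hk0, ENNReal.rpow_natCast, ← ENNReal.ofReal_pow (by positivity)]
  rw [hs] at h
  set q := ENNReal.ofReal ((k:ℝ) ^ k * (((k:ℝ) / n) ^ k * ((m:ℝ) / n) ^ m)) with hq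
  have h' : Lv * Mv * q ≤ ENNReal.ofReal ((2 * Real.pi) ^ k * Real.exp k) := by
    refine le_trans (le_of_eq ?_) h
    rw [hq, ENNReal.ofReal_mul (p := (k:ℝ) ^ k) (by positivity)]; ring
  have hX : Lv * Mv ≤ ENNReal.ofReal ((2 * Real.pi) ^ k * Real.exp k /
      ((k:ℝ) ^ k * (((k:ℝ) / n) ^ k * ((m:ℝ) / n) ^ m))) := by
    rw [ENNReal.ofReal_div_of_pos (by positivity)]
    rw [ENNReal.le_div_iff_mul_le (Or.inl (ENNReal.ofReal_pos.2 (by positivity)).ne')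
      (Or.inl ENNReal.ofReal_ne_top)]
    exact h'
  have hB2 : ENNReal.ofReal ((4 / (k:ℝ)) ^ k) ≤ B * B := by
    refine le_trans (le_of_eq ?_) (mul_le_mul' hB hB)
    rw [← ENNReal.ofReal_mul (by positivity), ← mul_pow]
    congr 2
    rw [div_mul_div_comm, Real.mul_self_sqrt hk0.le]; norm_num
  calc Lv / B * (Mv / B) = Lv * Mv * (B⁻¹ * B⁻¹) := by
        rw [div_eq_mul_inv, div_eq_mul_inv]; ring
    _ = Lv * Mv / (B * B) := by
        rw [div_eq_mul_inv, ENNReal.mul_inv (Or.inl hBpos) (Or.inr hBpos)]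
    _ ≤ ENNReal.ofReal ((2 * Real.pi) ^ k * Real.exp k /
      ((k:ℝ) ^ k * (((k:ℝ) / n) ^ k * ((m:ℝ) / n) ^ m))) / ENNReal.ofReal ((4 / (k:ℝ)) ^ k) :=
        ENNReal.div_le_div hX hB2
    _ = ENNReal.ofReal ((2 * Real.pi) ^ k * Real.exp k /
      ((k:ℝ) ^ k * (((k:ℝ) / n) ^ k * ((m:ℝ) / n) ^ m)) / (4 / (k:ℝ)) ^ k) := by
        rw [ENNReal.ofReal_div_of_pos (y := (4 / (k:ℝ)) ^ k) (by positivity)]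
    _ ≤ _ := by
        refine ENNReal.ofReal_le_ofReal ?_
        calc _ ≤ (2 * Real.pi) ^ k * Real.exp k /
            ((k:ℝ) ^ k * (((k:ℝ) / n) ^ k * Real.exp (-k))) / (4 / (k:ℝ)) ^ k := by gcongr
          _ = _ := by
            have e1 : Real.exp (k:ℝ) = Real.exp 1 ^ k := by rw [← Real.exp_nat_mul, mul_one]
            rw [Real.exp_neg, e1, ← inv_pow, ← mul_pow, ← mul_pow, ← mul_pow, ← div_pow, ← div_pow]
            congr 1
            field_simp
            norm_num

lemma haus (k : ℕ) : ∃ c : ℝ≥0∞, c ≠ 0 ∧ c ≠ ⊤ ∧ ∀ (n : ℕ) (ι : EuclideanSpace ℝ (Fin k) →ₗᵢ[ℝ] EuclideanSpace ℝ (Fin n))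
    (A : Set (EuclideanSpace ℝ (Fin n))), A ⊆ range ι →
    μH[(k:ℝ)] A = c * volume ((fun v : Fin k → ℝ => ι (WithLp.toLp 2 v)) ⁻¹' A) := by
  let e : EuclideanSpace ℝ (Fin k) ≃L[ℝ] (Fin k → ℝ) := EuclideanSpace.equiv (Fin k) ℝ
  have hfr : Module.finrank ℝ (EuclideanSpace ℝ (Fin k)) = k := by simp
  have h1 : (μH[(k:ℝ)] : Measure (EuclideanSpace ℝ (Fin k))).IsAddHaarMeasure := by
    have := MeasureTheory.isAddHaarMeasure_hausdorffMeasure (E := EuclideanSpace ℝ (Fin k))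
    rwa [hfr] at this
  have h2 : ((μH[(k:ℝ)] : Measure (EuclideanSpace ℝ (Fin k))).map e).IsAddHaarMeasure :=
    e.isAddHaarMeasure_map _
  have h3 := Measure.isAddLeftInvariant_eq_smul ((μH[(k:ℝ)] : Measure (EuclideanSpace ℝ (Fin k))).map e)
    (volume : Measure (Fin k → ℝ))
  refine ⟨Measure.addHaarScalarFactor ((μH[(k:ℝ)] : Measure (EuclideanSpace ℝ (Fin k))).map e)
    (volume : Measure (Fin k → ℝ)), ?_, ENNReal.coe_ne_top, ?_⟩
  · have := Measure.addHaarScalarFactor_pos_of_isAddHaarMeasure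
      ((μH[(k:ℝ)] : Measure (EuclideanSpace ℝ (Fin k))).map e) (volume : Measure (Fin k → ℝ))
    exact_mod_cast this.ne'
  · intro n ι A hA
    have e1 : A = ι '' (ι ⁻¹' A) := by rw [image_preimage_eq_of_subset hA]
    have e2 : μH[(k:ℝ)] A = μH[(k:ℝ)] (ι ⁻¹' A) := by
      conv_lhs => rw [e1]
      exact ι.isometry.hausdorffMeasure_image (Or.inl (by positivity)) _
    have e3 : μH[(k:ℝ)] (ι ⁻¹' A) = ((μH[(k:ℝ)] : Measure (EuclideanSpace ℝ (Fin k))).map e)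
        (e.symm ⁻¹' (ι ⁻¹' A)) := by
      have := (e.toHomeomorph.toMeasurableEquiv).map_apply (μ := μH[(k:ℝ)]) (e.symm ⁻¹' (ι ⁻¹' A))
      refine Eq.trans ?_ this.symm
      congr 1
    rw [e2, e3]
    refine (congrArg (fun τ : Measure (Fin k → ℝ) => τ (e.symm ⁻¹' (ι ⁻¹' A))) h3).trans ?_
    rfl

lemma polar_compact {n : ℕ} {K : Set (EuclideanSpace ℝ (Fin n))} (h0 : (0 : EuclideanSpace ℝ (Fin n)) ∈ interior K) :
    IsCompact (polarBody K) := by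
  refine Metric.isCompact_of_isClosed_isBounded ?_ ?_
  · have : polarBody K = ⋂ y ∈ K, {x | ⟪x, y⟫ ≤ 1} := by
      ext x; simp [polarBody]
    rw [this]
    exact isClosed_biInter fun y _ => isClosed_le (by fun_prop) continuous_const
  · obtain ⟨r, hr, hrK⟩ := Metric.isOpen_iff.1 isOpen_interior 0 h0
    refine (Metric.isBounded_closedBall (x := (0 : EuclideanSpace ℝ (Fin n))) (r := 2 / r)).subset ?_
    intro x hx
    rw [mem_closedBall_zero_iff]
    by_cases hx0 : x = 0
    · rw [hx0, norm_zero]; positivity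
    have hn : 0 < ‖x‖ := norm_pos_iff.2 hx0
    have hy : (r / 2 / ‖x‖) • x ∈ K := by
      refine interior_subset (hrK ?_)
      rw [mem_ball_zero_iff, norm_smul, Real.norm_eq_abs, abs_of_pos (by positivity)]
      rw [div_mul_cancel₀ _ hn.ne']; linarith
    have := hx _ hy
    rw [inner_smul_right, real_inner_self_eq_norm_sq] at this
    have e : r / 2 / ‖x‖ * ‖x‖ ^ 2 = r / 2 * ‖x‖ := by field_simp
    rw [e] at this
    rw [le_div_iff₀ hr]; linarith

lemma polar_convex {n : ℕ} (K : Set (EuclideanSpace ℝ (Fin n))) : Convex ℝ (polarBody K) := by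
  intro x hx y hy a b ha hb hab u hu
  rw [inner_add_left, real_inner_smul_left, real_inner_smul_left]
  have h1 := mul_le_mul_of_nonneg_left (hx u hu) ha
  have h2 := mul_le_mul_of_nonneg_left (hy u hu) hb
  linarith

lemma polar_interior {n : ℕ} {K : Set (EuclideanSpace ℝ (Fin n))} (hK : IsCompact K) :
    (0 : EuclideanSpace ℝ (Fin n)) ∈ interior (polarBody K) := by
  obtain ⟨R, hR⟩ := hK.isBounded.exists_norm_le
  rw [mem_interior_iff_mem_nhds, Metric.mem_nhds_iff]
  refine ⟨1 / (|R| + 1), by positivity, fun x hx y hy => ?_⟩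
  rw [mem_ball_zero_iff, lt_div_iff₀ (by positivity)] at hx
  have h1 := real_inner_le_norm x y
  have h2 : ‖y‖ ≤ |R| + 1 := (hR y hy).trans (by linarith [le_abs_self R])
  have h3 := mul_le_mul_of_nonneg_left h2 (norm_nonneg x)
  linarith

open scoped Matrix in
lemma transfer {n k : ℕ} (H : Submodule ℝ (EuclideanSpace ℝ (Fin n))) (hH : Module.finrank ℝ H = k) :
    ∃ (ι : EuclideanSpace ℝ (Fin k) →ₗᵢ[ℝ] EuclideanSpace ℝ (Fin n))
      (Θ : EuclideanSpace ℝ (Fin n) ≃L[ℝ] (Fin k → ℝ) × Hᗮ), range ι = H ∧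
      (∀ x, ι (WithLp.toLp 2 (Θ x).1) = (Submodule.orthogonalProjectionOnto H x : EuclideanSpace ℝ (Fin n))) ∧
      (∀ v : Fin k → ℝ, Θ (ι (WithLp.toLp 2 v)) = (v, 0)) ∧
      (∀ (v : Fin k → ℝ) x, ⟪ι (WithLp.toLp 2 v), x⟫ = (Θ x).1 ⬝ᵥ v) := by
  let b : OrthonormalBasis (Fin k) ℝ H := (stdOrthonormalBasis ℝ H).reindex (finCongr hH)
  let ι : EuclideanSpace ℝ (Fin k) →ₗᵢ[ℝ] EuclideanSpace ℝ (Fin n) :=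
    H.subtypeₗᵢ.comp b.repr.symm.toLinearIsometry
  let Θ : EuclideanSpace ℝ (Fin n) ≃L[ℝ] (Fin k → ℝ) × Hᗮ :=
    (H.orthogonalDecomposition.toContinuousLinearEquiv.trans
      (WithLp.prodContinuousLinearEquiv 2 ℝ H Hᗮ)).trans
      (ContinuousLinearEquiv.prodCongr (b.repr.toContinuousLinearEquiv.trans (EuclideanSpace.equiv (Fin k) ℝ))
        (ContinuousLinearEquiv.refl ℝ Hᗮ))
  have hι : ∀ u, ι u = (b.repr.symm u : H) := fun u => rfl
  have hΘ1 : ∀ x, (Θ x).1 = WithLp.ofLp (b.repr (Submodule.orthogonalProjectionOnto H x)) := by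
    intro x; simp [Θ]; rfl
  have hΘ2 : ∀ x, (Θ x).2 = Submodule.orthogonalProjectionOnto Hᗮ x := by
    intro x; simp [Θ]
  have p1 : ∀ x, ι (WithLp.toLp 2 (Θ x).1) =
      (Submodule.orthogonalProjectionOnto H x : EuclideanSpace ℝ (Fin n)) := by
    intro x; rw [hι, hΘ1]; simp
  refine ⟨ι, Θ, ?_, p1, ?_, ?_⟩
  · ext x
    constructor
    · rintro ⟨u, rfl⟩
      rw [hι]; exact Subtype.coe_prop _
    · intro hx
      exact ⟨b.repr ⟨x, hx⟩, by rw [hι]; simp⟩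
  · intro v
    refine Prod.ext ?_ ?_
    · rw [hΘ1, hι]; simp
    · rw [hΘ2, hι]
      simp
  · intro v x
    have h1 : ⟪ι (WithLp.toLp 2 v), x⟫ = ⟪ι (WithLp.toLp 2 v), ι (WithLp.toLp 2 (Θ x).1)⟫ := by
      rw [p1, hι]
      exact (Submodule.inner_orthogonalProjectionOnto_eq_of_mem_left (b.repr.symm (WithLp.toLp 2 v)) x).symm
    rw [h1, ι.inner_map_map]
    simp [EuclideanSpace.inner_eq_star_dotProduct]

open scoped Matrix in
lemma core {n k m : ℕ} (hk : 1 ≤ k) (hm : 1 ≤ m) (hn : n = k + m) {K : Set (EuclideanSpace ℝ (Fin n))}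
    (hc : IsCompact K) (hv : Convex ℝ K) (h0 : (0 : EuclideanSpace ℝ (Fin n)) ∈ interior K)
    (hbar : (∫ x in K, x) = 0 ∨ (∫ x in polarBody K, x) = 0)
    (H : Submodule ℝ (EuclideanSpace ℝ (Fin n))) (hH : Module.finrank ℝ H = k) :
    vrad k H (projSet H K) * vrad k H (polarBody K ∩ (H : Set _)) ≤
      ENNReal.ofReal ((n:ℝ) / k * (Real.pi * Real.exp 1 ^ 2 / 2)) := by
  obtain ⟨ι, Θ, hr, h1, h2, h3⟩ := transfer H hH
  obtain ⟨c, hc0, hct, hh⟩ := haus k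
  have hk0 : (0:ℝ) < k := by exact_mod_cast hk
  have hm0 : (0:ℝ) < m := by exact_mod_cast hm
  have hnr : (n:ℝ) = k + m := by exact_mod_cast hn
  have hfW : Module.finrank ℝ Hᗮ = m := by
    have := H.finrank_add_finrank_orthogonal
    rw [hH, finrank_euclideanSpace_fin] at this
    omega
  have a1 : projSet H K ⊆ range ι := by
    rw [hr]; rintro _ ⟨x, _, rfl⟩; exact Subtype.coe_prop _
  have a2 : polarBody K ∩ (H : Set _) ⊆ range ι := by rw [hr]; exact inter_subset_right
  have a3 : closedBall (0 : EuclideanSpace ℝ (Fin n)) 1 ∩ (H : Set _) ⊆ range ι := by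
    rw [hr]; exact inter_subset_right
  rw [vrad, vrad, hh n ι _ a1, hh n ι _ a2, hh n ι _ a3]
  set τ : (Fin k → ℝ) → EuclideanSpace ℝ (Fin n) := fun v => ι (WithLp.toLp 2 v) with hτ
  have hτH : ∀ v, τ v ∈ H := fun v => by
    have : τ v ∈ range ι := ⟨_, rfl⟩
    rw [hr] at this; exact this
  have hΘi : ∀ v x, (Θ x).1 = v ↔ τ v = (Submodule.orthogonalProjectionOnto H x : EuclideanSpace ℝ (Fin n)) := by
    intro v x
    rw [← h1 x]
    constructor
    · rintro rfl; rfl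
    · intro h
      have := ι.injective h
      exact (congrArg WithLp.ofLp this).symm
  have eL : ∀ A, τ ⁻¹' (projSet H A) = Prod.fst '' (Θ '' A) := by
    intro A
    ext v
    constructor
    · rintro ⟨x, hx, hxv⟩
      exact ⟨Θ x, ⟨x, hx, rfl⟩, (hΘi v x).2 hxv.symm⟩
    · rintro ⟨_, ⟨x, hx, rfl⟩, rfl⟩
      exact ⟨x, hx, (h1 x).symm⟩
  have eM : τ ⁻¹' (polarBody K ∩ (H : Set _)) = {y | (y, (0 : Hᗮ)) ∈ Θ '' polarBody K} := by
    ext v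
    constructor
    · rintro ⟨hv1, _⟩
      exact ⟨τ v, hv1, h2 v⟩
    · rintro ⟨x, hx, hxv⟩
      rw [← h2 v] at hxv
      have := Θ.injective hxv
      rw [this] at hx
      exact ⟨hx, hτH v⟩
  have hcP := polar_compact h0
  have hvP := polar_convex K
  have hiP := polar_interior hc
  have cL : IsCompact (τ ⁻¹' (projSet H K)) := by
    rw [eL]; exact (hc.image Θ.continuous).image continuous_fst
  have cM : IsCompact (τ ⁻¹' (polarBody K ∩ (H : Set _))) := by
    have : τ ⁻¹' (polarBody K ∩ (H : Set _)) = Prod.fst '' ((Θ '' polarBody K) ∩ {p | p.2 = 0}) := by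
      rw [eM]; ext v
      constructor
      · intro h; exact ⟨_, ⟨h, rfl⟩, rfl⟩
      · rintro ⟨⟨a, b⟩, ⟨hp, hb⟩, rfl⟩
        have hb' : b = 0 := hb
        subst hb'
        exact hp
    rw [this]
    exact ((hcP.image Θ.continuous).inter_right (isClosed_eq continuous_snd continuous_const)).image
      continuous_fst
  have hdot : ∀ x ∈ τ ⁻¹' (projSet H K), ∀ y ∈ τ ⁻¹' (polarBody K ∩ (H : Set _)), x ⬝ᵥ y ≤ 1 := by
    intro x hx y hy
    rw [eL] at hx
    obtain ⟨_, ⟨a, ha, rfl⟩, rfl⟩ := hx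
    rw [← h3]
    exact hy.1 a ha
  -- barycentre transfer
  have hbt : ∀ A : Set (EuclideanSpace ℝ (Fin n)), IsCompact A → (∫ x in A, x) = 0 →
      ∀ ℓ : ((Fin k → ℝ) × Hᗮ) →L[ℝ] ℝ, ∫ p in Θ '' A, ℓ p ∂(volume.prod volume) = 0 := by
    intro A hA hA0 ℓ
    have i1 : ((volume : Measure (EuclideanSpace ℝ (Fin n))).map Θ).IsAddHaarMeasure :=
      Θ.isAddHaarMeasure_map _
    have i2 := Measure.isAddLeftInvariant_eq_smul
      ((volume : Measure (Fin k → ℝ)).prod (volume : Measure Hᗮ))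
      ((volume : Measure (EuclideanSpace ℝ (Fin n))).map Θ)
    have i3 : ∫ p in Θ '' A, ℓ p ∂((volume : Measure (EuclideanSpace ℝ (Fin n))).map Θ) = 0 := by
      have := setIntegral_map_equiv (μ := (volume : Measure (EuclideanSpace ℝ (Fin n))))
        Θ.toHomeomorph.toMeasurableEquiv (fun p => ℓ p) (Θ '' A)
      refine this.trans ?_
      have e : Θ.toHomeomorph.toMeasurableEquiv ⁻¹' (Θ '' A) = A :=
        preimage_image_eq _ Θ.injective
      rw [e]
      have hint : Integrable (fun x : EuclideanSpace ℝ (Fin n) => x) (volume.restrict A) :=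
        continuous_id.continuousOn.integrableOn_compact hA
      have := (ℓ.comp (Θ : EuclideanSpace ℝ (Fin n) →L[ℝ] (Fin k → ℝ) × Hᗮ)).integral_comp_comm hint
      rw [hA0, map_zero] at this
      exact this
    rw [i2, Measure.restrict_smul, integral_smul_nnreal_measure, i3, smul_zero]
  -- ball
  have hB : ENNReal.ofReal ((2 / Real.sqrt k) ^ k) ≤
      volume (τ ⁻¹' (closedBall (0 : EuclideanSpace ℝ (Fin n)) 1 ∩ (H : Set _))) := by
    have hv := Real.volume_pi_closedBall (0 : Fin k → ℝ) (r := 1 / Real.sqrt k) (by positivity)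
    rw [Fintype.card_fin] at hv
    have e : (2 / Real.sqrt k) = 2 * (1 / Real.sqrt k) := by ring
    rw [e, ← hv]
    refine measure_mono fun v hvv => ⟨?_, hτH v⟩
    rw [mem_closedBall_zero_iff] at hvv ⊢
    rw [hτ]
    simp only [ι.norm_map]
    rw [EuclideanSpace.norm_eq, Real.sqrt_le_iff, one_pow]
    refine ⟨zero_le_one, ?_⟩
    calc ∑ i, ‖v i‖ ^ 2 ≤ ∑ _i : Fin k, (1 / Real.sqrt k) ^ 2 := by
          refine Finset.sum_le_sum fun i _ => ?_
          have := (norm_le_pi_norm v i).trans hvv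
          gcongr
      _ = 1 := by
          rw [Finset.sum_const, div_pow, Real.sq_sqrt hk0.le]
          simp [hk0.ne']
  have hks : ∀ S : Set (Fin k → ℝ), volume ((k:ℝ) • S) = ENNReal.ofReal ((k:ℝ) ^ k) * volume S := by
    intro S
    rw [Measure.addHaar_smul, Module.finrank_fin_fun, abs_of_pos (by positivity)]
  have hs0 : 0 < (k:ℝ) / n := by rw [hnr]; positivity
  have hs1 : (k:ℝ) / n < 1 := by rw [hnr, div_lt_one (by positivity)]; linarith
  refine final_num hk hm hn hc0 hct hB ?_
  rcases hbar with hbar | hbar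
  · rw [← hks, eL]
    have := case1 (k := k) (volume : Measure Hᗮ) (K := Θ '' K) (hc.image Θ.continuous)
      (hv.is_linear_image Θ.isLinear) (by
        intro hz
        have ho : IsOpen (Θ '' interior K) := Θ.toHomeomorph.isOpenMap _ isOpen_interior
        exact ho.measure_ne_zero _ ⟨_, _, h0, rfl⟩ (measure_mono_null (image_mono interior_subset) hz))
      (by
        intro z
        let ℓ : ((Fin k → ℝ) × Hᗮ) →L[ℝ] ℝ := LinearMap.toContinuousLinearMap
          { toFun := fun p => p.1 ⬝ᵥ z
            map_add' := fun x y => by simp [add_dotProduct]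
            map_smul' := fun a x => by simp }
        exact hbt K hc hbar ℓ)
      (M := (k:ℝ) • τ ⁻¹' (polarBody K ∩ (H : Set _))) (cM.smul _) (by
        rintro x hx _ ⟨y, hy, rfl⟩
        rw [← eL] at hx
        have := hdot x hx y hy
        simp only [dotProduct_smul, smul_eq_mul]
        nlinarith) hs0 hs1
    rw [hfW] at this
    exact this
  · have := case2 (k := k) (volume : Measure Hᗮ) (N := Θ '' polarBody K) (hcP.image Θ.continuous)
      (hvP.is_linear_image Θ.isLinear) (by
        have ho : IsOpen (Θ '' interior (polarBody K)) := Θ.toHomeomorph.isOpenMap _ isOpen_interior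
        exact interior_maximal (image_mono interior_subset) ho ⟨0, hiP, map_zero Θ⟩)
      (hbt _ hcP hbar) (L := (k:ℝ) • τ ⁻¹' (projSet H K)) (cL.smul _) (by
        rintro _ ⟨x, hx, rfl⟩ y hy
        have := hdot x hx y (by rw [eM]; exact hy)
        simp only [smul_dotProduct, smul_eq_mul]
        nlinarith) hs0 hs1
    rw [hfW, hks, ← eM] at this
    refine le_trans (le_of_eq ?_) this
    ring

/-- Theorem (Blaschke–Santaló type inequality for projections and sections):
`vrad(P_H(K)) · vrad(K° ∩ H) ≤ (n/k)·C·(log n)³`. -/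
theorem stmt2 :
    ∃ C : ℝ, 0 < C ∧ ∀ (n : ℕ), 2 ≤ n →
      ∀ K : Set (EuclideanSpace ℝ (Fin n)),
        IsCompact K → Convex ℝ K → (0 : EuclideanSpace ℝ (Fin n)) ∈ interior K →
        ((∫ x in K, x) = 0 ∨ (∫ x in polarBody K, x) = 0) →
        ∀ k : ℕ, 1 ≤ k → k ≤ n - 1 →
          ∀ H : Submodule ℝ (EuclideanSpace ℝ (Fin n)), Module.finrank ℝ H = k →
            vrad k H (projSet H K) * vrad k H (polarBody K ∩ (H : Set _)) ≤
              ENNReal.ofReal (((n : ℝ) / k) * C * (Real.log n) ^ 3) := by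
  have hl2 : 0 < Real.log 2 := Real.log_pos (by norm_num)
  refine ⟨Real.pi * Real.exp 1 ^ 2 / 2 / Real.log 2 ^ 3, by positivity, ?_⟩
  intro n hn K hc hv h0 hbar k hk hkn H hH
  refine (core (m := n - k) hk (by omega) (by omega) hc hv h0 hbar H hH).trans
    (ENNReal.ofReal_le_ofReal ?_)
  have hlog : Real.log 2 ≤ Real.log n := Real.log_le_log (by norm_num) (by exact_mod_cast hn)
  have h3 : Real.log 2 ^ 3 ≤ Real.log n ^ 3 := by gcongr
  rw [mul_assoc]
  refine mul_le_mul_of_nonneg_left ?_ (by positivity)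
  rw [div_mul_eq_mul_div, le_div_iff₀ (by positivity)]
  exact mul_le_mul_of_nonneg_left h3 (by positivity)
end
end

section
/- There is an absolute constant C > 1 with the following property. Let f : ℝ^n → [0,∞) be a geometric log-concave integrable function (n ≥ 2). Then for every 1 ≤ k ≤ n−1 and every k-dimensional linear subspace H of ℝ^n, (∫_H Δ_out f(x) dx)^{1/k} ≤ C·(n/k)²·(log n)^3 · (∫_H Δ_in f(x) dx)^{1/k}, where the integrals are with respect to k-dimensional Lebesgue measure on H. -/
open MeasureTheory Metric Set
open scoped ENNReal RealInnerProductSpace Pointwise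

noncomputable section

/-- `f` is a geometric log-concave integrable function: nonnegative, log-concave, centered,
attaining its maximum at the origin, with positive finite integral. -/
structure IsGeomLogConcave {n : ℕ} (f : EuclideanSpace ℝ (Fin n) → ℝ) : Prop where
  nonneg : ∀ x, 0 ≤ f x
  logConcave : ∀ x y : EuclideanSpace ℝ (Fin n), ∀ a b : ℝ, 0 ≤ a → 0 ≤ b → a + b = 1 →
    f x ^ a * f y ^ b ≤ f (a • x + b • y)
  centered : (∫ x, f x • x) = (0 : EuclideanSpace ℝ (Fin n))
  maxAtZero : ∀ x, f x ≤ f 0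
  integrable : Integrable f
  integral_pos : 0 < ∫ x, f x

/-- `Δ_out f (x) = sup { √(f x₁ · f (−x₂)) : x = (x₁ + x₂)/2 }`. -/
def deltaOut {n : ℕ} (f : EuclideanSpace ℝ (Fin n) → ℝ) (x : EuclideanSpace ℝ (Fin n)) : ℝ :=
  sSup {t : ℝ | ∃ x₁ x₂, x = (2⁻¹ : ℝ) • (x₁ + x₂) ∧ t = Real.sqrt (f x₁ * f (-x₂))}

/-- `Δ_in f (x) = min (f x) (f (−x))`. -/
def deltaIn {n : ℕ} (f : EuclideanSpace ℝ (Fin n) → ℝ) (x : EuclideanSpace ℝ (Fin n)) : ℝ :=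
  min (f x) (f (-x))

lemma bm1 (A B C : Set ℝ) (hA : MeasurableSet A) (hB : MeasurableSet B) (hAn : A.Nonempty)
    (hBn : B.Nonempty) (hC : ∀ x ∈ A, ∀ y ∈ B, x + y ∈ C) :
    volume A + volume B ≤ volume C := by
  have key : ∀ K ⊆ A, IsCompact K → ∀ L ⊆ B, IsCompact L → volume K + volume L ≤ volume C := by
    have key0 : ∀ K ⊆ A, IsCompact K → K.Nonempty → ∀ L ⊆ B, IsCompact L → L.Nonempty →
        volume K + volume L ≤ volume C := by
      intro K hKA hK hKn L hLB hL hLn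
      set s := sSup K
      set i := sInf L
      have hs : s ∈ K := hK.sSup_mem hKn
      have hi : i ∈ L := hL.sInf_mem hLn
      have h1 : volume ((fun x => x + i) '' K) = volume K := by simp
      have h2 : volume ((fun x => s + x) '' L) = volume L := by simp
      have hd : AEDisjoint volume ((fun x => x + i) '' K) ((fun x => s + x) '' L) := by
        refine measure_mono_null (t := {s + i}) ?_ (by simp)
        rintro z ⟨⟨x, hx, rfl⟩, ⟨y, hy, hxy⟩⟩
        have hx' : x ≤ s := le_csSup hK.bddAbove hx
        have hy' : i ≤ y := csInf_le hL.bddBelow hy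
        simp only at hxy
        simp only [mem_singleton_iff]
        linarith
      rw [← h1, ← h2, ← measure_union₀ _ hd]
      · refine measure_mono ?_
        rintro z (⟨x, hx, rfl⟩ | ⟨y, hy, rfl⟩)
        · exact hC _ (hKA hx) _ (hLB hi)
        · exact hC _ (hKA hs) _ (hLB hy)
      · exact (hL.image (by fun_prop)).measurableSet.nullMeasurableSet
    obtain ⟨x0, hx0⟩ := hAn
    obtain ⟨y0, hy0⟩ := hBn
    intro K hKA hK L hLB hL
    calc volume K + volume L ≤ volume (K ∪ {x0}) + volume (L ∪ {y0}) := by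
          gcongr <;> simp
      _ ≤ _ := key0 _ (by simp [insert_subset_iff, *]) (hK.union isCompact_singleton) (by simp) _
          (by simp [insert_subset_iff, *]) (hL.union isCompact_singleton) (by simp)
  rw [hA.measure_eq_iSup_isCompact, hB.measure_eq_iSup_isCompact]
  have hne : ∀ T : Set ℝ, Nonempty {K // K ⊆ T ∧ IsCompact K} := fun T => ⟨∅, by simp⟩
  have e1 : ∀ T : Set ℝ, (⨆ K, ⨆ (_ : K ⊆ T), ⨆ (_ : IsCompact K), volume K)
      = ⨆ K : {K // K ⊆ T ∧ IsCompact K}, volume K.1 := by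
    intro T
    simp only [iSup_subtype, iSup_and]
  rw [e1, e1]
  rw [ENNReal.iSup_add]
  refine iSup_le fun K => ?_
  rw [ENNReal.add_iSup]
  exact iSup_le fun L => key _ K.2.1 K.2.2 _ L.2.1 L.2.2

lemma pl1_norm (a b : ℝ) (ha : 0 < a) (hb : 0 < b) (hab : a + b = 1) (f g h : ℝ → ℝ)
    (hf : Measurable f) (hg : Measurable g) (hh : Measurable h)
    (f0 : ∀ x, 0 ≤ f x) (g0 : ∀ x, 0 ≤ g x) (h0 : ∀ x, 0 ≤ h x)
    (f1 : ∀ x, f x ≤ 1) (g1 : ∀ x, g x ≤ 1)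
    (fs : ∀ t < 1, ∃ x, t < f x) (gs : ∀ t < 1, ∃ x, t < g x)
    (H : ∀ x y, f x ^ a * g y ^ b ≤ h (a * x + b * y)) :
    ENNReal.ofReal a * (∫⁻ x, ENNReal.ofReal (f x)) + ENNReal.ofReal b * (∫⁻ x, ENNReal.ofReal (g x))
      ≤ ∫⁻ x, ENNReal.ofReal (h x) := by
  rw [lintegral_eq_lintegral_meas_lt _ (.of_forall f0) hf.aemeasurable,
    lintegral_eq_lintegral_meas_lt _ (.of_forall g0) hg.aemeasurable,
    lintegral_eq_lintegral_meas_lt _ (.of_forall h0) hh.aemeasurable]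
  have anti : ∀ u : ℝ → ℝ, Antitone fun t => volume {x | t < u x} := by
    intro u s t hst
    exact measure_mono fun x hx => lt_of_le_of_lt hst hx
  rw [← lintegral_const_mul _ (anti f).measurable, ← lintegral_const_mul _ (anti g).measurable,
    ← lintegral_add_left ((anti f).measurable.const_mul _)]
  refine setLIntegral_mono' measurableSet_Ioi fun t ht => ?_
  have ht : 0 < t := ht
  rcases lt_or_ge t 1 with h1 | h1
  · have := bm1 (a • {x | t < f x}) (b • {x | t < g x}) {x | t < h x}
      ((measurableSet_lt measurable_const hf).const_smul₀ a)
      ((measurableSet_lt measurable_const hg).const_smul₀ b)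
      (Set.Nonempty.smul_set (fs t h1)) (Set.Nonempty.smul_set (gs t h1)) ?_
    · simpa [Measure.addHaar_smul, abs_of_pos ha, abs_of_pos hb] using this
    · rintro _ ⟨x, hx, rfl⟩ _ ⟨y, hy, rfl⟩
      refine lt_of_lt_of_le ?_ (H x y)
      have e : t = t ^ a * t ^ b := by rw [← Real.rpow_add ht, hab, Real.rpow_one]
      rw [e]
      exact mul_lt_mul'' (Real.rpow_lt_rpow ht.le hx ha) (Real.rpow_lt_rpow ht.le hy hb)
        (by positivity) (by positivity)
  · have e1 : {x | t < f x} = ∅ := by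
      ext x; simp; linarith [f1 x]
    have e2 : {x | t < g x} = ∅ := by
      ext x; simp; linarith [g1 x]
    simp [e1, e2]

/-- Prékopa–Leindler property -/
def PLProp (V : Type*) [AddCommGroup V] [Module ℝ V] [MeasurableSpace V] (μ : Measure V) : Prop :=
  ∀ a b : ℝ, 0 < a → 0 < b → a + b = 1 → ∀ f g h : V → ℝ≥0∞, Measurable f → Measurable g →
    Measurable h → (∀ x y, f x ^ a * g y ^ b ≤ h (a • x + b • y)) →
    (∫⁻ x, f x ∂μ) ^ a * (∫⁻ x, g x ∂μ) ^ b ≤ ∫⁻ x, h x ∂μ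

lemma pl1_bdd (a b : ℝ) (ha : 0 < a) (hb : 0 < b) (hab : a + b = 1) (f g h : ℝ → ℝ≥0∞)
    (hf : Measurable f) (hg : Measurable g) (hh : Measurable h)
    (fM : (⨆ x, f x) ≠ ⊤) (gN : (⨆ x, g x) ≠ ⊤)
    (H : ∀ x y, f x ^ a * g y ^ b ≤ h (a • x + b • y)) :
    (∫⁻ x, f x) ^ a * (∫⁻ x, g x) ^ b ≤ ∫⁻ x, h x := by
  set M := ⨆ x, f x with hM
  set N := ⨆ x, g x with hN
  rcases eq_or_ne M 0 with M0 | M0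
  · have : ∀ x, f x = 0 := fun x => le_antisymm ((le_iSup f x).trans M0.le) bot_le
    simp [this, ENNReal.zero_rpow_of_pos ha]
  rcases eq_or_ne N 0 with N0 | N0
  · have : ∀ x, g x = 0 := fun x => le_antisymm ((le_iSup g x).trans N0.le) bot_le
    simp [this, ENNReal.zero_rpow_of_pos hb]
  set P := M ^ a * N ^ b with hP
  have P0 : P ≠ 0 := mul_ne_zero (by simp [M0, fM, ha.le]) (by simp [N0, gN, hb.le])
  have Pt : P ≠ ⊤ := ENNReal.mul_ne_top (ENNReal.rpow_ne_top_of_nonneg ha.le fM)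
    (ENNReal.rpow_ne_top_of_nonneg hb.le gN)
  have fle : ∀ x, f x / M ≤ 1 := fun x => ENNReal.div_le_of_le_mul (by simpa using le_iSup f x)
  have gle : ∀ x, g x / N ≤ 1 := fun x => ENNReal.div_le_of_le_mul (by simpa using le_iSup g x)
  have key := pl1_norm a b ha hb hab (fun x => (f x / M).toReal) (fun x => (g x / N).toReal)
    (fun x => (min (h x / P) 1).toReal) (by fun_prop) (by fun_prop) (by fun_prop)
    (fun _ => ENNReal.toReal_nonneg) (fun _ => ENNReal.toReal_nonneg)
    (fun _ => ENNReal.toReal_nonneg)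
    (fun x => ENNReal.toReal_le_of_le_ofReal (by simp) (by simpa using fle x))
    (fun x => ENNReal.toReal_le_of_le_ofReal (by simp) (by simpa using gle x)) ?_ ?_ ?_
  · have t1 : ∀ x, ENNReal.ofReal (f x / M).toReal = f x / M := fun x =>
      ENNReal.ofReal_toReal (ne_top_of_le_ne_top ENNReal.one_ne_top (fle x))
    have t2 : ∀ x, ENNReal.ofReal (g x / N).toReal = g x / N := fun x =>
      ENNReal.ofReal_toReal (ne_top_of_le_ne_top ENNReal.one_ne_top (gle x))
    have t3 : ∀ x, ENNReal.ofReal (min (h x / P) 1).toReal ≤ h x / P := fun x =>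
      ENNReal.ofReal_toReal_le.trans (min_le_left _ _)
    simp only [t1, t2] at key
    have key2 := key.trans (lintegral_mono t3)
    simp only [div_eq_mul_inv] at key2
    rw [lintegral_mul_const _ hf, lintegral_mul_const _ hg, lintegral_mul_const _ hh] at key2
    simp only [← div_eq_mul_inv] at key2
    have am : ((∫⁻ x, f x) / M) ^ a * ((∫⁻ x, g x) / N) ^ b ≤
        ENNReal.ofReal a * ((∫⁻ x, f x) / M) + ENNReal.ofReal b * ((∫⁻ x, g x) / N) := by
      have y := ENNReal.young_inequality (((∫⁻ x, f x) / M) ^ a) (((∫⁻ x, g x) / N) ^ b)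
        (p := a⁻¹) (q := b⁻¹) (by
          rw [Real.holderConjugate_iff]
          refine ⟨(one_lt_inv₀ ha).2 (by linarith), by simpa using hab⟩)
      refine y.trans ?_
      rw [← ENNReal.rpow_mul, ← ENNReal.rpow_mul, mul_inv_cancel₀ ha.ne', mul_inv_cancel₀ hb.ne',
        ENNReal.rpow_one, ENNReal.rpow_one, ENNReal.ofReal_inv_of_pos ha,
        ENNReal.ofReal_inv_of_pos hb]
      simp only [div_eq_mul_inv, inv_inv]
      rw [mul_comm _ (ENNReal.ofReal a), mul_comm _ (ENNReal.ofReal b)]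
    have fin := am.trans key2
    rw [ENNReal.div_rpow_of_nonneg _ _ ha.le, ENNReal.div_rpow_of_nonneg _ _ hb.le] at fin
    have : (∫⁻ x, f x) ^ a / M ^ a * ((∫⁻ x, g x) ^ b / N ^ b) =
        ((∫⁻ x, f x) ^ a * (∫⁻ x, g x) ^ b) / P := by
      simp only [div_eq_mul_inv, hP]
      rw [ENNReal.mul_inv (Or.inl (by simp [M0, fM, ha.le])) (Or.inr (by simp [N0, gN, hb.le]))]
      ring
    rw [this] at fin
    have fin2 := (ENNReal.div_le_iff P0 Pt).1 fin
    rwa [ENNReal.div_mul_cancel P0 Pt] at fin2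
  · intro t ht
    rcases lt_or_ge t 0 with h0 | h0
    · exact ⟨0, h0.trans_le ENNReal.toReal_nonneg⟩
    have : ENNReal.ofReal t * M < M := by
      conv_rhs => rw [← one_mul M]
      exact ENNReal.mul_lt_mul_left M0 fM (by simpa using ht)
    obtain ⟨x, hx⟩ := lt_iSup_iff.1 (hM ▸ this)
    refine ⟨x, ?_⟩
    rw [← ENNReal.ofReal_lt_iff_lt_toReal h0 (ne_top_of_le_ne_top ENNReal.one_ne_top (fle x))]
    exact (ENNReal.lt_div_iff_mul_lt (Or.inl M0) (Or.inl fM)).2 hx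
  · intro t ht
    rcases lt_or_ge t 0 with h0 | h0
    · exact ⟨0, h0.trans_le ENNReal.toReal_nonneg⟩
    have : ENNReal.ofReal t * N < N := by
      conv_rhs => rw [← one_mul N]
      exact ENNReal.mul_lt_mul_left N0 gN (by simpa using ht)
    obtain ⟨x, hx⟩ := lt_iSup_iff.1 (hN ▸ this)
    refine ⟨x, ?_⟩
    rw [← ENNReal.ofReal_lt_iff_lt_toReal h0 (ne_top_of_le_ne_top ENNReal.one_ne_top (gle x))]
    exact (ENNReal.lt_div_iff_mul_lt (Or.inl N0) (Or.inl gN)).2 hx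
  · intro x y
    rw [ENNReal.toReal_rpow, ENNReal.toReal_rpow, ← ENNReal.toReal_mul]
    refine ENNReal.toReal_mono (by simp) (le_min ?_ ?_)
    · rw [ENNReal.div_rpow_of_nonneg _ _ ha.le, ENNReal.div_rpow_of_nonneg _ _ hb.le]
      have : f x ^ a / M ^ a * (g y ^ b / N ^ b) = (f x ^ a * g y ^ b) / P := by
        simp only [div_eq_mul_inv, hP]
        rw [ENNReal.mul_inv (Or.inl (by simp [M0, fM, ha.le])) (Or.inr (by simp [N0, gN, hb.le]))]
        ring
      rw [this]
      exact ENNReal.div_le_div_right (H x y) _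
    · exact mul_le_one' (ENNReal.rpow_le_one (fle x) ha.le) (ENNReal.rpow_le_one (gle y) hb.le)

lemma pl_real : PLProp ℝ volume := by
  intro a b ha hb hab f g h hf hg hh H
  rcases eq_or_ne (∫⁻ x, f x) 0 with f0 | f0
  · simp [f0, ENNReal.zero_rpow_of_pos ha]
  rcases eq_or_ne (∫⁻ x, g x) 0 with g0 | g0
  · simp [g0, ENNReal.zero_rpow_of_pos hb]
  have conv : ∀ u : ℝ → ℝ≥0∞, Measurable u →
      Filter.Tendsto (fun j : ℕ => ∫⁻ x, min (u x) j) Filter.atTop (nhds (∫⁻ x, u x)) := by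
    intro u hu
    refine lintegral_tendsto_of_tendsto_of_monotone (fun j => by fun_prop) ?_ ?_
    · refine .of_forall fun x i j hij => ?_
      exact min_le_min le_rfl (by exact_mod_cast hij)
    · refine .of_forall fun x => ?_
      have : Filter.Tendsto (fun j : ℕ => min (u x) (j : ℝ≥0∞)) Filter.atTop
          (nhds (min (u x) ⊤)) := tendsto_const_nhds.min ENNReal.tendsto_nat_nhds_top
      simpa using this
  have t1 := ((ENNReal.continuous_rpow_const (y := a)).tendsto _).comp (conv f hf)
  have t2 := ((ENNReal.continuous_rpow_const (y := b)).tendsto _).comp (conv g hg)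
  refine le_of_tendsto (ENNReal.Tendsto.mul t1 (Or.inl ?_) t2 (Or.inl ?_)) (.of_forall fun j => ?_)
  · simp [f0, ha.le, ha]
  · simp [g0, hb.le, hb]
  · refine pl1_bdd a b ha hb hab _ _ h (by fun_prop) (by fun_prop) hh ?_ ?_ fun x y => ?_
    · exact ne_top_of_le_ne_top (ENNReal.natCast_ne_top j) (iSup_le fun x => min_le_right _ _)
    · exact ne_top_of_le_ne_top (ENNReal.natCast_ne_top j) (iSup_le fun x => min_le_right _ _)
    · refine le_trans ?_ (H x y)
      gcongr <;> exact min_le_left _ _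

lemma pl_prod {V W : Type*} [AddCommGroup V] [Module ℝ V] [MeasurableSpace V] [AddCommGroup W]
    [Module ℝ W] [MeasurableSpace W] (μ : Measure V) (ν : Measure W) [SFinite μ] [SFinite ν]
    (hμ : PLProp V μ) (hν : PLProp W ν) : PLProp (V × W) (μ.prod ν) := by
  intro a b ha hb hab f g h hf hg hh H
  rw [lintegral_prod _ hf.aemeasurable, lintegral_prod _ hg.aemeasurable,
    lintegral_prod _ hh.aemeasurable]
  refine hμ a b ha hb hab _ _ _ hf.lintegral_prod_right' hg.lintegral_prod_right'
    hh.lintegral_prod_right' fun x y => ?_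
  refine hν a b ha hb hab _ _ _ (by fun_prop) (by fun_prop) (by fun_prop) fun x' y' => ?_
  exact H (x, x') (y, y')

lemma pl_map {V W : Type*} [AddCommGroup V] [Module ℝ V] [MeasurableSpace V] [AddCommGroup W]
    [Module ℝ W] [MeasurableSpace W] (μ : Measure V) (e : V →ₗ[ℝ] W) (he : Measurable e)
    (hμ : PLProp V μ) : PLProp W (μ.map e) := by
  intro a b ha hb hab f g h hf hg hh H
  rw [lintegral_map hf he, lintegral_map hg he, lintegral_map hh he]
  refine hμ a b ha hb hab _ _ _ (hf.comp he) (hg.comp he) (hh.comp he) fun x y => ?_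
  simpa using H (e x) (e y)

lemma pl_smul {V : Type*} [AddCommGroup V] [Module ℝ V] [MeasurableSpace V]
    (μ : Measure V) (c : ℝ≥0∞) (hμ : PLProp V μ) (hc : c ≠ 0) (hc' : c ≠ ⊤) :
    PLProp V (c • μ) := by
  intro a b ha hb hab f g h hf hg hh H
  have := hμ a b ha hb hab f g h hf hg hh H
  simp only [lintegral_smul_measure, smul_eq_mul]
  rw [ENNReal.mul_rpow_of_nonneg _ _ ha.le, ENNReal.mul_rpow_of_nonneg _ _ hb.le]
  have e : c = c ^ a * c ^ b := by rw [← ENNReal.rpow_add _ _ hc hc', hab, ENNReal.rpow_one]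
  calc _ = (c ^ a * c ^ b) * ((∫⁻ x, f x ∂μ) ^ a * (∫⁻ x, g x ∂μ) ^ b) := by ring
    _ ≤ _ := by rw [← e]; gcongr

lemma pl_pi : ∀ n : ℕ, PLProp (Fin n → ℝ) volume := by
  intro n
  induction n with
  | zero =>
    intro a b ha hb hab f g h hf hg hh H
    have := H 0 0
    simp only [smul_zero, add_zero] at this
    have hv : (volume : Measure (Fin 0 → ℝ)) = Measure.dirac 0 :=
      Measure.volume_pi_eq_dirac 0
    rw [hv]
    simpa [lintegral_dirac] using this
  | succ n ih =>
    have h1 := pl_prod volume volume pl_real ih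
    let e : (ℝ × (Fin n → ℝ)) →ₗ[ℝ] (Fin (n+1) → ℝ) :=
      { toFun := fun p => Fin.cons p.1 p.2
        map_add' := fun p q => by
          ext i; refine Fin.cases ?_ (fun j => ?_) i <;> simp
        map_smul' := fun c q => by
          ext i; refine Fin.cases ?_ (fun j => ?_) i <;> simp }
    have he : ⇑e = ⇑(MeasurableEquiv.piFinSuccAbove (fun _ : Fin (n+1) => ℝ) 0).symm := by
      ext p i
      simp [e, MeasurableEquiv.piFinSuccAbove]
    have hm : Measurable e := by rw [he]; exact MeasurableEquiv.measurable _
    have h2 := pl_map _ e hm h1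
    have hp := (volume_preserving_piFinSuccAbove (fun _ : Fin (n+1) => ℝ) 0).symm
    have : (Measure.map e (volume.prod volume)) = (volume : Measure (Fin (n+1) → ℝ)) := by
      rw [he]; exact hp.map_eq
    rwa [this] at h2

lemma pl_haar {V : Type*} [NormedAddCommGroup V] [NormedSpace ℝ V] [FiniteDimensional ℝ V]
    [MeasurableSpace V] [BorelSpace V] (μ : Measure V) [μ.IsAddHaarMeasure] : PLProp V μ := by
  have e : (Fin (Module.finrank ℝ V) → ℝ) ≃ₗ[ℝ] V := (Module.finBasis ℝ V).equivFun.symm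
  have hc : Continuous e := LinearMap.continuous_of_finiteDimensional e.toLinearMap
  have h := pl_map volume e.toLinearMap hc.measurable (pl_pi _)
  have : (Measure.map e volume).IsAddHaarMeasure := inferInstance
  have hh := Measure.isAddLeftInvariant_eq_smul μ (Measure.map e volume)
  rw [hh]
  refine pl_smul _ _ h ?_ ENNReal.coe_ne_top
  have := (Measure.addHaarScalarFactor_pos_of_isAddHaarMeasure μ (Measure.map e volume)).ne'
  exact_mod_cast this

structure NiceLC {V : Type*} [NormedAddCommGroup V] [NormedSpace ℝ V] (F : V → ℝ≥0∞) : Prop where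
  le1 : ∀ x, F x ≤ 1
  z1 : F 0 = 1
  lc : ∀ x y : V, ∀ a b : ℝ, 0 ≤ a → 0 ≤ b → a + b = 1 → F x ^ a * F y ^ b ≤ F (a • x + b • y)
  lsc : LowerSemicontinuous F

section
variable {V : Type*} [NormedAddCommGroup V] [NormedSpace ℝ V] [FiniteDimensional ℝ V]
    [MeasurableSpace V] [BorelSpace V]

lemma scale_lint (μ : Measure V) [μ.IsAddHaarMeasure] (g : V → ℝ≥0∞) (hg : Measurable g)
    (r : ℝ) (hr : 0 < r) (c : V) :
    ∫⁻ x, g x ∂μ = ENNReal.ofReal (r ^ Module.finrank ℝ V) * ∫⁻ x, g (c + r • x) ∂μ := by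
  have h1 : ∫⁻ x, g (c + r • x) ∂μ = ∫⁻ x, g (c + x) ∂(μ.map (fun x => r • x)) := by
    rw [lintegral_map (by fun_prop) (by fun_prop)]
  have h2 := Measure.map_addHaar_smul μ hr.ne'
  have h3 : (fun x : V => r • x) = (r • · : V → V) := rfl
  rw [h1, h3, h2, lintegral_smul_measure, lintegral_add_left_eq_self, smul_eq_mul, ← mul_assoc,
    ← ENNReal.ofReal_mul (by positivity), abs_of_pos (by positivity),
    mul_inv_cancel₀ (by positivity)]
  simp

variable {F : V → ℝ≥0∞} (hF : NiceLC F)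
include hF

lemma NiceLC.meas : Measurable F := hF.lsc.measurable

lemma NiceLC.le_rpow (x : V) (t : ℝ) (ht : t ≤ 1) : F x ≤ F x ^ t := by
  conv_lhs => rw [← ENNReal.rpow_one (F x)]
  exact ENNReal.rpow_le_rpow_of_exponent_ge (hF.le1 x) ht

lemma NiceLC.smul_ge (x : V) (t : ℝ) (h0 : 0 ≤ t) (ht : t ≤ 1) : F x ^ t ≤ F (t • x) := by
  have := hF.lc x 0 t (1 - t) h0 (by linarith) (by ring)
  simpa [hF.z1] using this

lemma NiceLC.int_rpow (μ : Measure V) [μ.IsAddHaarMeasure] (t : ℝ) (h0 : 0 < t) (ht : t ≤ 1) :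
    ENNReal.ofReal (t ^ Module.finrank ℝ V) * ∫⁻ x, F x ^ t ∂μ ≤ ∫⁻ x, F x ∂μ := by
  rw [scale_lint μ F hF.meas t h0 0]
  gcongr with x
  simpa using hF.smul_ge x t h0.le ht

lemma NiceLC.entropy (μ : Measure V) [μ.IsAddHaarMeasure] (hI : ∫⁻ x, F x ∂μ ≠ ⊤)
    (hm : 1 ≤ Module.finrank ℝ V) :
    ∫⁻ x, F x * ENNReal.ofReal (-Real.log (F x).toReal) ∂μ ≤
      ENNReal.ofReal (2 * Module.finrank ℝ V) * ∫⁻ x, F x ∂μ := by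
  set m := Module.finrank ℝ V
  set I := ∫⁻ x, F x ∂μ
  have hm' : (1:ℝ) ≤ m := by exact_mod_cast hm
  set s : ℝ := 1 / (2 * m) with hs
  have s0 : 0 < s := by positivity
  have s1 : s ≤ 1 / 2 := by
    rw [hs, div_le_div_iff₀ (by positivity) (by norm_num)]; linarith
  have hpt : ∀ x, F x + ENNReal.ofReal s * (F x * ENNReal.ofReal (-Real.log (F x).toReal)) ≤
      F x ^ (1 - s) := by
    intro x
    rcases eq_or_ne (F x) 0 with h | h
    · simp [h]
    have ht : F x ≠ ⊤ := ne_top_of_le_ne_top ENNReal.one_ne_top (hF.le1 x)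
    set y := (F x).toReal with hy
    have y0 : 0 < y := ENNReal.toReal_pos h ht
    have y1 : y ≤ 1 := ENNReal.toReal_le_of_le_ofReal (by simp) (by simpa using hF.le1 x)
    have e : F x = ENNReal.ofReal y := (ENNReal.ofReal_toReal ht).symm
    have hl : 0 ≤ -Real.log y := by
      have := Real.log_nonpos y0.le y1; linarith
    rw [e, ENNReal.ofReal_rpow_of_pos y0, ← ENNReal.ofReal_mul y0.le, ← ENNReal.ofReal_mul s0.le,
      ← ENNReal.ofReal_add y0.le (by positivity)]
    refine ENNReal.ofReal_le_ofReal ?_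
    have h1 : y ^ (1 - s) = y * Real.exp (s * -Real.log y) := by
      rw [Real.rpow_sub y0, Real.rpow_one, Real.rpow_def_of_pos y0, div_eq_mul_inv, ← Real.exp_neg]
      ring_nf
    rw [h1]
    have := Real.add_one_le_exp (s * -Real.log y)
    nlinarith
  have h1 : I + ENNReal.ofReal s * ∫⁻ x, F x * ENNReal.ofReal (-Real.log (F x).toReal) ∂μ ≤
      ∫⁻ x, F x ^ (1 - s) ∂μ := by
    rw [← lintegral_const_mul' _ _ ENNReal.ofReal_ne_top, ← lintegral_add_left hF.meas]
    exact lintegral_mono hpt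
  have h2 := hF.int_rpow μ (1 - s) (by linarith) (by linarith)
  have h3 : (1/2 : ℝ) ≤ (1 - s) ^ m := by
    have := one_add_mul_le_pow (a := -s) (by linarith) m
    have e : (m:ℝ) * s = 1 / 2 := by rw [hs]; field_simp
    rw [← sub_eq_add_neg] at this
    nlinarith
  have h4 : ∫⁻ x, F x ^ (1 - s) ∂μ ≤ I + I := by
    have : ENNReal.ofReal (1/2) * ∫⁻ x, F x ^ (1 - s) ∂μ ≤ I :=
      le_trans (by gcongr) h2
    calc ∫⁻ x, F x ^ (1 - s) ∂μ = ENNReal.ofReal 2 * (ENNReal.ofReal (1/2) * ∫⁻ x, F x ^ (1 - s) ∂μ) := by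
          rw [← mul_assoc, ← ENNReal.ofReal_mul (by norm_num)]; simp
      _ ≤ ENNReal.ofReal 2 * I := by gcongr
      _ = I + I := by rw [ENNReal.ofReal_ofNat, two_mul]
  have h5 := (ENNReal.add_le_add_iff_left hI).1 (h1.trans h4)
  calc _ = ENNReal.ofReal (2 * m) * (ENNReal.ofReal s * ∫⁻ x, F x * ENNReal.ofReal (-Real.log (F x).toReal) ∂μ) := by
        rw [← mul_assoc, ← ENNReal.ofReal_mul (by positivity), hs, mul_one_div_cancel (by positivity)]
        simp
    _ ≤ _ := by gcongr
end

section
variable {Z X : Type*} [NormedAddCommGroup Z] [NormedSpace ℝ Z] [FiniteDimensional ℝ Z]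
    [MeasurableSpace Z] [BorelSpace Z]
    [NormedAddCommGroup X] [NormedSpace ℝ X] [FiniteDimensional ℝ X]
    [MeasurableSpace X] [BorelSpace X]
    (μ : Measure Z) [μ.IsAddHaarMeasure] (ν : Measure X) [ν.IsAddHaarMeasure]
    {F : Z × X → ℝ≥0∞} (hF : NiceLC F)

def hB (ν : Measure X) (F : Z × X → ℝ≥0∞) (β : ℝ) (z : Z) : ℝ≥0∞ := ∫⁻ x, F (z, x) ^ β ∂ν
def pS (F : Z × X → ℝ≥0∞) (z : Z) : ℝ≥0∞ := ⨆ x, F (z, x)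
def Qf (F : Z × X → ℝ≥0∞) (x : X) : ℝ≥0∞ := ⨆ a : Z × X, (F a * F (a - (0, x))) ^ (1/2 : ℝ)

include hF

lemma hB_meas (β : ℝ) : Measurable (hB ν F β) := by
  have := hF.meas
  exact (Measurable.lintegral_prod_right' (ν := ν) (f := fun v : Z × X => F v ^ β) (by fun_prop))

lemma pS_meas : Measurable (pS F) := by
  refine LowerSemicontinuous.measurable (lowerSemicontinuous_iSup fun x => ?_)
  exact hF.lsc.comp (by fun_prop : Continuous fun z : Z => (z, x))

lemma hB_int (β : ℝ) : ∫⁻ z, hB ν F β z ∂μ = ∫⁻ v, F v ^ β ∂(μ.prod ν) := by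
  have := hF.meas
  rw [lintegral_prod _ (by fun_prop)]
  rfl

lemma stepR (t : ℝ) (t0 : 0 < t) (t1 : t < 1) :
    ENNReal.ofReal (t ^ Module.finrank ℝ (Z × X)) * ENNReal.ofReal ((1 - t) ^ Module.finrank ℝ X) *
      (∫⁻ v, F v ∂(μ.prod ν)) * ∫⁻ x, Qf F x ∂ν ≤ ∫⁻ z, hB ν F (1/2) z * hB ν F (1/2) z ∂μ := by
  have hm := hF.meas
  set G : X → ℝ≥0∞ := fun x => ∫⁻ v : Z × X, F v ^ (1/2:ℝ) * F (v - (0, x)) ^ (1/2:ℝ) ∂(μ.prod ν)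
    with hG
  have Gm : Measurable G := by
    have : Measurable fun p : X × (Z × X) => F p.2 ^ (1/2:ℝ) * F (p.2 - (0, p.1)) ^ (1/2:ℝ) := by
      fun_prop
    exact this.lintegral_prod_right'
  have e1 : ∫⁻ z, hB ν F (1/2) z * hB ν F (1/2) z ∂μ = ∫⁻ x, G x ∂ν := by
    have : ∀ z, hB ν F (1/2) z * hB ν F (1/2) z =
        ∫⁻ x', ∫⁻ x, F (z, x') ^ (1/2:ℝ) * F ((z, x') - (0, x)) ^ (1/2:ℝ) ∂ν ∂ν := by
      intro z
      have i1 : ∀ x', ∫⁻ x, F (z, x') ^ (1/2:ℝ) * F ((z, x') - (0, x)) ^ (1/2:ℝ) ∂ν =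
          F (z, x') ^ (1/2:ℝ) * hB ν F (1/2) z := by
        intro x'
        rw [lintegral_const_mul _ (by fun_prop)]
        congr 1
        have := lintegral_sub_left_eq_self (μ := ν) (fun x => F (z, x) ^ (1/2:ℝ)) x'
        simpa [hB] using this
      simp only [i1]
      rw [lintegral_mul_const _ (by fun_prop)]
      rfl
    simp only [this]
    rw [← lintegral_prod (μ := μ) (ν := ν)
      (fun v : Z × X => ∫⁻ x, F v ^ (1/2:ℝ) * F (v - (0, x)) ^ (1/2:ℝ) ∂ν)]
    · rw [lintegral_lintegral_swap]
      fun_prop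
    · have : Measurable fun p : (Z × X) × X => F p.1 ^ (1/2:ℝ) * F (p.1 - (0, p.2)) ^ (1/2:ℝ) := by
        fun_prop
      exact this.lintegral_prod_right'.aemeasurable
  have e2 : ∀ x, ENNReal.ofReal (t ^ Module.finrank ℝ (Z × X)) * (∫⁻ v, F v ∂(μ.prod ν)) * Qf F x ≤
      G (0 + (1 - t) • x) := by
    intro x
    rw [Qf, ENNReal.mul_iSup]
    refine iSup_le fun a => ?_
    simp only [hG, zero_add]
    rw [scale_lint (μ.prod ν) (fun v => F v ^ (1/2:ℝ) * F (v - (0, (1 - t) • x)) ^ (1/2:ℝ))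
      (by fun_prop) t t0 ((1 - t) • a), mul_assoc]
    gcongr
    rw [mul_comm, ← lintegral_const_mul _ hm]
    refine lintegral_mono fun u => ?_
    have q1 := hF.lc a u (1 - t) t (by linarith) t0.le (by ring)
    have q2 := hF.lc (a - (0, x)) u (1 - t) t (by linarith) t0.le (by ring)
    have q3 : (1 - t) • a + t • u - (0, (1 - t) • x) = (1 - t) • (a - (0, x)) + t • u := by
      rw [smul_sub]
      have : ((0:Z), (1 - t) • x) = (1 - t) • ((0:Z), x) := by simp
      rw [this]; abel
    simp only [q3]
    rw [ENNReal.mul_rpow_of_nonneg _ _ (by norm_num : (0:ℝ) ≤ 1/2)]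
    have hu : F u = F u ^ (1/2:ℝ) * F u ^ (1/2:ℝ) := by
      rw [← ENNReal.rpow_add_of_nonneg _ _ (by norm_num) (by norm_num)]; norm_num
    calc _ = (F a * F u) ^ (1/2:ℝ) * (F (a - (0,x)) * F u) ^ (1/2:ℝ) := by
          conv_lhs => rw [hu]
          rw [ENNReal.mul_rpow_of_nonneg _ _ (by norm_num : (0:ℝ) ≤ 1/2),
            ENNReal.mul_rpow_of_nonneg _ _ (by norm_num : (0:ℝ) ≤ 1/2)]
          ring
      _ ≤ _ := by
          gcongr
          · refine le_trans ?_ q1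
            gcongr
            · exact hF.le_rpow _ _ (by linarith)
            · exact hF.le_rpow _ _ (by linarith)
          · refine le_trans ?_ q2
            gcongr
            · exact hF.le_rpow _ _ (by linarith)
            · exact hF.le_rpow _ _ (by linarith)
  rw [e1, scale_lint ν G Gm (1 - t) (by linarith) 0]
  have Qm : Measurable (Qf F) := by
    refine LowerSemicontinuous.measurable (lowerSemicontinuous_iSup fun a => ?_)
    have l1 : LowerSemicontinuous fun x : X => F (a - (0, x)) :=
      hF.lsc.comp (by fun_prop : Continuous fun x : X => a - (0, x))
    have hmono : Monotone fun y : ℝ≥0∞ => (F a * y) ^ (1/2:ℝ) := by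
      intro y y' h; simp only; gcongr
    have hcont : Continuous fun y : ℝ≥0∞ => (F a * y) ^ (1/2:ℝ) :=
      ENNReal.continuous_rpow_const.comp
        (ENNReal.continuous_const_mul (ne_top_of_le_ne_top ENNReal.one_ne_top (hF.le1 a)))
    exact hcont.comp_lowerSemicontinuous l1 hmono
  calc _ = ENNReal.ofReal ((1 - t) ^ Module.finrank ℝ X) *
      ∫⁻ x, ENNReal.ofReal (t ^ Module.finrank ℝ (Z × X)) * (∫⁻ v, F v ∂(μ.prod ν)) * Qf F x ∂ν := by
        rw [lintegral_const_mul _ Qm]; ring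
    _ ≤ _ := by
        gcongr with x
        exact e2 x

lemma stepP : (∫⁻ z, hB ν F (1/2) z * hB ν F (1/2) z ∂μ) * (∫⁻ z, pS F z ∂μ) ≤
    4 ^ Module.finrank ℝ X * ((∫⁻ v, F v ∂(μ.prod ν)) * ∫⁻ v, F v ∂(μ.prod ν)) := by
  have hm := hF.meas
  have hBm := hB_meas ν hF
  set k := Module.finrank ℝ X
  set c : ℝ≥0∞ := ENNReal.ofReal (2 ^ k) with hc
  have key := pl_haar μ (1/2) (1/2) (by norm_num) (by norm_num) (by norm_num)
    (fun z => hB ν F (1/2) z * hB ν F (1/2) z) (pS F) (fun z => c * hB ν F 1 z)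
    ((hBm _).mul (hBm _)) (pS_meas hF) ((hBm _).const_mul _) ?_
  · have e : ∫⁻ z, c * hB ν F 1 z ∂μ = c * ∫⁻ v, F v ∂(μ.prod ν) := by
      rw [lintegral_const_mul _ (hBm _), hB_int μ ν hF]; simp
    rw [e] at key
    have sq : ∀ y : ℝ≥0∞, y = y ^ (1/2:ℝ) * y ^ (1/2:ℝ) := by
      intro y
      rw [← ENNReal.rpow_add_of_nonneg _ _ (by norm_num) (by norm_num)]; norm_num
    have c2 : c * c = 4 ^ k := by
      rw [hc, ← ENNReal.ofReal_mul (by positivity), ← mul_pow]; norm_num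
    calc _ = ((∫⁻ z, hB ν F (1/2) z * hB ν F (1/2) z ∂μ) ^ (1/2:ℝ) * (∫⁻ z, pS F z ∂μ) ^ (1/2:ℝ)) *
          ((∫⁻ z, hB ν F (1/2) z * hB ν F (1/2) z ∂μ) ^ (1/2:ℝ) * (∫⁻ z, pS F z ∂μ) ^ (1/2:ℝ)) := by
            conv_lhs => rw [sq (∫⁻ z, hB ν F (1/2) z * hB ν F (1/2) z ∂μ), sq (∫⁻ z, pS F z ∂μ)]
            ring
      _ ≤ (c * ∫⁻ v, F v ∂(μ.prod ν)) * (c * ∫⁻ v, F v ∂(μ.prod ν)) := by gcongr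
      _ = _ := by rw [← c2]; ring
  · intro z z'
    have sq : (hB ν F (1/2) z * hB ν F (1/2) z) ^ (1/2:ℝ) = hB ν F (1/2) z := by
      rw [ENNReal.mul_rpow_of_nonneg _ _ (by norm_num),
        ← ENNReal.rpow_add_of_nonneg _ _ (by norm_num) (by norm_num)]; norm_num
    have sup : pS F z' ^ (1/2:ℝ) = ⨆ x, F (z', x) ^ (1/2:ℝ) :=
      (ENNReal.orderIsoRpow (1/2) (by norm_num)).map_iSup _
    rw [sq, sup, ENNReal.mul_iSup]
    refine iSup_le fun x' => ?_
    have := scale_lint ν (fun x => F ((1/2:ℝ) • z + (1/2:ℝ) • z', x) ^ (1:ℝ)) (by fun_prop) (1/2)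
      (by norm_num) ((1/2:ℝ) • x')
    simp only [hB]
    rw [this, ← mul_assoc, hc, ← ENNReal.ofReal_mul (by positivity), ← mul_pow, 
      show (2:ℝ) * (1/2) = 1 by norm_num, one_pow, ENNReal.ofReal_one, one_mul,
      ← lintegral_mul_const _ (by fun_prop)]
    refine lintegral_mono fun x => ?_
    have q := hF.lc (z, x) (z', x') (1/2) (1/2) (by norm_num) (by norm_num) (by norm_num)
    simp only [ENNReal.rpow_one]
    refine q.trans (le_of_eq ?_)
    congr 1
    simp [add_comm]

lemma stepS (β : ℝ) (h0 : 0 < β) (h1 : β ≤ 1) :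
    ENNReal.ofReal (β ^ Module.finrank ℝ X) * hB ν F β 0 ≤ ∫⁻ x, F (0, x) ∂ν := by
  have hm := hF.meas
  rw [scale_lint ν (fun x => F (0, x)) (by fun_prop) β h0 0, hB]
  gcongr with x
  simpa using hF.smul_ge (0, x) β h0.le h1
end

lemma lint_rpow_ne_zero {V : Type*} [NormedAddCommGroup V] [NormedSpace ℝ V]
    [MeasurableSpace V] [BorelSpace V] (μ : Measure V) [μ.IsOpenPosMeasure] (g : V → ℝ≥0∞)
    (hg : LowerSemicontinuous g) (β : ℝ) (hβ : 0 < β) (x0 : V) (h0 : g x0 ≠ 0) :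
    ∫⁻ x, g x ^ β ∂μ ≠ 0 := by
  have hm := hg.measurable
  rw [← pos_iff_ne_zero, lintegral_pos_iff_support (by fun_prop)]
  have : Function.support (fun x => g x ^ β) = g ⁻¹' (Ioi 0) := by
    ext x
    simp [pos_iff_ne_zero, hβ, hβ.le]
  rw [this]
  exact (hg.isOpen_preimage 0).measure_pos μ ⟨x0, pos_iff_ne_zero.2 h0⟩

section
variable {Z X : Type*} [NormedAddCommGroup Z] [NormedSpace ℝ Z] [FiniteDimensional ℝ Z]
    [MeasurableSpace Z] [BorelSpace Z]
    [NormedAddCommGroup X] [NormedSpace ℝ X] [FiniteDimensional ℝ X]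
    [MeasurableSpace X] [BorelSpace X]
    (μ : Measure Z) [μ.IsAddHaarMeasure] (ν : Measure X) [ν.IsAddHaarMeasure]
    {F : Z × X → ℝ≥0∞} (hF : NiceLC F)

include hF

lemma hB_ne_zero (β : ℝ) (hβ : 0 < β) (z : Z) (x : X) (h : F (z, x) ≠ 0) : hB ν F β z ≠ 0 :=
  lint_rpow_ne_zero ν (fun x => F (z, x)) (hF.lsc.comp (by fun_prop : Continuous fun x : X => (z, x)))
    β hβ x h

lemma I_ne_zero : ∫⁻ v, F v ∂(μ.prod ν) ≠ 0 := by
  have := lint_rpow_ne_zero (μ.prod ν) F hF.lsc 1 one_pos 0 (by simp [hF.z1])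
  simpa using this

lemma P_ne_zero : ∫⁻ z, pS F z ∂μ ≠ 0 := by
  have l : LowerSemicontinuous (pS F) := lowerSemicontinuous_iSup fun x => 
    hF.lsc.comp (by fun_prop : Continuous fun z : Z => (z, x))
  have := lint_rpow_ne_zero μ (pS F) l 1 one_pos 0 (by
    rw [← pos_iff_ne_zero]
    refine lt_of_lt_of_le ?_ (le_iSup (fun x => F ((0:Z), x)) 0)
    have := hF.z1
    rw [Prod.zero_eq_mk] at this
    simp [this])
  simpa using this

lemma P_ne_top (hI : ∫⁻ v, F v ∂(μ.prod ν) ≠ ⊤) : ∫⁻ z, pS F z ∂μ ≠ ⊤ := by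
  intro hP
  have h := stepP μ ν hF
  rw [hP] at h
  have h2 : ∫⁻ z, hB ν F (1/2) z * hB ν F (1/2) z ∂μ ≠ 0 := by
    intro h0
    have hm := hB_meas ν hF (1/2)
    rw [lintegral_eq_zero_iff (by fun_prop)] at h0
    have h1 : hB ν F (1/2) =ᵐ[μ] 0 := by
      filter_upwards [h0] with z hz
      simpa using hz
    rw [← lintegral_eq_zero_iff (by fun_prop), hB_int μ ν hF] at h1
    have h3 := I_ne_zero μ ν hF
    apply h3
    rw [← nonpos_iff_eq_zero, ← h1]
    exact lintegral_mono fun v => hF.le_rpow v _ (by norm_num)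
  rw [ENNReal.mul_top h2] at h
  have : (4:ℝ≥0∞) ^ Module.finrank ℝ X * ((∫⁻ v, F v ∂(μ.prod ν)) * ∫⁻ v, F v ∂(μ.prod ν)) ≠ ⊤ :=
    ENNReal.mul_ne_top (by simp) (ENNReal.mul_ne_top hI hI)
  exact this (top_le_iff.1 h)

lemma hB_le (β : ℝ) (h1 : β ≤ 1) (h0 : 0 ≤ β) (z : Z) :
    hB ν F 1 z ≤ hB ν F β z * pS F z ^ (1 - β) := by
  have hm := hF.meas
  rw [hB, hB, ← lintegral_mul_const _ (by fun_prop)]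
  refine lintegral_mono fun x => ?_
  have : F (z, x) ^ (1:ℝ) = F (z, x) ^ β * F (z, x) ^ (1 - β) := by
    rw [← ENNReal.rpow_add_of_nonneg _ _ h0 (by linarith)]; simp
  simp only [this]
  exact mul_le_mul' le_rfl (ENNReal.rpow_le_rpow (le_iSup (fun x => F (z, x)) x) (by linarith))

lemma W_int (β : ℝ) (h1 : β ≤ 1) (h0 : 0 ≤ β) :
    ∫⁻ v, pS F v.1 ^ β / hB ν F β v.1 ∂((μ.prod ν).withDensity F) ≤ ∫⁻ z, pS F z ∂μ := by
  have hm := hF.meas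
  have hBm := hB_meas ν hF
  have pm := pS_meas hF
  rw [lintegral_withDensity_eq_lintegral_mul _ hm (by fun_prop), lintegral_prod _ (by fun_prop)]
  refine lintegral_mono fun z => ?_
  simp only [Pi.mul_apply]
  rw [lintegral_mul_const _ (by fun_prop)]
  have e : ∫⁻ x, F (z, x) ∂ν = hB ν F 1 z := by simp [hB]
  rw [e]
  calc _ ≤ hB ν F β z * pS F z ^ (1 - β) * (pS F z ^ β / hB ν F β z) := by
        gcongr; exact hB_le ν hF β h1 h0 z
    _ = pS F z ^ (1 - β) * (hB ν F β z * (pS F z ^ β / hB ν F β z)) := by ring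
    _ ≤ pS F z ^ (1 - β) * pS F z ^ β := by
        gcongr; exact ENNReal.mul_div_le
    _ = pS F z := by
        rw [← ENNReal.rpow_add_of_nonneg _ _ (by linarith) h0]; simp

lemma S_convex (β : ℝ) (h0 : 0 ≤ β) :
    Convex ℝ {q : Z × ℝ | ENNReal.ofReal (Real.exp q.2) ≤ hB ν F β q.1} := by
  have hm := hF.meas
  rw [convex_iff_forall_pos]
  rintro ⟨z, r⟩ hz ⟨z', r'⟩ hz' a b ha hb hab
  simp only [mem_setOf_eq] at hz hz'
  simp only [mem_setOf_eq, Prod.smul_mk, Prod.mk_add_mk, smul_eq_mul]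
  have := pl_haar ν a b ha hb hab (fun x => F (z, x) ^ β) (fun x => F (z', x) ^ β)
    (fun x => F (a • z + b • z', x) ^ β) (by fun_prop) (by fun_prop) (by fun_prop) ?_
  · refine le_trans ?_ this
    change _ ≤ hB ν F β z ^ a * hB ν F β z' ^ b
    have e : ENNReal.ofReal (Real.exp (a * r + b * r')) =
        ENNReal.ofReal (Real.exp r) ^ a * ENNReal.ofReal (Real.exp r') ^ b := by
      rw [ENNReal.ofReal_rpow_of_pos (Real.exp_pos _), ENNReal.ofReal_rpow_of_pos (Real.exp_pos _),
        ← ENNReal.ofReal_mul (by positivity), ← Real.exp_mul, ← Real.exp_mul, ← Real.exp_add]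
      ring_nf
    rw [e]
    gcongr
  · intro x y
    have q := hF.lc (z, x) (z', y) a b ha.le hb.le hab
    simp only [Prod.smul_mk, Prod.mk_add_mk] at q
    have e : (F (z, x) ^ β) ^ a * (F (z', y) ^ β) ^ b = (F (z, x) ^ a * F (z', y) ^ b) ^ β := by
      rw [ENNReal.mul_rpow_of_nonneg _ _ h0, ← ENNReal.rpow_mul, ← ENNReal.rpow_mul,
        ← ENNReal.rpow_mul, ← ENNReal.rpow_mul, mul_comm a, mul_comm b]
    rw [e]
    gcongr

lemma S_mem (β : ℝ) (h0 : 0 < β) (c : ℝ) (hc : 0 < c) (v : Z × X) (hv : F v ≠ 0) :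
    ENNReal.ofReal (Real.exp (β * Real.log (F v).toReal + 1 - Real.log c -
      (pS F v.1 ^ β / hB ν F β v.1).toReal / c)) ≤ hB ν F β v.1 := by
  rcases eq_or_ne (hB ν F β v.1) ⊤ with ht | ht
  · rw [ht]; exact le_top
  have hz := hB_ne_zero ν hF β h0 v.1 v.2 hv
  have hFt : F v ≠ ⊤ := ne_top_of_le_ne_top ENNReal.one_ne_top (hF.le1 v)
  have hpt : pS F v.1 ≠ ⊤ := ne_top_of_le_ne_top ENNReal.one_ne_top (iSup_le fun x => hF.le1 _)
  have hFp : F v ≤ pS F v.1 := le_iSup (fun x => F (v.1, x)) v.2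
  set y := (F v).toReal
  set p := (pS F v.1).toReal with hp
  set h := (hB ν F β v.1).toReal with hh
  have y0 : 0 < y := ENNReal.toReal_pos hv hFt
  have yp : y ≤ p := ENNReal.toReal_mono hpt hFp
  have hh0 : 0 < h := ENNReal.toReal_pos hz ht
  have p0 : 0 < p := y0.trans_le yp
  rw [ENNReal.toReal_div, ← ENNReal.toReal_rpow, ← hp, ← hh]
  refine ENNReal.ofReal_le_of_le_toReal ?_
  rw [← hh]
  set w := p ^ β / h with hw
  have w0 : 0 < w := by positivity
  have hl := Real.log_le_sub_one_of_pos (div_pos w0 hc)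
  rw [Real.log_div w0.ne' hc.ne', hw, Real.log_div (by positivity) hh0.ne', Real.log_rpow p0] at hl
  have hyl : Real.log y ≤ Real.log p := Real.log_le_log y0 yp
  rw [← Real.le_log_iff_exp_le hh0]
  rw [← hw] at hl
  nlinarith

lemma shift0 (β : ℝ) (h0 : 0 < β) (h1 : β ≤ 1) (z : Z) (hz : 1/2 < F (-z, 0)) :
    hB ν F β z ≤ 2 ^ (Module.finrank ℝ X + 1) * hB ν F β 0 := by
  have hm := hF.meas
  have s := scale_lint ν (fun x => F (0, x) ^ β) (by fun_prop) (1/2) (by norm_num) 0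
  have pt : ∀ x, F (z, x) ^ β ≤ 2 * F (0, (0:X) + (1/2:ℝ) • x) ^ β := by
    intro x
    have q := hF.lc (z, x) (-z, 0) (1/2) (1/2) (by norm_num) (by norm_num) (by norm_num)
    have e : (1/2:ℝ) • (z, x) + (1/2:ℝ) • (-z, (0:X)) = (0, 0 + (1/2:ℝ) • x) := by
      ext <;> simp
    rw [e] at q
    have q1 : F (z, x) * (1/2) ≤ F (0, (0:X) + (1/2:ℝ) • x) := by
      refine le_trans ?_ q
      gcongr
      · exact hF.le_rpow _ _ (by norm_num)
      · exact hz.le.trans (hF.le_rpow _ _ (by norm_num))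
    have q2 : F (z, x) ≤ 2 * F (0, (0:X) + (1/2:ℝ) • x) := by
      calc F (z, x) = 2 * (F (z, x) * (1/2)) := by
            rw [mul_comm, mul_assoc, one_div, ENNReal.inv_mul_cancel (by norm_num) (by norm_num), mul_one]
        _ ≤ _ := by gcongr
    calc F (z, x) ^ β ≤ (2 * F (0, (0:X) + (1/2:ℝ) • x)) ^ β := by gcongr
      _ = 2 ^ β * F (0, (0:X) + (1/2:ℝ) • x) ^ β := ENNReal.mul_rpow_of_nonneg _ _ h0.le
      _ ≤ _ := by
        gcongr
        conv_rhs => rw [← ENNReal.rpow_one 2]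
        exact ENNReal.rpow_le_rpow_of_exponent_le (by norm_num) h1
  have s' : hB ν F β 0 = _ := s
  rw [s']
  have e : (2:ℝ≥0∞) ^ (Module.finrank ℝ X + 1) * (ENNReal.ofReal ((1/2) ^ Module.finrank ℝ X)) = 2 := by
    rw [ENNReal.ofReal_pow (by norm_num), pow_succ', mul_assoc, ← mul_pow, ENNReal.ofReal_div_of_pos (by norm_num)]
    simp [ENNReal.mul_inv_cancel]
  rw [← mul_assoc, e, ← lintegral_const_mul _ (by fun_prop)]
  exact lintegral_mono pt
end

section
variable {Z X : Type*} [NormedAddCommGroup Z] [NormedSpace ℝ Z] [FiniteDimensional ℝ Z]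
    [MeasurableSpace Z] [BorelSpace Z]
    [NormedAddCommGroup X] [NormedSpace ℝ X] [FiniteDimensional ℝ X]
    [MeasurableSpace X] [BorelSpace X]
    (μ : Measure Z) [μ.IsAddHaarMeasure] (ν : Measure X) [ν.IsAddHaarMeasure]
    {F : Z × X → ℝ≥0∞} (hF : NiceLC F)

include hF

lemma stepJ (hI : ∫⁻ v, F v ∂(μ.prod ν) ≠ ⊤) (hm1 : 1 ≤ Module.finrank ℝ (Z × X))
    (hint : Integrable (fun v : Z × X => v.1) ((μ.prod ν).withDensity F))
    (hcen : ∫ v, v.1 ∂((μ.prod ν).withDensity F) = 0)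
    (β : ℝ) (h0 : 0 < β) (h1 : β ≤ 1) :
    ENNReal.ofReal (Real.exp (-(2 * β * Module.finrank ℝ (Z × X)) - 1)) * ∫⁻ v, F v ∂(μ.prod ν) ≤
      2 ^ (Module.finrank ℝ X + 1) * hB ν F β 0 * ∫⁻ z, pS F z ∂μ := by
  have hm := hF.meas
  have hBm := hB_meas ν hF
  have pm := pS_meas hF
  have hI0 := I_ne_zero μ ν hF
  have hP0 := P_ne_zero μ hF
  have hPt := P_ne_top μ ν hF hI
  have hent := hF.entropy (μ.prod ν) hI hm1
  have hW := W_int μ ν hF β h1 h0.le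
  have hSc := S_convex ν hF β h0.le
  set m := Module.finrank ℝ (Z × X)
  set I := ∫⁻ v, F v ∂(μ.prod ν) with hIdef
  set P := ∫⁻ z, pS F z ∂μ with hPdef
  set κ' := (μ.prod ν).withDensity F with hκ'
  set c : ℝ := P.toReal / I.toReal with hc
  have Ip : 0 < I.toReal := ENNReal.toReal_pos hI0 hI
  have Pp : 0 < P.toReal := ENNReal.toReal_pos hP0 hPt
  have c0 : 0 < c := div_pos Pp Ip
  -- log integrable
  set A : Z × X → ℝ := fun v => -Real.log (F v).toReal with hA
  have Am : Measurable A := by fun_prop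
  have A0 : ∀ v, 0 ≤ A v := by
    intro v
    have := Real.log_nonpos ENNReal.toReal_nonneg
      (ENNReal.toReal_le_of_le_ofReal (by simp) (by simpa using hF.le1 v) : (F v).toReal ≤ 1)
    simp only [hA]; linarith
  have hAl : ∫⁻ v, ENNReal.ofReal (A v) ∂κ' ≤ ENNReal.ofReal (2 * m) * I := by
    rw [hκ', lintegral_withDensity_eq_lintegral_mul _ hm (by fun_prop)]
    exact hent
  have hAt : ENNReal.ofReal (2 * m) * I ≠ ⊤ := ENNReal.mul_ne_top ENNReal.ofReal_ne_top hI
  have hAi : Integrable A κ' := by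
    refine ⟨Am.aestronglyMeasurable, ?_⟩
    rw [hasFiniteIntegral_iff_ofReal (Filter.Eventually.of_forall A0)]
    exact lt_of_le_of_lt hAl hAt.lt_top
  have hAE : ∫ v, A v ∂κ' ≤ 2 * m * I.toReal := by
    rw [integral_eq_lintegral_of_nonneg_ae (Filter.Eventually.of_forall A0) Am.aestronglyMeasurable]
    have := ENNReal.toReal_mono hAt hAl
    rwa [ENNReal.toReal_mul, ENNReal.toReal_ofReal (by positivity)] at this
  -- W
  set W : Z × X → ℝ≥0∞ := fun v => pS F v.1 ^ β / hB ν F β v.1 with hWdef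
  have Wm : Measurable W := by fun_prop
  have hWt : ∫⁻ v, W v ∂κ' ≠ ⊤ := ne_top_of_le_ne_top hPt hW
  have hWi : Integrable (fun v => (W v).toReal) κ' :=
    integrable_toReal_of_lintegral_ne_top Wm.aemeasurable hWt
  have hWE : ∫ v, (W v).toReal ∂κ' ≤ P.toReal := by
    rw [integral_toReal Wm.aemeasurable (ae_lt_top Wm hWt)]
    exact ENNReal.toReal_mono hPt hW
  -- probability
  set κ := I⁻¹ • κ' with hκ
  have hprob : IsProbabilityMeasure κ := by
    constructor
    rw [hκ, Measure.smul_apply, hκ', withDensity_apply _ MeasurableSet.univ, Measure.restrict_univ,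
      smul_eq_mul, ENNReal.inv_mul_cancel hI0 hI]
  have hIi : I⁻¹ ≠ ⊤ := ENNReal.inv_ne_top.2 hI0
  set r : Z × X → ℝ := fun v => β * Real.log (F v).toReal + 1 - Real.log c - (W v).toReal / c with hr
  have hr' : r = fun v => (1 - Real.log c) - (β * A v + c⁻¹ * (W v).toReal) := by
    funext v; simp only [hr, hA]; ring
  have hi2 : Integrable (fun v => β * A v + c⁻¹ * (W v).toReal) κ' :=
    (hAi.const_mul β).add (hWi.const_mul c⁻¹)
  have hi3 : Integrable r κ := by
    rw [hr']
    exact (integrable_const _).sub (hi2.smul_measure hIi)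
  have hmem : ∀ᵐ v ∂κ, (v.1, r v) ∈ {q : Z × ℝ | ENNReal.ofReal (Real.exp q.2) ≤ hB ν F β q.1} := by
    refine Measure.ae_smul_measure ?_ _
    rw [hκ', ae_withDensity_iff hm]
    exact Filter.Eventually.of_forall fun v hv => S_mem ν hF β h0 c c0 v hv
  have hcl := hSc.closure.integral_mem isClosed_closure (hmem.mono fun v hv => subset_closure hv)
    ((hint.smul_measure hIi).prodMk hi3)
  rw [integral_pair (hint.smul_measure hIi) hi3] at hcl
  have hz0 : ∫ v, v.1 ∂κ = 0 := by
    rw [hκ, integral_smul_measure, hcen, smul_zero]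
  have hEr : -(2 * β * m) - Real.log c ≤ ∫ v, r v ∂κ := by
    rw [hr', integral_sub (integrable_const _) (hi2.smul_measure hIi), integral_smul_measure (μ := κ') (fun v => β * A v + c⁻¹ * (W v).toReal) I⁻¹,
      integral_add (hAi.const_mul β) (hWi.const_mul c⁻¹), integral_const_mul, integral_const_mul,
      ← hκ]
    simp only [integral_const, probReal_univ, smul_eq_mul, one_mul, ENNReal.toReal_inv]
    have e1 : β * ∫ v, A v ∂κ' ≤ β * (2 * m * I.toReal) := by gcongr
    have e2 : c⁻¹ * ∫ v, (W v).toReal ∂κ' ≤ c⁻¹ * P.toReal := by gcongr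
    have e3 : I.toReal⁻¹ * (β * ∫ v, A v ∂κ' + c⁻¹ * ∫ v, (W v).toReal ∂κ') ≤
        I.toReal⁻¹ * (β * (2 * m * I.toReal) + c⁻¹ * P.toReal) := by gcongr
    have e4 : I.toReal⁻¹ * (β * (2 * m * I.toReal) + c⁻¹ * P.toReal) = 2 * β * m + 1 := by
      rw [hc]; field_simp
    linarith
  rw [hz0] at hcl
  have hnb : {q : Z × ℝ | 1/2 < F (-q.1, 0) ∧ (∫ v, r v ∂κ) - 1 < q.2} ∈
      nhds ((0:Z), ∫ v, r v ∂κ) := by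
    have l := hF.lsc.comp (by fun_prop : Continuous fun q : Z × ℝ => (-q.1, (0:X)))
    have l2 := l (0, ∫ v, r v ∂κ) (1/2) (by
      have := hF.z1
      rw [Prod.zero_eq_mk] at this
      simp only [Function.comp, neg_zero, this, one_div]
      exact ENNReal.inv_lt_one.2 (by norm_num))
    have l3 : ∀ᶠ q : Z × ℝ in nhds ((0:Z), ∫ v, r v ∂κ), (∫ v, r v ∂κ) - 1 < q.2 :=
      (continuous_snd.tendsto _).eventually (lt_mem_nhds (by simp))
    exact l2.and l3
  obtain ⟨⟨z, s⟩, ⟨hz, hs⟩, hq⟩ := mem_closure_iff_nhds.1 hcl _ hnb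
  simp only at hz hs
  simp only [mem_setOf_eq] at hq
  have hsh := shift0 ν hF β h0 h1 z hz
  have hfin : ENNReal.ofReal (Real.exp (-(2 * β * m) - 1 - Real.log c)) ≤
      2 ^ (Module.finrank ℝ X + 1) * hB ν F β 0 := by
    refine le_trans (ENNReal.ofReal_le_ofReal (Real.exp_le_exp.2 ?_)) (hq.trans hsh)
    linarith
  have e : ENNReal.ofReal (Real.exp (-(2 * β * m) - 1)) * I =
      ENNReal.ofReal (Real.exp (-(2 * β * m) - 1 - Real.log c)) * P := by
    rw [← ENNReal.ofReal_toReal hI, ← ENNReal.ofReal_toReal hPt, ← ENNReal.ofReal_mul (by positivity),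
      ← ENNReal.ofReal_mul (by positivity), Real.exp_sub _ (Real.log c), Real.exp_log c0, hc]
    congr 1
    field_simp
  rw [e]
  gcongr

/-- Combined inequality. -/
lemma absMain (hI : ∫⁻ v, F v ∂(μ.prod ν) ≠ ⊤) (hk1 : 1 ≤ Module.finrank ℝ X)
    (hint : Integrable (fun v : Z × X => v.1) ((μ.prod ν).withDensity F))
    (hcen : ∫ v, v.1 ∂((μ.prod ν).withDensity F) = 0) :
    ∫⁻ x, Qf F x ∂ν ≤ ENNReal.ofReal ((32 * Real.exp 4 *
      ((Module.finrank ℝ (Z × X) : ℝ) / Module.finrank ℝ X) ^ 2) ^ Module.finrank ℝ X) *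
      ∫⁻ x, F (0, x) ∂ν := by
  have hkm : Module.finrank ℝ X ≤ Module.finrank ℝ (Z × X) := by simp
  set m := Module.finrank ℝ (Z × X) with hmdef
  set k := Module.finrank ℝ X with hkdef
  have k1 : (1:ℝ) ≤ k := by exact_mod_cast hk1
  have km : (k:ℝ) ≤ m := by exact_mod_cast hkm
  have m1 : (1:ℝ) ≤ m := k1.trans km
  set β : ℝ := k / m with hβ
  have b0 : 0 < β := by positivity
  have b1 : β ≤ 1 := div_le_one_of_le₀ km (by positivity)
  have bm : β * m = k := by rw [hβ]; field_simp
  have hI0 := I_ne_zero μ ν hF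
  have hP0 := P_ne_zero μ hF
  have hPt := P_ne_top μ ν hF hI
  have J := stepJ μ ν hF hI (hk1.trans hkm) hint hcen β b0 b1
  have S := stepS ν hF β b0 b1
  have Pp := stepP μ ν hF
  have hexp : Real.exp (-β) ≤ 1 - β / 2 := by
    have h1 : β + 1 ≤ Real.exp β := Real.add_one_le_exp β
    rw [Real.exp_neg]
    refine (inv_anti₀ (by linarith) h1).trans ?_
    rw [inv_le_iff_one_le_mul₀ (by linarith)]
    nlinarith
  have R := stepR μ ν hF (Real.exp (-β)) (Real.exp_pos _) (by linarith)
  rw [← hmdef, ← hkdef] at *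
  set I := ∫⁻ v, F v ∂(μ.prod ν)
  set P := ∫⁻ z, pS F z ∂μ
  set Q := ∫⁻ x, Qf F x ∂ν
  set h2 := ∫⁻ z, hB ν F (1/2) z * hB ν F (1/2) z ∂μ
  set D := ∫⁻ x, F (0, x) ∂ν
  have et : Real.exp (-β) ^ m = Real.exp (-k) := by
    rw [← Real.exp_nat_mul]; congr 1; linarith
  rw [et] at R
  rw [show -(2 * β * (m:ℝ)) - 1 = -(2 * k) - 1 by linarith] at J
  -- real constants
  set e1 := ENNReal.ofReal (Real.exp (-k))
  set e2 := ENNReal.ofReal ((β/2)^k)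
  set e3 := ENNReal.ofReal (Real.exp (-(2*k) - 1))
  set bk := ENNReal.ofReal (β ^ k)
  have R' : e1 * e2 * I * Q ≤ h2 := by
    refine le_trans ?_ R
    have : e2 ≤ ENNReal.ofReal ((1 - Real.exp (-β)) ^ k) :=
      ENNReal.ofReal_le_ofReal (pow_le_pow_left₀ (by positivity) (by linarith) k)
    gcongr
  have fin : (e1 * e2 * e3 * bk * Q) * (I * I * P) ≤ (4 ^ k * 2 ^ (k+1) * D) * (I * I * P) := by
    calc _ = (e1 * e2 * I * Q) * P * (e3 * I) * bk := by ring
      _ ≤ h2 * P * (2 ^ (k + 1) * hB ν F β 0 * P) * bk := by gcongr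
      _ ≤ (4 ^ k * (I * I)) * (2 ^ (k + 1) * hB ν F β 0 * P) * bk := by gcongr
      _ = (4 ^ k * (I * I)) * (2 ^ (k + 1) * (bk * hB ν F β 0) * P) := by ring
      _ ≤ (4 ^ k * (I * I)) * (2 ^ (k + 1) * D * P) := by gcongr
      _ = _ := by ring
  have n0 : I * I * P ≠ 0 := by simp [hI0, hP0]
  have nt : I * I * P ≠ ⊤ := ENNReal.mul_ne_top (ENNReal.mul_ne_top hI hI) hPt
  have fin2 := (ENNReal.mul_le_mul_iff_left n0 nt).1 fin
  set c : ℝ := Real.exp (-k) * (β/2)^k * Real.exp (-(2*k) - 1) * β ^ k with hc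
  have c0 : 0 < c := by positivity
  have ec : e1 * e2 * e3 * bk = ENNReal.ofReal c := by
    rw [hc, ENNReal.ofReal_mul (by positivity), ENNReal.ofReal_mul (by positivity),
      ENNReal.ofReal_mul (by positivity)]
  have ed : (4:ℝ≥0∞) ^ k * 2 ^ (k+1) = ENNReal.ofReal (4 ^ k * 2 ^ (k+1)) := by
    rw [ENNReal.ofReal_mul (by positivity), ENNReal.ofReal_pow (by positivity),
      ENNReal.ofReal_pow (by positivity)]; simp
  rw [ec, ed] at fin2
  calc Q = ENNReal.ofReal c⁻¹ * (ENNReal.ofReal c * Q) := by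
        rw [← mul_assoc, ← ENNReal.ofReal_mul (by positivity), inv_mul_cancel₀ c0.ne']; simp
    _ ≤ ENNReal.ofReal c⁻¹ * (ENNReal.ofReal (4 ^ k * 2 ^ (k+1)) * D) := by gcongr
    _ = ENNReal.ofReal (c⁻¹ * (4 ^ k * 2 ^ (k+1))) * D := by
        rw [← mul_assoc, ← ENNReal.ofReal_mul (by positivity)]
    _ ≤ _ := by
        gcongr
        rw [inv_mul_le_iff₀ c0]
        have g1 : (m:ℝ) / k = β⁻¹ := by rw [hβ]; simp
        rw [g1, hc]
        have g2 : Real.exp (-(2*k) - 1) ≥ Real.exp (-3) ^ k := by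
          rw [← Real.exp_nat_mul]
          apply Real.exp_le_exp.2; linarith
        have g3 : Real.exp (-(k:ℝ)) = Real.exp (-1) ^ k := by
          rw [← Real.exp_nat_mul]; congr 1; ring
        have g4 : (2:ℝ) ^ (k+1) ≤ 4 ^ k := by
          rw [pow_succ, show (4:ℝ) = 2 * 2 by norm_num, mul_pow]
          gcongr
          calc (2:ℝ) = 2 ^ 1 := by norm_num
            _ ≤ 2 ^ k := pow_le_pow_right₀ (by norm_num) hk1
        rw [g3]
        calc (4:ℝ) ^ k * 2 ^ (k+1) ≤ 4 ^ k * 4 ^ k := by gcongr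
          _ = (Real.exp (-1) ^ k * (β/2) ^ k * Real.exp (-3) ^ k * β ^ k) * (32 * Real.exp 4 * β⁻¹ ^ 2) ^ k := by
            simp only [← mul_pow]
            congr 1
            have : Real.exp (-1) * Real.exp (-3) * Real.exp 4 = 1 := by
              rw [← Real.exp_add, ← Real.exp_add]; norm_num
            have hb : β * β⁻¹ = 1 := mul_inv_cancel₀ b0.ne'
            calc (4:ℝ) * 4 = 16 * (Real.exp (-1) * Real.exp (-3) * Real.exp 4) * (β * β⁻¹)^2 := by
                  rw [this, hb]; norm_num
              _ = _ := by ring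
          _ ≤ _ := by gcongr
end

lemma lsc_of_open {V : Type*} [TopologicalSpace V] (g : V → ℝ≥0∞) (U : Set V) (hU : IsOpen U)
    (hc : ContinuousOn g U) (h0 : ∀ x, x ∉ U → g x = 0) : LowerSemicontinuous g := by
  intro x
  by_cases hx : x ∈ U
  · exact (hc.continuousAt (hU.mem_nhds hx)).lowerSemicontinuousAt
  · intro y hy
    rw [h0 x hx] at hy
    exact absurd hy (by simp)

structure LCdata {V : Type*} [NormedAddCommGroup V] [NormedSpace ℝ V]
    [MeasurableSpace V] (μ : Measure V) (f : V → ℝ) : Prop where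
  nonneg : ∀ x, 0 ≤ f x
  lc : ∀ x y : V, ∀ a b : ℝ, 0 ≤ a → 0 ≤ b → a + b = 1 → f x ^ a * f y ^ b ≤ f (a • x + b • y)
  cen : (∫ x, f x • x ∂μ) = 0
  le1 : ∀ x, f x ≤ 1
  z1 : f 0 = 1
  int : Integrable f μ
  pos : 0 < ∫ x, f x ∂μ

section
variable {V : Type*} [NormedAddCommGroup V] [NormedSpace ℝ V] [FiniteDimensional ℝ V]
    [MeasurableSpace V] [BorelSpace V] (μ : Measure V) [μ.IsAddHaarMeasure] {f : V → ℝ}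
    (hf : LCdata μ f)
include hf

lemma LCdata.convex : Convex ℝ {x | 0 < f x} := by
  intro x hx y hy a b ha hb hab
  simp only [mem_setOf_eq] at *
  exact lt_of_lt_of_le (by positivity) (hf.lc x y a b ha hb hab)

lemma LCdata.ae : ∀ᵐ x ∂μ, x ∈ interior {x | 0 < f x} ∨ f x = 0 := by
  have h := (LCdata.convex μ hf).addHaar_frontier μ
  have : ∀ᵐ x ∂μ, x ∉ frontier {x | 0 < f x} := measure_eq_zero_iff_ae_notMem.1 h
  filter_upwards [this] with x hx
  by_cases h0 : f x = 0
  · right; exact h0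
  left
  by_contra hi
  exact hx ⟨subset_closure (lt_of_le_of_ne (hf.nonneg x) (Ne.symm h0)), hi⟩

lemma LCdata.nonempty : (interior {x | 0 < f x}).Nonempty := by
  by_contra h
  rw [not_nonempty_iff_eq_empty] at h
  have h2 : ∀ᵐ x ∂μ, f x = 0 := by
    filter_upwards [LCdata.ae μ hf] with x hx
    simpa [h] using hx
  have := hf.pos
  rw [integral_congr_ae (g := fun _ => (0:ℝ)) h2] at this
  simp at this

lemma LCdata.cont : ContinuousOn f (interior {x | 0 < f x}) := by
  have hC := LCdata.convex μ hf
  have : ConcaveOn ℝ {x | 0 < f x} (fun x => Real.log (f x)) := by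
    refine ⟨hC, fun x hx y hy a b ha hb hab => ?_⟩
    simp only [mem_setOf_eq, smul_eq_mul] at *
    have h1 : a * Real.log (f x) + b * Real.log (f y) = Real.log (f x ^ a * f y ^ b) := by
      rw [Real.log_mul (by positivity) (by positivity), Real.log_rpow hx, Real.log_rpow hy]
    rw [h1]
    exact Real.log_le_log (by positivity) (hf.lc x y a b ha hb hab)
  refine (this.continuousOn_interior.rexp).congr fun x hx => ?_
  exact (Real.exp_log (interior_subset hx : x ∈ {x | 0 < f x})).symm

lemma LCdata.smul_ge (x : V) (t : ℝ) (h0 : 0 ≤ t) (h1 : t ≤ 1) : f x ^ t ≤ f (t • x) := by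
  have := hf.lc x 0 t (1 - t) h0 (by linarith) (by ring)
  simpa [hf.z1] using this

lemma LCdata.decay : ∃ R : ℝ, 0 < R ∧ ∀ x, R ≤ ‖x‖ → f x ≤ Real.exp (-1) := by
  obtain ⟨b, hb⟩ := LCdata.nonempty μ hf
  have hbp : 0 < f b := (interior_subset hb : b ∈ {x | 0 < f x})
  have hca : ContinuousAt f b := (LCdata.cont μ hf).continuousAt (isOpen_interior.mem_nhds hb)
  have hev := hca.eventually (lt_mem_nhds (half_lt_self hbp))
  obtain ⟨r, r0, hr⟩ := Metric.eventually_nhds_iff_ball.1 hev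
  set δ := f b / 2 with hδ
  have δ0 : 0 < δ := by positivity
  set q : ℝ := Real.exp (-1) ^ (1/2:ℝ) * δ ^ (1/2:ℝ) with hq
  have q0 : 0 < q := by positivity
  set ε : ℝ≥0∞ := ENNReal.ofReal q * μ (ball 0 (r/2)) with hε
  have ε0 : 0 < ε := ENNReal.mul_pos (by simpa using q0)
    (measure_ball_pos μ 0 (by positivity)).ne'
  have hfin : IsFiniteMeasure (μ.withDensity fun x => ENNReal.ofReal (f x)) :=
    isFiniteMeasure_withDensity_ofReal hf.int.2
  set κ := μ.withDensity fun x => ENNReal.ofReal (f x) with hκ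
  have ht := tendsto_measure_iInter_atTop (μ := κ) (s := fun j : ℕ => {x : V | (j:ℝ) ≤ ‖x‖})
    (fun j => (measurableSet_le measurable_const measurable_norm).nullMeasurableSet)
    (fun i j hij x hx => by
      have : (i:ℝ) ≤ j := by exact_mod_cast hij
      exact this.trans hx) ⟨0, measure_ne_top _ _⟩
  have he : (⋂ j : ℕ, {x : V | (j:ℝ) ≤ ‖x‖}) = ∅ := by
    ext x
    simp only [mem_iInter, mem_setOf_eq, mem_empty_iff_false, iff_false, not_forall, not_le]
    exact exists_nat_gt _
  rw [he, measure_empty] at ht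
  obtain ⟨j, hj⟩ := (ht.eventually (gt_mem_nhds ε0)).exists
  simp only [Function.comp] at hj
  refine ⟨2 * j + ‖b‖ + r + 1, by positivity, fun x hx => ?_⟩
  by_contra hlt
  push Not at hlt
  have hsub : ball ((1/2:ℝ) • x + (1/2:ℝ) • b) (r/2) ⊆ {x : V | (j:ℝ) ≤ ‖x‖} := by
    intro y hy
    simp only [mem_setOf_eq]
    rw [mem_ball, dist_eq_norm] at hy
    have h1 : (1/2:ℝ) • x = y - (y - ((1/2:ℝ) • x + (1/2:ℝ) • b)) - (1/2:ℝ) • b := by abel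
    have h2 : ‖(1/2:ℝ) • x‖ ≤ ‖y‖ + ‖y - ((1/2:ℝ) • x + (1/2:ℝ) • b)‖ + ‖(1/2:ℝ) • b‖ := by
      conv_lhs => rw [h1]
      exact (norm_sub_le _ _).trans (add_le_add_left (norm_sub_le _ _) _)
    rw [norm_smul, norm_smul] at h2
    norm_num at h2
    linarith
  have hge : ∀ y ∈ ball ((1/2:ℝ) • x + (1/2:ℝ) • b) (r/2), q ≤ f y := by
    intro y hy
    have hy2 : (2:ℝ) • y - x ∈ ball b r := by
      rw [mem_ball, dist_eq_norm] at *
      have : (2:ℝ) • y - x - b = (2:ℝ) • (y - ((1/2:ℝ) • x + (1/2:ℝ) • b)) := by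
        rw [smul_sub, smul_add, smul_smul, smul_smul]; norm_num; abel
      rw [this, norm_smul]
      norm_num
      norm_num at hy
      linarith
    have h3 := hr _ hy2
    have h4 := hf.lc x ((2:ℝ) • y - x) (1/2) (1/2) (by norm_num) (by norm_num) (by norm_num)
    have h5 : (1/2:ℝ) • x + (1/2:ℝ) • ((2:ℝ) • y - x) = y := by
      rw [smul_sub, smul_smul]; norm_num
    rw [h5] at h4
    refine le_trans ?_ h4
    rw [hq]
    exact mul_le_mul (Real.rpow_le_rpow (Real.exp_pos _).le hlt.le (by norm_num))
      (Real.rpow_le_rpow δ0.le h3.le (by norm_num)) (by positivity)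
      (Real.rpow_nonneg (hf.nonneg x) _)
  have hle : ε ≤ κ (ball ((1/2:ℝ) • x + (1/2:ℝ) • b) (r/2)) := by
    rw [hκ, withDensity_apply _ measurableSet_ball, hε, ← Measure.addHaar_ball_center μ _ (r/2), ← setLIntegral_const]
    exact setLIntegral_mono' measurableSet_ball fun y hy => ENNReal.ofReal_le_ofReal (hge y hy)
  exact absurd (hle.trans (measure_mono hsub)) (not_le.2 hj)

lemma LCdata.int_smul : Integrable (fun x => f x • x) μ := by
  obtain ⟨R, R0, hR⟩ := LCdata.decay μ hf
  have i2 : Integrable (fun x => R * f x + 2 * R * f ((1/2:ℝ) • x)) μ :=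
    (hf.int.const_mul R).add ((hf.int.comp_smul (by norm_num)).const_mul _)
  refine i2.mono' (hf.int.1.smul aestronglyMeasurable_id) (Filter.Eventually.of_forall fun x => ?_)
  have n1 := hf.nonneg x
  have n2 := hf.nonneg ((1/2:ℝ) • x)
  rw [norm_smul, Real.norm_of_nonneg n1]
  rcases n1.eq_or_lt with h | h
  · rw [← h, zero_mul, mul_zero, zero_add]
    exact mul_nonneg (by positivity) n2
  rcases le_total ‖x‖ R with hx | hx
  · have : 0 ≤ 2 * R * f ((1/2:ℝ) • x) := by positivity
    nlinarith
  have x0 : 0 < ‖x‖ := R0.trans_le hx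
  set t := R / ‖x‖ with ht
  have t1 : t ≤ 1 := div_le_one_of_le₀ hx x0.le
  have h1 := LCdata.smul_ge μ hf x t (by positivity) t1
  have h2 := hR (t • x) (by
    rw [norm_smul, Real.norm_of_nonneg (by positivity), ht, div_mul_cancel₀ _ x0.ne'])
  have h3 := Real.log_le_log (by positivity) (h1.trans h2)
  rw [Real.log_rpow h, Real.log_exp] at h3
  have h4 : ‖x‖ ≤ R * (-Real.log (f x)) := by
    have : ‖x‖ * (t * Real.log (f x)) ≤ ‖x‖ * (-1) := by gcongr
    have e : ‖x‖ * (t * Real.log (f x)) = R * Real.log (f x) := by rw [ht]; field_simp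
    linarith
  have h5 := LCdata.smul_ge μ hf x (1/2) (by norm_num) (by norm_num)
  have h6 : f x * (-Real.log (f x)) ≤ 2 * f x ^ (1/2:ℝ) := by
    set s := f x ^ (1/2:ℝ) with hs
    have s0 : 0 < s := by positivity
    have es : f x = s * s := by rw [hs, ← Real.rpow_add h]; norm_num
    have hl := Real.one_sub_inv_le_log_of_pos s0
    rw [es, Real.log_mul s0.ne' s0.ne']
    have : s * s⁻¹ = 1 := mul_inv_cancel₀ s0.ne'
    have k2 : s * (1 - s⁻¹) ≤ s * Real.log s := by gcongr
    have k3 : s * (s * (1 - s⁻¹)) ≤ s * (s * Real.log s) := by gcongr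
    have k4 : s * (s * (1 - s⁻¹)) = s * s - s := by field_simp
    nlinarith
  calc f x * ‖x‖ ≤ f x * (R * (-Real.log (f x))) := by gcongr
    _ = R * (f x * (-Real.log (f x))) := by ring
    _ ≤ R * (2 * f x ^ (1/2:ℝ)) := by gcongr
    _ ≤ R * (2 * f ((1/2:ℝ) • x)) := by gcongr
    _ ≤ _ := by nlinarith [mul_nonneg R0.le n1]

lemma LCdata.zero_mem : (0:V) ∈ interior {x | 0 < f x} := by
  by_contra h
  have hU := (LCdata.convex μ hf).interior
  obtain ⟨l, hl⟩ := geometric_hahn_banach_open_point hU isOpen_interior h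
  simp only [map_zero] at hl
  have i1 := LCdata.int_smul μ hf
  have e : ∫ x, -(f x * l x) ∂μ = 0 := by
    have := l.integral_comp_comm i1
    rw [hf.cen] at this
    rw [integral_neg]
    simpa using this
  have i2 : Integrable (fun x => -(f x * l x)) μ := by
    have := l.integrable_comp i1
    simpa using this.neg
  have n : 0 ≤ᵐ[μ] fun x => -(f x * l x) := by
    filter_upwards [LCdata.ae μ hf] with x hx
    rcases hx with hx | hx
    · have := hl x hx
      have := hf.nonneg x
      simp only [Pi.zero_apply]
      nlinarith
    · simp [hx]
  rw [integral_eq_zero_iff_of_nonneg_ae n i2] at e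
  have hz : μ (interior {x | 0 < f x}) = 0 := by
    refine measure_mono_null (fun x hx => ?_) (MeasureTheory.ae_iff.1 e)
    have h1 := hl x hx
    have h2 : 0 < f x := (interior_subset hx : x ∈ {x | 0 < f x})
    simp only [mem_setOf_eq, Pi.zero_apply]
    nlinarith
  exact (isOpen_interior.measure_pos μ (LCdata.nonempty μ hf)).ne' hz

lemma LCdata.exists_nice : ∃ (g : V → ℝ≥0∞) (U : Set V), NiceLC g ∧ IsOpen U ∧ ContinuousOn g U ∧
    (∀ x, x ∉ U → g x = 0) ∧ (∀ x, g x ≤ ENNReal.ofReal (f x)) ∧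
    (∀ x, ENNReal.ofReal (f x) ^ (1/2:ℝ) ≤ g ((1/2:ℝ) • x)) ∧
    ∫⁻ x, g x ∂μ ≠ ⊤ ∧ Integrable (fun x => x) (μ.withDensity g) ∧
    ∫ x, x ∂(μ.withDensity g) = 0 := by
  classical
  set U := interior {x | 0 < f x} with hU
  have hUo : IsOpen U := isOpen_interior
  have hC := LCdata.convex μ hf
  have hUc : Convex ℝ U := hC.interior
  have h0 : (0:V) ∈ U := LCdata.zero_mem μ hf
  set g : V → ℝ≥0∞ := fun x => if x ∈ U then ENNReal.ofReal (f x) else 0 with hg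
  have gU : ∀ x ∈ U, g x = ENNReal.ofReal (f x) := fun x hx => by simp [hg, hx]
  have gn : ∀ x, x ∉ U → g x = 0 := fun x hx => by simp [hg, hx]
  have gc : ContinuousOn g U := by
    refine ContinuousOn.congr ?_ gU
    exact ENNReal.continuous_ofReal.comp_continuousOn (LCdata.cont μ hf)
  have gl : ∀ x, g x ≤ ENNReal.ofReal (f x) := by
    intro x
    by_cases hx : x ∈ U
    · rw [gU x hx]
    · simp [gn x hx]
  have hn : NiceLC g := by
    refine ⟨fun x => (gl x).trans (by simpa using hf.le1 x), by rw [gU 0 h0, hf.z1]; simp, ?_,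
      lsc_of_open g U hUo gc gn⟩
    intro x y a b ha hb hab
    rcases ha.eq_or_lt with rfl | ha
    · have : b = 1 := by linarith
      simp [this]
    rcases hb.eq_or_lt with rfl | hb
    · have : a = 1 := by linarith
      simp [this]
    by_cases hx : x ∈ U
    · by_cases hy : y ∈ U
      · rw [gU x hx, gU y hy, gU _ (hUc hx hy ha.le hb.le hab),
          ENNReal.ofReal_rpow_of_nonneg (hf.nonneg x) ha.le,
          ENNReal.ofReal_rpow_of_nonneg (hf.nonneg y) hb.le,
          ← ENNReal.ofReal_mul (Real.rpow_nonneg (hf.nonneg x) _)]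
        exact ENNReal.ofReal_le_ofReal (hf.lc x y a b ha.le hb.le hab)
      · simp [gn y hy, hb]
    · simp [gn x hx, ha]
  have ga : ∀ᵐ x ∂μ, (g x).toReal = f x := by
    filter_upwards [LCdata.ae μ hf] with x hx
    by_cases hxU : x ∈ U
    · rw [gU x hxU, ENNReal.toReal_ofReal (hf.nonneg x)]
    · rcases hx with hx | hx
      · exact absurd hx hxU
      · simp [gn x hxU, hx]
  have ga2 : (fun x => (g x).toReal • x) =ᵐ[μ] fun x => f x • x := by
    filter_upwards [ga] with x hx
    rw [hx]
  have gt : ∀ᵐ x ∂μ, g x < ⊤ := Filter.Eventually.of_forall fun x =>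
    lt_of_le_of_lt (hn.le1 x) ENNReal.one_lt_top
  refine ⟨g, U, hn, hUo, gc, gn, gl, ?_, ?_, ?_, ?_⟩
  · intro x
    rcases (hf.nonneg x).eq_or_lt with h | h
    · simp [← h]
    have hx2 : (1/2:ℝ) • x ∈ U := by
      have := hC.combo_self_interior_mem_interior (x := x) (y := 0) h h0 (a := 1/2) (b := 1/2)
        (by norm_num) (by norm_num) (by norm_num)
      simpa using this
    rw [gU _ hx2, ENNReal.ofReal_rpow_of_pos h]
    exact ENNReal.ofReal_le_ofReal (LCdata.smul_ge μ hf x (1/2) (by norm_num) (by norm_num))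
  · refine ne_top_of_le_ne_top ?_ (lintegral_mono gl)
    exact ((hasFiniteIntegral_iff_ofReal (Filter.Eventually.of_forall hf.nonneg)).1 hf.int.2).ne
  · rw [integrable_withDensity_iff_integrable_smul' hn.meas gt]
    exact (LCdata.int_smul μ hf).congr ga2.symm
  · rw [integral_withDensity_eq_integral_toReal_smul hn.meas gt, integral_congr_ae ga2, hf.cen]
end

section
variable {V : Type*} [NormedAddCommGroup V] [InnerProductSpace ℝ V] [FiniteDimensional ℝ V]
    [MeasurableSpace V] [BorelSpace V] (H : Submodule ℝ V)

lemma exists_T : ∃ T : ((V × Hᗮ) × H) ≃L[ℝ] V × V, ∀ (u : V) (p : Hᗮ) (x : H), T ((u, p), x) = (u + (x:V), (p:V) - (x:V)) := by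
  let L : ((V × Hᗮ) × H) →ₗ[ℝ] V × V :=
    { toFun := fun q => (q.1.1 + (q.2:V), (q.1.2:V) - (q.2:V))
      map_add' := by
        rintro ⟨⟨a, b⟩, c⟩ ⟨⟨a', b'⟩, c'⟩
        ext <;> simp <;> abel
      map_smul' := by
        rintro r ⟨⟨a, b⟩, c⟩
        ext <;> simp [smul_sub] }
  have hL : ∀ (u : V) (p : Hᗮ) (x : H), L ((u, p), x) = (u + (x:V), (p:V) - (x:V)) := fun u p x => rfl
  have hinj : Function.Injective L := by
    rw [← LinearMap.ker_eq_bot, LinearMap.ker_eq_bot']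
    rintro ⟨⟨u, p⟩, x⟩ h
    rw [hL, Prod.mk_eq_zero] at h
    obtain ⟨h1, h2⟩ := h
    have h3 : (p:V) = x := sub_eq_zero.1 h2
    have h4 : (x:V) ∈ H ⊓ Hᗮ := ⟨x.2, h3 ▸ p.2⟩
    rw [H.inf_orthogonal_eq_bot, Submodule.mem_bot] at h4
    have hx : x = 0 := by ext; simpa using h4
    have hp : p = 0 := by ext; rw [h3, h4]; simp
    have hu : u = 0 := by simpa [h4] using h1
    rw [hx, hp, hu]; rfl
  have hd : Module.finrank ℝ ((V × Hᗮ) × H) = Module.finrank ℝ (V × V) := by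
    have := H.finrank_add_finrank_orthogonal
    simp only [Module.finrank_prod]
    omega
  exact ⟨(L.linearEquivOfInjective hinj hd).toContinuousLinearEquiv, fun u p x => by simp [hL]⟩

lemma prodNice {g : V → ℝ≥0∞} (hg : NiceLC g) (U : Set V) (hU : IsOpen U) (hc : ContinuousOn g U)
    (hn : ∀ x, x ∉ U → g x = 0) : NiceLC (fun q : V × V => g q.1 * g q.2) := by
  refine ⟨fun q => mul_le_one' (hg.le1 _) (hg.le1 _), by simp [hg.z1], ?_, ?_⟩
  · intro x y a b ha hb hab
    calc _ = (g x.1 ^ a * g y.1 ^ b) * (g x.2 ^ a * g y.2 ^ b) := by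
          rw [ENNReal.mul_rpow_of_nonneg _ _ ha, ENNReal.mul_rpow_of_nonneg _ _ hb]; ring
      _ ≤ _ := mul_le_mul' (hg.lc _ _ a b ha hb hab) (hg.lc _ _ a b ha hb hab)
  · refine lsc_of_open _ (U ×ˢ U) (hU.prod hU) ?_ ?_
    · have gt : ∀ x, g x ≠ ⊤ := fun x => ne_top_of_le_ne_top ENNReal.one_ne_top (hg.le1 x)
      intro q hq
      have c1 : ContinuousWithinAt (fun q : V × V => g q.1) (U ×ˢ U) q :=
        (hc.comp continuousOn_fst fun q hq => hq.1) q hq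
      have c2 : ContinuousWithinAt (fun q : V × V => g q.2) (U ×ˢ U) q :=
        (hc.comp continuousOn_snd fun q hq => hq.2) q hq
      exact ENNReal.Tendsto.mul c1 (Or.inr (gt _)) c2 (Or.inr (gt _))
    · intro q hq
      rw [mem_prod, not_and_or] at hq
      rcases hq with h | h <;> simp [hn _ h]

lemma NiceLC.comp_lin {V W : Type*} [NormedAddCommGroup V] [NormedSpace ℝ V] 
    [NormedAddCommGroup W] [NormedSpace ℝ W] {G : W → ℝ≥0∞} (hG : NiceLC G) (T : V →L[ℝ] W) :
    NiceLC (fun v => G (T v)) := by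
  refine ⟨fun v => hG.le1 _, by simp [hG.z1], ?_, hG.lsc.comp T.continuous⟩
  intro x y a b ha hb hab
  simpa using hG.lc (T x) (T y) a b ha hb hab

lemma le_Qf {Z X : Type*} [NormedAddCommGroup Z] [NormedAddCommGroup X]
    (F : Z × X → ℝ≥0∞) (a : Z × X) (x : X) : (F a * F (a - (0, x))) ^ (1/2:ℝ) ≤ Qf F x :=
  le_iSup (fun a : Z × X => (F a * F (a - (0, x))) ^ (1/2:ℝ)) a

lemma Qf_le_one {Z X : Type*} [NormedAddCommGroup Z] [NormedAddCommGroup X]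
    (F : Z × X → ℝ≥0∞) (hF : ∀ a, F a ≤ 1) (x : X) : Qf F x ≤ 1 :=
  iSup_le fun _ => ENNReal.rpow_le_one (mul_le_one' (hF _) (hF _)) (by norm_num)

set_option maxHeartbeats 1000000 in
lemma core_s5 {f : V → ℝ} (hf : LCdata (volume : Measure V) f) (hk : 1 ≤ Module.finrank ℝ H)
    (ν : Measure H) [ν.IsAddHaarMeasure] :
    ∃ D O : H → ℝ≥0∞, (∀ x, D x ≤ ENNReal.ofReal (min (f x) (f (-x)))) ∧
      (∀ x x₁ x₂ : V, ∀ hx : x ∈ H, x = (2⁻¹ : ℝ) • (x₁ + x₂) →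
        ENNReal.ofReal (Real.sqrt (f x₁ * f (-x₂))) ≤ O ⟨x, hx⟩) ∧
      (∀ x, O x ≤ 1) ∧
      ∫⁻ x, O x ∂ν ≤ ENNReal.ofReal ((32 * Real.exp 4 *
        ((2 * Module.finrank ℝ V : ℝ) / Module.finrank ℝ H) ^ 2) ^ Module.finrank ℝ H) *
      ∫⁻ x, D x ∂ν := by
  obtain ⟨g, U, hg, hU, hgc, hgn, hgl, hgh, hgI, hgi, hgz⟩ := LCdata.exists_nice volume hf
  obtain ⟨T, hT⟩ := exists_T H
  have hgm := hg.meas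
  set G : V × V → ℝ≥0∞ := fun q => g q.1 * g q.2 with hGdef
  have hG : NiceLC G := prodNice hg U hU hgc hgn
  have hGm := hG.meas
  set F : (V × Hᗮ) × H → ℝ≥0∞ := fun v => G (T v) with hFdef
  have hF : NiceLC F := hG.comp_lin (T : ((V × Hᗮ) × H) →L[ℝ] V × V)
  set μ : Measure (V × Hᗮ) := (volume : Measure V).prod (volume : Measure Hᗮ) with hμ
  have hμH : μ.IsAddHaarMeasure := by rw [hμ]; infer_instance
  set ρ := μ.prod ν with hρ
  have hρH : ρ.IsAddHaarMeasure := Measure.prod.instIsAddHaarMeasure μ ν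
  have hTm : Measurable T := T.continuous.measurable
  have hTe : MeasurableEmbedding T := T.toHomeomorph.measurableEmbedding
  have hHaar : (ρ.map T).IsAddHaarMeasure := T.isAddHaarMeasure_map ρ
  obtain ⟨c, hc⟩ : ∃ c : NNReal, ρ.map T = c • (volume : Measure V).prod (volume : Measure V) :=
    ⟨_, Measure.isAddLeftInvariant_eq_smul _ _⟩
  set κ := (volume : Measure V).withDensity g with hκ
  have hκf : IsFiniteMeasure κ := isFiniteMeasure_withDensity hgI
  have hGd : ((volume : Measure V).prod (volume : Measure V)).withDensity G = κ.prod κ :=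
    (prod_withDensity hgm hgm).symm
  have hmap : (ρ.withDensity F).map T = c • κ.prod κ := by
    rw [← hGd]
    have : (ρ.map T).withDensity G = c • ((volume : Measure V).prod (volume : Measure V)).withDensity G := by
      rw [hc]
      exact withDensity_smul_measure (c : ℝ≥0∞) G
    rw [← this]
    ext s hs
    rw [Measure.map_apply hTm hs, withDensity_apply _ (hTm hs), withDensity_apply _ hs,
      setLIntegral_map hs hGm hTm]
  have hI : ∫⁻ v, F v ∂ρ ≠ ⊤ := by
    have e : ∫⁻ v, F v ∂ρ = ((ρ.withDensity F).map T) univ := by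
      rw [Measure.map_apply hTm MeasurableSet.univ, preimage_univ, withDensity_apply _ MeasurableSet.univ,
        Measure.restrict_univ]
    rw [e, hmap]
    exact measure_ne_top _ _
  set Λ : V × V →L[ℝ] V × Hᗮ := (ContinuousLinearMap.fst ℝ (V × Hᗮ) H).comp
    (T.symm : V × V →L[ℝ] (V × Hᗮ) × H) with hΛ
  have hΛT : ∀ v, Λ (T v) = v.1 := fun v => by simp [hΛ]
  have i1 : Integrable (fun q : V × V => q) (κ.prod κ) :=
    (hgi.comp_fst κ).prodMk (hgi.comp_snd κ)
  have i2 : Integrable (fun q : V × V => Λ q) ((ρ.withDensity F).map T) := by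
    rw [hmap]
    exact (Λ.integrable_comp i1).smul_measure_nnreal
  have hint : Integrable (fun v : (V × Hᗮ) × H => v.1) (ρ.withDensity F) := by
    have := (hTe.integrable_map_iff).1 i2
    refine this.congr (Filter.Eventually.of_forall fun v => ?_)
    exact hΛT v
  have hcen : ∫ v, v.1 ∂(ρ.withDensity F) = 0 := by
    have e1 : ∫ v, v.1 ∂(ρ.withDensity F) = ∫ q, Λ q ∂((ρ.withDensity F).map T) := by
      rw [hTe.integral_map]
      exact integral_congr_ae (Filter.Eventually.of_forall fun v => (hΛT v).symm)
    have e2 : ∫ q : V × V, q ∂(κ.prod κ) = 0 := by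
      have := integral_pair (hgi.comp_fst κ) (hgi.comp_snd κ)
      rw [integral_fun_fst (fun x => x), integral_fun_snd (fun x => x), hgz] at this
      rw [smul_zero] at this
      exact this
    rw [e1, hmap, integral_smul_nnreal_measure, Λ.integral_comp_comm i1, e2]
    simp
  have main := absMain μ ν hF hI hk hint hcen
  have hfr : (Module.finrank ℝ ((V × Hᗮ) × H) : ℝ) = 2 * Module.finrank ℝ V := by
    rw [T.toLinearEquiv.finrank_eq, Module.finrank_prod]; push_cast; ring
  rw [hfr] at main
  refine ⟨fun x => F (0, x), Qf F, ?_, ?_, ?_, main⟩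
  · intro x
    have e : F (0, x) = g x * g (-x) := by
      have := hT 0 0 x
      simp only [hFdef, hGdef]
      rw [← Prod.zero_eq_mk] at this
      rw [this]; simp
    simp only [e]
    rw [ENNReal.ofReal_min]
    refine le_min ?_ ?_
    · exact (mul_le_of_le_one_right' (hg.le1 _)).trans (hgl _)
    · exact (mul_le_of_le_one_left' (hg.le1 _)).trans (hgl _)
  · intro x x₁ x₂ hx hxe
    set a := T.symm ((1/2:ℝ) • x₁, (1/2:ℝ) • (-x₂)) with ha
    have e1 : F a = g ((1/2:ℝ) • x₁) * g ((1/2:ℝ) • (-x₂)) := by simp [hFdef, hGdef, ha]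
    have e2 : F (a - (0, ⟨x, hx⟩)) = g ((1/2:ℝ) • (-x₂)) * g ((1/2:ℝ) • x₁) := by
      have := hT 0 0 ⟨x, hx⟩
      rw [← Prod.zero_eq_mk] at this
      have q1 : (1/2:ℝ) • x₁ - x = (1/2:ℝ) • (-x₂) := by
        rw [hxe]; module
      have q2 : (1/2:ℝ) • (-x₂) + x = (1/2:ℝ) • x₁ := by
        rw [hxe]; module
      simp only [hFdef, hGdef, map_sub, this, ha, ContinuousLinearEquiv.apply_symm_apply]
      simp only [Prod.fst_sub, Prod.snd_sub, zero_add, ZeroMemClass.coe_zero, zero_sub, sub_neg_eq_add]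
      rw [q1, q2]
    have e3 : (F a * F (a - (0, ⟨x, hx⟩))) ^ (1/2:ℝ) = g ((1/2:ℝ) • x₁) * g ((1/2:ℝ) • (-x₂)) := by
      rw [e1, e2]
      rw [mul_comm (g ((1/2:ℝ) • (-x₂))), ENNReal.mul_rpow_of_nonneg _ _ (by norm_num : (0:ℝ) ≤ 1/2),
        ← ENNReal.rpow_add_of_nonneg _ _ (by norm_num) (by norm_num)]
      norm_num
    refine le_trans ?_ (le_Qf F a ⟨x, hx⟩)
    rw [e3]
    have e4 : ENNReal.ofReal (Real.sqrt (f x₁ * f (-x₂))) =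
        ENNReal.ofReal (f x₁) ^ (1/2:ℝ) * ENNReal.ofReal (f (-x₂)) ^ (1/2:ℝ) := by
      rw [Real.sqrt_eq_rpow, Real.mul_rpow (hf.nonneg _) (hf.nonneg _),
        ENNReal.ofReal_mul (Real.rpow_nonneg (hf.nonneg _) _),
        ENNReal.ofReal_rpow_of_nonneg (hf.nonneg _) (by norm_num),
        ENNReal.ofReal_rpow_of_nonneg (hf.nonneg _) (by norm_num)]
    rw [e4]
    exact mul_le_mul' (hgh x₁) (hgh (-x₂))
  · intro x
    exact Qf_le_one F hF.le1 x
end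

lemma lint_sub {n : ℕ} (H : Submodule ℝ (EuclideanSpace ℝ (Fin n))) (d : ℝ) (hd : 0 ≤ d)
    (q : EuclideanSpace ℝ (Fin n) → ℝ≥0∞) :
    ∫⁻ x in (H : Set (EuclideanSpace ℝ (Fin n))), q x ∂μH[d] = ∫⁻ x : H, q x ∂μH[d] := by
  have hiso : Isometry (Subtype.val : H → EuclideanSpace ℝ (Fin n)) := isometry_subtype_coe
  have h := hiso.map_hausdorffMeasure (d := d) (Or.inl hd)
  have hr : range (Subtype.val : H → EuclideanSpace ℝ (Fin n)) = (H : Set _) := Subtype.range_coe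
  rw [hr] at h
  have hme : MeasurableEmbedding (Subtype.val : H → EuclideanSpace ℝ (Fin n)) :=
    MeasurableEmbedding.subtype_coe H.closed_of_finiteDimensional.measurableSet
  rw [← h, hme.lintegral_map]

lemma geom_norm {n : ℕ} {f : EuclideanSpace ℝ (Fin n) → ℝ} (hf : IsGeomLogConcave f) :
    0 < f 0 ∧ LCdata (volume : Measure (EuclideanSpace ℝ (Fin n))) (fun x => (f 0)⁻¹ * f x) := by
  have h0 : 0 < f 0 := by
    by_contra h
    have hz : ∀ x, f x = 0 := fun x =>
      le_antisymm ((hf.maxAtZero x).trans (not_lt.1 h)) (hf.nonneg x)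
    have := hf.integral_pos
    simp [hz] at this
  refine ⟨h0, ?_⟩
  have hi : 0 < (f 0)⁻¹ := by positivity
  refine ⟨fun x => mul_nonneg hi.le (hf.nonneg x), ?_, ?_, ?_, ?_, ?_, ?_⟩
  · intro x y a b ha hb hab
    rw [Real.mul_rpow hi.le (hf.nonneg x), Real.mul_rpow hi.le (hf.nonneg y)]
    calc _ = ((f 0)⁻¹ ^ a * (f 0)⁻¹ ^ b) * (f x ^ a * f y ^ b) := by ring
      _ = (f 0)⁻¹ * (f x ^ a * f y ^ b) := by
        rw [← Real.rpow_add hi, hab, Real.rpow_one]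
      _ ≤ _ := by
        have := hf.logConcave x y a b ha hb hab
        gcongr
  · simp only [mul_smul]
    rw [integral_smul, hf.centered, smul_zero]
  · intro x
    rw [inv_mul_le_iff₀ h0, mul_one]
    exact hf.maxAtZero x
  · exact inv_mul_cancel₀ h0.ne'
  · exact hf.integrable.const_mul _
  · rw [integral_const_mul]
    exact mul_pos hi hf.integral_pos

lemma core_final {n : ℕ} {f : EuclideanSpace ℝ (Fin n) → ℝ} (hf : IsGeomLogConcave f) (k : ℕ)
    (hk : 1 ≤ k) (H : Submodule ℝ (EuclideanSpace ℝ (Fin n))) (hH : Module.finrank ℝ H = k) :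
    ∫⁻ x in (H : Set (EuclideanSpace ℝ (Fin n))), ENNReal.ofReal (deltaOut f x) ∂μH[(k : ℝ)] ≤
      ENNReal.ofReal ((32 * Real.exp 4 * ((2 * n : ℝ) / k) ^ 2) ^ k) *
      ∫⁻ x in (H : Set (EuclideanSpace ℝ (Fin n))), ENNReal.ofReal (deltaIn f x) ∂μH[(k : ℝ)] := by
  obtain ⟨h0, hd⟩ := geom_norm hf
  have hHaar : (μH[(k : ℝ)] : Measure H).IsAddHaarMeasure := by
    rw [← hH]; infer_instance
  obtain ⟨D, O, hD, hO, hO1, hmain⟩ := core_s5 H hd (by omega) μH[(k : ℝ)]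
  rw [hH, finrank_euclideanSpace_fin] at hmain
  rw [lint_sub H k (by positivity), lint_sub H k (by positivity)]
  set s := ENNReal.ofReal (f 0) with hs
  have a1 : ∀ x : H, ENNReal.ofReal (deltaOut f x) ≤ s * O x := by
    intro x
    have hOt : O x ≠ ⊤ := ne_top_of_le_ne_top ENNReal.one_ne_top (hO1 x)
    have : deltaOut f x ≤ f 0 * (O x).toReal := by
      refine Real.sSup_le ?_ (by positivity)
      rintro t ⟨x₁, x₂, hx, rfl⟩
      have h1 := hO x x₁ x₂ x.2 hx
      have h2 := (ENNReal.ofReal_le_iff_le_toReal hOt).1 h1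
      have h3 : (f 0)⁻¹ * f x₁ * ((f 0)⁻¹ * f (-x₂)) = (f 0)⁻¹ ^ 2 * (f x₁ * f (-x₂)) := by ring
      rw [h3, Real.sqrt_mul (by positivity), Real.sqrt_sq (by positivity), inv_mul_le_iff₀ h0] at h2
      exact h2
    refine (ENNReal.ofReal_le_ofReal this).trans (le_of_eq ?_)
    rw [ENNReal.ofReal_mul h0.le, ENNReal.ofReal_toReal hOt]
  have a2 : ∀ x : H, s * D x ≤ ENNReal.ofReal (deltaIn f x) := by
    intro x
    have h1 := hD x
    refine (mul_le_mul' (le_refl s) h1).trans (le_of_eq ?_)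
    rw [hs, ← ENNReal.ofReal_mul h0.le, deltaIn, mul_min_of_nonneg _ _ h0.le,
      mul_inv_cancel_left₀ h0.ne', mul_inv_cancel_left₀ h0.ne']
  have st : s ≠ ⊤ := ENNReal.ofReal_ne_top
  calc _ ≤ ∫⁻ x, s * O x ∂μH[(k : ℝ)] := lintegral_mono a1
    _ = s * ∫⁻ x, O x ∂μH[(k : ℝ)] := lintegral_const_mul' _ _ st
    _ ≤ s * (ENNReal.ofReal ((32 * Real.exp 4 * ((2 * n : ℝ) / k) ^ 2) ^ k) *
          ∫⁻ x, D x ∂μH[(k : ℝ)]) := by gcongr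
    _ = ENNReal.ofReal ((32 * Real.exp 4 * ((2 * n : ℝ) / k) ^ 2) ^ k) *
          ∫⁻ x, s * D x ∂μH[(k : ℝ)] := by rw [lintegral_const_mul' _ _ st]; ring
    _ ≤ _ := by
      gcongr with x
      exact a2 x

/-- Theorem (functional sections inequality):
`(∫_H Δ_out f)^{1/k} ≤ C·(n/k)²·(log n)³ · (∫_H Δ_in f)^{1/k}` for geometric log-concave `f`,
where integration over `H` is with respect to `k`-dimensional (Hausdorff) measure. -/
theorem stmt5 :
    ∃ C : ℝ, 1 < C ∧ ∀ (n : ℕ), 2 ≤ n →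
      ∀ f : EuclideanSpace ℝ (Fin n) → ℝ, IsGeomLogConcave f →
        ∀ k : ℕ, 1 ≤ k → k ≤ n - 1 →
          ∀ H : Submodule ℝ (EuclideanSpace ℝ (Fin n)), Module.finrank ℝ H = k →
            (∫⁻ x in (H : Set (EuclideanSpace ℝ (Fin n))),
                ENNReal.ofReal (deltaOut f x) ∂μH[(k : ℝ)]) ^ ((k : ℝ)⁻¹) ≤
              ENNReal.ofReal (C * ((n : ℝ) / k) ^ 2 * (Real.log n) ^ 3) *
                (∫⁻ x in (H : Set (EuclideanSpace ℝ (Fin n))),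
                  ENNReal.ofReal (deltaIn f x) ∂μH[(k : ℝ)]) ^ ((k : ℝ)⁻¹) := by
  refine ⟨128 * Real.exp 4 / Real.log 2 ^ 3, ?_, ?_⟩
  · have l0 : 0 < Real.log 2 := Real.log_pos (by norm_num)
    have l1 : Real.log 2 ≤ 1 := by
      have := Real.log_le_sub_one_of_pos (by norm_num : (0:ℝ) < 2); linarith
    rw [lt_div_iff₀ (by positivity)]
    have : Real.log 2 ^ 3 ≤ 1 := pow_le_one₀ l0.le l1
    have := Real.add_one_le_exp (4:ℝ)
    linarith
  intro n hn f hf k hk hkn H hH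
  have h := core_final hf k hk H hH
  have k0 : (0:ℝ) < k := by exact_mod_cast hk
  set D := ∫⁻ x in (H : Set (EuclideanSpace ℝ (Fin n))), ENNReal.ofReal (deltaIn f x) ∂μH[(k : ℝ)]
  set K : ℝ := 32 * Real.exp 4 * ((2 * n : ℝ) / k) ^ 2 with hK
  have K0 : 0 ≤ K := by positivity
  calc _ ≤ (ENNReal.ofReal (K ^ k) * D) ^ ((k:ℝ)⁻¹) := ENNReal.rpow_le_rpow h (by positivity)
    _ = ENNReal.ofReal K * D ^ ((k:ℝ)⁻¹) := by
      rw [ENNReal.mul_rpow_of_nonneg _ _ (by positivity),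
        ENNReal.ofReal_rpow_of_nonneg (by positivity) (by positivity),
        Real.pow_rpow_inv_natCast K0 (by omega)]
    _ ≤ _ := by
      refine mul_le_mul' (ENNReal.ofReal_le_ofReal ?_) le_rfl
      have l0 : 0 < Real.log 2 := Real.log_pos (by norm_num)
      have l1 : Real.log 2 ≤ Real.log n := Real.log_le_log (by norm_num) (by exact_mod_cast hn)
      have l2 : Real.log 2 ^ 3 ≤ Real.log n ^ 3 := pow_le_pow_left₀ l0.le l1 3
      have e : K = 128 * Real.exp 4 / Real.log 2 ^ 3 * ((n:ℝ) / k) ^ 2 * Real.log 2 ^ 3 := by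
        rw [hK]; field_simp; ring
      rw [e]
      gcongr
end
end
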